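/- arXiv:1805.04568 — 6 statements merged into one kernel-verified Lean document; each statement's English description precedes it below -/
import Mathlib

section
/- Let R be a commutative Noetherian local ring, L and M finitely generated R-modules. If M is maximal Cohen-Macaulay (i.e. depth_R(M) = dim R) and L has finite projective dimension, then Tor_i^R(L, M) = 0 for all i \geq 1. -/
open CategoryTheory IsLocalRing

/-- The depth of a module over a local ring: the supremum of lengths of regular
sequences on `M` consisting of elements of the maximal ideal. -/
noncomputable def moduleDepth (R : Type) [CommRing R] [IsLocalRing R]
    (M : Type) [AddCommGroup M] [Module R M] : WithBot (WithTop ℕ) :=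
  sSup {n : WithBot (WithTop ℕ) | ∃ rs : List R,
    (∀ r ∈ rs, r ∈ maximalIdeal R) ∧ RingTheory.Sequence.IsRegular M rs ∧
    (rs.length : WithBot (WithTop ℕ)) = n}

/-- `L` has finite projective dimension: for some `n`, `Ext^i(L, -) = 0` for all `i > n`. -/
def HasFinitePD (R : Type) [CommRing R] (L : Type) [AddCommGroup L] [Module R L] : Prop :=
  ∃ n : ℕ, ∀ (Y : ModuleCat.{0} R) (i : ℕ), n < i →
    Subsingleton (((_root_.Ext R (ModuleCat.{0} R) i).obj
      (Opposite.op (ModuleCat.of R L))).obj Y)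


/-- Axiomatization of a homological functor behaving as `Tor_j(L, -)`. -/
structure TorLike (R : Type) [CommRing R] where
  T : ℕ → ModuleCat.{0} R ⥤ ModuleCat.{0} R
  map_smul_id : ∀ (j : ℕ) (N : ModuleCat.{0} R) (x : R) (t : (T j).obj N),
    ((T j).map (x • 𝟙 N)).hom t = x • t
  exact₂ : ∀ (j : ℕ) (S : ShortComplex (ModuleCat.{0} R)), S.ShortExact →
    Function.Exact ((T j).map S.f).hom ((T j).map S.g).hom
  exact_δ : ∀ (j : ℕ) (S : ShortComplex (ModuleCat.{0} R)), S.ShortExact →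
    ∃ δ : (T (j + 1)).obj S.X₃ →ₗ[R] (T j).obj S.X₁,
      Function.Exact ((T (j + 1)).map S.g).hom δ ∧ Function.Exact δ ((T j).map S.f).hom
  proj : ∀ (j : ℕ) (N : ModuleCat.{0} R), Module.Projective R N → Subsingleton ((T (j + 1)).obj N)
  fin0 : ∀ (N : ModuleCat.{0} R), Module.Finite R N → Module.Finite R ((T 0).obj N)
  big : ∃ n : ℕ, ∀ j, n < j → ∀ N, Subsingleton ((T j).obj N)

namespace TorLike

open scoped Pointwise

variable {R : Type} [CommRing R] (t : TorLike R)

abbrev obj (j : ℕ) (N : Type) [AddCommGroup N] [Module R N] : ModuleCat.{0} R :=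
  (t.T j).obj (ModuleCat.of R N)

abbrev map (j : ℕ) {N N' : Type} [AddCommGroup N] [Module R N] [AddCommGroup N'] [Module R N']
    (f : N →ₗ[R] N') : t.obj j N →ₗ[R] t.obj j N' :=
  ((t.T j).map (ModuleCat.ofHom f)).hom

section
variable {A B C : Type} [AddCommGroup A] [Module R A] [AddCommGroup B] [Module R B]
  [AddCommGroup C] [Module R C]

lemma shortExact_of {f : A →ₗ[R] B} {g : B →ₗ[R] C} (hf : Function.Injective f)
    (hg : Function.Surjective g) (h : Function.Exact f g) :
    (ShortComplex.mk (ModuleCat.ofHom f) (ModuleCat.ofHom g)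
      (by ext x; exact h.apply_apply_eq_zero x)).ShortExact where
  exact := by
    rw [ShortComplex.ShortExact.moduleCat_exact_iff_function_exact]; exact h
  mono_f := (ModuleCat.mono_iff_injective _).2 hf
  epi_g := (ModuleCat.epi_iff_surjective _).2 hg

lemma les₂ {f : A →ₗ[R] B} {g : B →ₗ[R] C} (hf : Function.Injective f)
    (hg : Function.Surjective g) (h : Function.Exact f g) (j : ℕ) :
    Function.Exact (t.map j f) (t.map j g) :=
  t.exact₂ j _ (shortExact_of hf hg h)

lemma lesδ {f : A →ₗ[R] B} {g : B →ₗ[R] C} (hf : Function.Injective f)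
    (hg : Function.Surjective g) (h : Function.Exact f g) (j : ℕ) :
    ∃ δ : t.obj (j + 1) C →ₗ[R] t.obj j A,
      Function.Exact (t.map (j + 1) g) δ ∧ Function.Exact δ (t.map j f) :=
  t.exact_δ j _ (shortExact_of hf hg h)

lemma map_lsmul (j : ℕ) (x : R) (u : t.obj j A) : t.map j (LinearMap.lsmul R A x) u = x • u :=
  t.map_smul_id j (ModuleCat.of R A) x u

lemma smul_eq_zero (j : ℕ) (x : R) (h : ∀ a : A, x • a = 0) (u : t.obj j A) : x • u = 0 := by
  have h0 : LinearMap.lsmul R A x = LinearMap.lsmul R A 0 := by ext a; simp [h a]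
  rw [← t.map_lsmul, h0, t.map_lsmul, zero_smul]

lemma equiv (j : ℕ) (e : A ≃ₗ[R] B) : Nonempty (t.obj j A ≃ₗ[R] t.obj j B) :=
  ⟨((t.T j).mapIso e.toModuleIso).toLinearEquiv⟩

lemma finite [IsNoetherianRing R] (j : ℕ) : ∀ (A : Type) [AddCommGroup A] [Module R A]
    [Module.Finite R A], Module.Finite R (t.obj j A) := by
  induction j with
  | zero => intro A _ _ hA; exact t.fin0 _ hA
  | succ j ih =>
    intro A _ _ _
    obtain ⟨n, f, hf⟩ := Module.Finite.exists_fin' R A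
    obtain ⟨δ, h1, -⟩ := t.lesδ (LinearMap.ker f).injective_subtype hf
      (LinearMap.exact_subtype_ker_map f) j
    have := t.proj j (ModuleCat.of R (Fin n → R)) (inferInstanceAs (Module.Projective R (Fin n → R)))
    have := ih (LinearMap.ker f)
    refine Module.Finite.of_injective δ ?_
    rw [injective_iff_map_eq_zero]
    intro a ha
    obtain ⟨b, rfl⟩ := (h1 a).1 ha
    rw [Subsingleton.elim b 0, map_zero]

end

lemma supp_mid {A B C : Type*} [AddCommGroup A] [Module R A] [AddCommGroup B] [Module R B]
    [AddCommGroup C] [Module R C] {f : A →ₗ[R] B} {g : B →ₗ[R] C} (h : Function.Exact f g)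
    {p : PrimeSpectrum R} (hA : p ∉ Module.support R A) (hC : p ∉ Module.support R C) :
    p ∉ Module.support R B := by
  rw [Module.notMem_support_iff'] at *
  intro b
  obtain ⟨r, hr, h1⟩ := hC (g b)
  rw [← map_smul] at h1
  obtain ⟨a, ha⟩ := (h _).1 h1
  obtain ⟨s, hs, h2⟩ := hA a
  refine ⟨s * r, fun hh => (p.2.mem_or_mem hh).elim hs hr, ?_⟩
  rw [mul_smul, ← ha, ← map_smul, h2, map_zero]

lemma supp_of_subsingleton {A : Type*} [AddCommGroup A] [Module R A] [Subsingleton A]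
    (p : PrimeSpectrum R) : p ∉ Module.support R A := by
  rw [Module.notMem_support_iff']
  intro a
  exact ⟨1, fun h => p.2.ne_top ((Ideal.eq_top_iff_one _).2 h), Subsingleton.elim _ _⟩

lemma supp_of_smul (j : ℕ) {A : Type} [AddCommGroup A] [Module R A] {p : PrimeSpectrum R}
    {x : R} (hx : x ∉ p.asIdeal) (h : ∀ a : A, x • a = 0) : p ∉ Module.support R (t.obj j A) := by
  rw [Module.notMem_support_iff']
  exact fun u => ⟨x, hx, t.smul_eq_zero j x h u⟩

lemma supp_of_notMem [IsNoetherianRing R] (j : ℕ) {A : Type} [AddCommGroup A] [Module R A]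
    [Module.Finite R A] {p : PrimeSpectrum R}
    (h : p ∉ Module.support R A) : p ∉ Module.support R (t.obj j A) := by
  rw [Module.mem_support_iff_of_finite, SetLike.not_le_iff_exists] at h
  obtain ⟨x, hx, hxp⟩ := h
  exact t.supp_of_smul j hxp (fun a => Module.mem_annihilator.1 hx a)

lemma quot_exact {I J : Ideal R} {a : R} (hJ : ∀ r, r ∈ J ↔ a * r ∈ I) :
    ∃ f : (R ⧸ J) →ₗ[R] (R ⧸ I), ∃ g : (R ⧸ I) →ₗ[R] (R ⧸ (I ⊔ Ideal.span {a})),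
      Function.Injective f ∧ Function.Surjective g ∧ Function.Exact f g ∧
      ∀ r : R, f (Submodule.Quotient.mk r) = a • Submodule.Quotient.mk r := by
  have hle : J ≤ Submodule.comap (LinearMap.lsmul R R a) I := by
    intro r hr
    rw [Submodule.mem_comap]
    exact (hJ r).1 hr
  have hle2 : I ≤ Submodule.comap LinearMap.id (I ⊔ Ideal.span {a}) := by
    intro r hr
    rw [Submodule.mem_comap]
    exact Ideal.mem_sup_left hr
  refine ⟨Submodule.mapQ J I (LinearMap.lsmul R R a) hle,
    Submodule.mapQ I _ LinearMap.id hle2, ?_, ?_, ?_, ?_⟩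
  · rw [injective_iff_map_eq_zero]
    intro u hu
    obtain ⟨r, rfl⟩ := Submodule.Quotient.mk_surjective _ u
    rw [Submodule.mapQ_apply, Submodule.Quotient.mk_eq_zero] at hu
    rw [Submodule.Quotient.mk_eq_zero]
    exact (hJ r).2 hu
  · intro u
    obtain ⟨r, rfl⟩ := Submodule.Quotient.mk_surjective _ u
    exact ⟨Submodule.Quotient.mk r, rfl⟩
  · intro u
    obtain ⟨r, rfl⟩ := Submodule.Quotient.mk_surjective _ u
    rw [Submodule.mapQ_apply, Submodule.Quotient.mk_eq_zero]
    constructor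
    · intro h
      obtain ⟨i, hi, y, hy, hr⟩ := Submodule.mem_sup.1 h
      obtain ⟨c, rfl⟩ := Ideal.mem_span_singleton'.1 hy
      refine ⟨Submodule.Quotient.mk c, ?_⟩
      rw [Submodule.mapQ_apply, Submodule.Quotient.eq]
      simp only [LinearMap.id_coe, id_eq] at hr
      have : LinearMap.lsmul R R a c - r = -i := by
        rw [← hr]; simp; ring
      rw [this]; exact I.neg_mem hi
    · rintro ⟨v, hv⟩
      obtain ⟨c, rfl⟩ := Submodule.Quotient.mk_surjective _ v
      rw [Submodule.mapQ_apply, Submodule.Quotient.eq] at hv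
      have : (LinearMap.id : R →ₗ[R] R) r = -(LinearMap.lsmul R R a c - r) + c * a := by
        simp; ring
      rw [this]
      exact Ideal.add_mem _ (Ideal.mem_sup_left (I.neg_mem hv))
        (Ideal.mem_sup_right (Ideal.mul_mem_left _ _ (Ideal.mem_span_singleton_self a)))
  · intro r
    rfl

/-- Nakayama: if `p ∉ Supp T_j(R/p)` then `p ∉ Supp T_j(R/I)` for all `I`. -/
lemma supp_quot [IsNoetherianRing R] (j : ℕ) (p : PrimeSpectrum R)
    (hp : p ∉ Module.support R (t.obj j (R ⧸ p.asIdeal))) (I : Ideal R) :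
    p ∉ Module.support R (t.obj j (R ⧸ I)) := by
  induction I using WellFoundedGT.induction with
  | ind I ih =>
  by_cases hIp : I ≤ p.asIdeal
  swap
  · obtain ⟨x, hx, hxp⟩ := SetLike.not_le_iff_exists.1 hIp
    refine t.supp_of_smul j hxp (fun a => ?_)
    obtain ⟨a, rfl⟩ := Submodule.Quotient.mk_surjective _ a
    rw [← Submodule.Quotient.mk_smul, Submodule.Quotient.mk_eq_zero]
    exact I.mul_mem_right _ hx
  have hlt : ∀ a, a ∉ I → I < I ⊔ Ideal.span {a} := fun a ha =>
    lt_of_le_not_ge le_sup_left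
      (fun h => ha (h (Ideal.mem_sup_right (Ideal.mem_span_singleton_self a))))
  by_cases hI : I.IsPrime
  · rcases hIp.eq_or_lt with rfl | hltp
    · exact hp
    obtain ⟨x, hxp, hxI⟩ := SetLike.exists_of_lt hltp
    obtain ⟨f, g, hf, hg, hfg, hx⟩ := quot_exact (R := R) (I := I) (J := I) (a := x)
      (fun r => ⟨fun h => I.mul_mem_left _ h, fun h => (hI.mem_or_mem h).resolve_left hxI⟩)
    have hfx : f = LinearMap.lsmul R (R ⧸ I) x := by
      ext; exact hx 1
    subst hfx
    have hex := t.les₂ hf hg hfg j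
    have h3 := ih _ (hlt x hxI)
    have := t.finite j (R ⧸ I)
    intro hmem
    have hq : p ∈ Module.support R (QuotSMulTop x (t.obj j (R ⧸ I))) := by
      rw [Module.support_quotSMulTop]
      exact ⟨hmem, by simpa using hxp⟩
    refine absurd hq ?_
    rw [Module.notMem_support_iff'] at h3 ⊢
    intro u
    obtain ⟨u, rfl⟩ := Submodule.Quotient.mk_surjective _ u
    obtain ⟨r, hr, h1⟩ := h3 (t.map j g u)
    refine ⟨r, hr, ?_⟩
    rw [← map_smul] at h1
    obtain ⟨v, hv⟩ := (hex _).1 h1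
    rw [t.map_lsmul] at hv
    rw [← Submodule.Quotient.mk_smul, Submodule.Quotient.mk_eq_zero, ← hv]
    exact Submodule.smul_mem_pointwise_smul _ _ _ trivial
  · have hIt : I ≠ ⊤ := fun h => p.2.ne_top (top_le_iff.1 (h ▸ hIp))
    have : Nontrivial (R ⧸ I) := Submodule.Quotient.nontrivial_iff.2 hIt
    obtain ⟨q, hq⟩ := associatedPrimes.nonempty R (R ⧸ I)
    obtain ⟨hqp, u, hu⟩ := isAssociatedPrime_iff.1 hq
    obtain ⟨a, rfl⟩ := Submodule.Quotient.mk_surjective _ u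
    have hJ : ∀ r, r ∈ q ↔ a * r ∈ I := by
      intro r
      rw [hu, Submodule.mem_colon_singleton, ← Submodule.Quotient.mk_smul, Submodule.mem_bot,
        Submodule.Quotient.mk_eq_zero, smul_eq_mul, mul_comm]
    have haI : a ∉ I := fun h => hqp.ne_top ((Ideal.eq_top_iff_one _).2 ((hJ 1).2 (by simpa)))
    have hIq : I < q := lt_of_le_of_ne (fun r hr => (hJ r).2 (I.mul_mem_left _ hr))
      (fun h => hI (h ▸ hqp))
    obtain ⟨f, g, hf, hg, hfg, -⟩ := quot_exact hJ
    exact supp_mid (t.les₂ hf hg hfg j) (ih q hIq) (ih _ (hlt a haI))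

lemma supp_all [IsNoetherianRing R] (j : ℕ) (p : PrimeSpectrum R)
    (hp : p ∉ Module.support R (t.obj j (R ⧸ p.asIdeal))) (N : Type) [AddCommGroup N]
    [Module R N] [hN : Module.Finite R N] : p ∉ Module.support R (t.obj j N) := by
  induction hN using IsNoetherianRing.induction_on_isQuotientEquivQuotientPrime R with
  | subsingleton N => exact t.supp_of_notMem j (supp_of_subsingleton p)
  | quotient N q e =>
    obtain ⟨e'⟩ := t.equiv j e
    rw [e'.support_eq]
    exact t.supp_quot j p hp _
  | exact N₁ N₂ N₃ f g hf hg h h1 h3 => exact supp_mid (t.les₂ hf hg h j) h1 h3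

/-- If `p` is not associated to `A`, there is a `p`-locally `A`-regular element in `p`. -/
lemma exists_local_regular [IsNoetherianRing R] (p : PrimeSpectrum R) (A : Type) [AddCommGroup A]
    [Module R A] [Module.Finite R A] (hp : p.asIdeal ∉ associatedPrimes R A) :
    ∃ y ∈ p.asIdeal, ∀ q ∈ associatedPrimes R A, q ≤ p.asIdeal → y ∉ q := by
  have hfin := associatedPrimes.finite R A
  have hfin' : {q ∈ associatedPrimes R A | q ≤ p.asIdeal}.Finite := hfin.subset (fun _ h => h.1)
  by_contra! hcon
  have hsub : (p.asIdeal : Set R) ⊆ ⋃ i ∈ (↑hfin'.toFinset : Set (Ideal R)), ((i : Ideal R) : Set R) := by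
    intro y hy
    obtain ⟨q, hq, hqp, hyq⟩ := hcon y hy
    simp only [Set.Finite.coe_toFinset, Set.mem_iUnion]
    exact ⟨q, ⟨hq, hqp⟩, hyq⟩
  obtain ⟨q, hq, hpq⟩ := (Ideal.subset_union_prime (f := fun i : Ideal R => i) ⊥ ⊥
    (fun i hi _ _ => IsAssociatedPrime.isPrime (hfin'.mem_toFinset.1 hi).1)).1 hsub
  have hq' := hfin'.mem_toFinset.1 hq
  exact hp (le_antisymm hpq hq'.2 ▸ hq'.1)

lemma exists_assoc_le [IsNoetherianRing R] (A : Type) [AddCommGroup A]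
    [Module R A] [Module.Finite R A] (p : PrimeSpectrum R) (hp : p ∈ Module.support R A) :
    ∃ q : PrimeSpectrum R, q ≤ p ∧ q.asIdeal ∈ associatedPrimes R A ∧ q ∈ Module.support R A := by
  rw [Module.mem_support_iff_of_finite] at hp
  obtain ⟨q, hq, hqp⟩ := Ideal.exists_minimalPrimes_le hp
  refine ⟨⟨q, hq.1.1⟩, hqp, Module.associatedPrimes.minimalPrimes_annihilator_subset_associatedPrimes R A hq, ?_⟩
  rw [Module.mem_support_iff_of_finite]
  exact hq.1.2

lemma height_case_ass [IsNoetherianRing R] (p : PrimeSpectrum R) (k : ℕ) (A : Type)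
    [AddCommGroup A] [Module R A] [Module.Finite R A] (hp : p.asIdeal ∈ associatedPrimes R A)
    (hA : ∀ j, k < j → p ∉ Module.support R (t.obj j A)) :
    ∀ j, k < j → p ∉ Module.support R (t.obj j (R ⧸ p.asIdeal)) := by
  obtain ⟨-, f, hf⟩ := (isAssociatedPrime_iff_exists_injective_linearMap _ _).1 hp
  obtain ⟨n, hn⟩ := t.big
  have key : ∀ s j, k < j → n < j + s → p ∉ Module.support R (t.obj j (R ⧸ p.asIdeal)) := by
    intro s
    induction s with
    | zero =>
      intro j _ hj
      have := hn j hj (ModuleCat.of R (R ⧸ p.asIdeal))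
      exact supp_of_subsingleton p
    | succ s ih =>
      intro j hj hj'
      have h1 := ih (j + 1) (by omega) (by omega)
      have h2 := t.supp_all (j + 1) p h1 (A ⧸ LinearMap.range f)
      obtain ⟨δ, -, h3⟩ := t.lesδ hf (Submodule.mkQ_surjective _)
        (LinearMap.exact_map_mkQ_range f) j
      exact supp_mid h3 h2 (hA j hj)
  exact fun j hj => key (n + 1) j hj (by omega)

lemma height_case_reg [IsNoetherianRing R] (p : PrimeSpectrum R) (k : ℕ) (A : Type)
    [AddCommGroup A] [Module R A] [Module.Finite R A] (hp : p.asIdeal ∉ associatedPrimes R A)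
    (hpA : p ∈ Module.support R A)
    (hk : ∀ q ∈ Module.support R A, q ≤ p → (k : ℕ∞) ≤ Order.height q)
    (hA : ∀ j, k < j → p ∉ Module.support R (t.obj j A)) :
    ∃ y : R, p ∈ Module.support R (QuotSMulTop y A) ∧
      (∀ q ∈ Module.support R (QuotSMulTop y A), q ≤ p → ((k + 1 : ℕ) : ℕ∞) ≤ Order.height q) ∧
      (∀ j, k + 1 < j → p ∉ Module.support R (t.obj j (QuotSMulTop y A))) := by
  obtain ⟨y, hy, hyq⟩ := exists_local_regular p A hp
  refine ⟨y, ?_, ?_, ?_⟩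
  · rw [Module.support_quotSMulTop]
    exact ⟨hpA, by simpa using hy⟩
  · intro q hq hqp
    rw [Module.support_quotSMulTop] at hq
    obtain ⟨hq1, hq2⟩ := hq
    obtain ⟨q', hq', hqa, hqs⟩ := exists_assoc_le A q hq1
    have h1 := hk q' hqs (hq'.trans hqp)
    have hlt : q' < q := by
      refine lt_of_le_of_ne hq' ?_
      rintro rfl
      exact hyq _ hqa hqp (by simpa using hq2)
    have h2 := Order.height_add_one_le hlt
    push_cast
    exact le_trans (by gcongr) h2
  · intro j hj
    set K := LinearMap.ker (LinearMap.lsmul R A y) with hK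
    have hKp : p ∉ Module.support R K := by
      intro hpK
      obtain ⟨q, hqp, hqa, hqs⟩ := exists_assoc_le K p hpK
      have hqA := associatedPrimes.subset_of_injective K.injective_subtype hqa
      refine hyq _ hqA hqp ?_
      rw [Module.mem_support_iff_of_finite] at hqs
      apply hqs
      rw [Module.mem_annihilator]
      rintro ⟨a, ha⟩
      ext
      exact ha
    have hKT : ∀ j, p ∉ Module.support R (t.obj j K) := fun j => t.supp_of_notMem j hKp
    obtain ⟨i, rfl⟩ : ∃ i, j = i + 1 := ⟨j - 1, by omega⟩
    set I := y • (⊤ : Submodule R A) with hI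
    have hIT : p ∉ Module.support R (t.obj i I) := by
      obtain ⟨i', rfl⟩ : ∃ i', i = i' + 1 := ⟨i - 1, by omega⟩
      let g : A →ₗ[R] I := (LinearMap.lsmul R A y).codRestrict I
        (fun a => Submodule.smul_mem_pointwise_smul _ _ _ trivial)
      have hg : Function.Surjective g := by
        rintro ⟨b, hb⟩
        obtain ⟨a, -, ha⟩ := (Submodule.mem_smul_pointwise_iff_exists _ _ _).1 hb
        exact ⟨a, Subtype.ext ha⟩
      have hex : Function.Exact K.subtype g := by
        intro a
        rw [← LinearMap.coe_range, Submodule.range_subtype]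
        rw [hK]
        simp only [SetLike.mem_coe, LinearMap.mem_ker]
        exact Subtype.ext_iff
      obtain ⟨δ, h3, -⟩ := t.lesδ K.injective_subtype hg hex i'
      exact supp_mid h3 (hA _ (by omega)) (hKT _)
    obtain ⟨δ, h3, -⟩ := t.lesδ I.injective_subtype I.mkQ_surjective
      (LinearMap.exact_subtype_mkQ I) i
    exact supp_mid h3 (hA _ (by omega)) hIT

lemma height_bound_aux [IsNoetherianRing R] (p : PrimeSpectrum R) (h : ℕ)
    (hh : Order.height p = h) : ∀ (m k : ℕ), h ≤ k + m → ∀ (A : Type) [AddCommGroup A]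
    [Module R A] [Module.Finite R A], p ∈ Module.support R A →
    (∀ q ∈ Module.support R A, q ≤ p → (k : ℕ∞) ≤ Order.height q) →
    (∀ j, k < j → p ∉ Module.support R (t.obj j A)) →
    ∀ j, h < j → p ∉ Module.support R (t.obj j (R ⧸ p.asIdeal)) := by
  intro m
  induction m with
  | zero =>
    intro k hk A _ _ _ hpA hkA hA
    have hkh : k ≤ h := by
      have := hkA p hpA le_rfl
      rw [hh] at this
      exact_mod_cast this
    by_cases hp : p.asIdeal ∈ associatedPrimes R A
    · intro j hj
      exact t.height_case_ass p k A hp hA j (by omega)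
    · exfalso
      obtain ⟨y, h1, h2, -⟩ := t.height_case_reg p k A hp hpA hkA hA
      have := h2 p h1 le_rfl
      rw [hh] at this
      have : k + 1 ≤ h := by exact_mod_cast this
      omega
  | succ m ih =>
    intro k hk A _ _ _ hpA hkA hA
    have hkh : k ≤ h := by
      have := hkA p hpA le_rfl
      rw [hh] at this
      exact_mod_cast this
    by_cases hp : p.asIdeal ∈ associatedPrimes R A
    · intro j hj
      exact t.height_case_ass p k A hp hA j (by omega)
    · obtain ⟨y, h1, h2, h3⟩ := t.height_case_reg p k A hp hpA hkA hA
      exact ih (k + 1) (by omega) _ h1 h2 h3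

/-- `T_j(N)` is not supported at primes of height `< j`. -/
lemma height_bound [IsNoetherianRing R] (p : PrimeSpectrum R) (h : ℕ)
    (hh : Order.height p = h) (N : Type) [AddCommGroup N] [Module R N] [Module.Finite R N]
    (j : ℕ) (hj : h < j) : p ∉ Module.support R (t.obj j N) := by
  refine t.supp_all j p (t.height_bound_aux p h hh h 0 (by omega) R ?_ ?_ ?_ j hj) N
  · rw [Module.mem_support_iff_of_finite, Module.annihilator_eq_bot.2 inferInstance]
    exact bot_le
  · intro q _ _
    simp
  · intro j hj
    obtain ⟨i, rfl⟩ : ∃ i, j = i + 1 := ⟨j - 1, by omega⟩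
    have := t.proj i (ModuleCat.of R R) (inferInstanceAs (Module.Projective R R))
    exact supp_of_subsingleton p

end TorLike

namespace DepthAux

open scoped Pointwise
open Abelian

variable {R : Type} [CommRing R] [IsLocalRing R]

/-- Ext-vanishing form of `depth M ≥ d`. -/
def ExtVan (M : Type) [AddCommGroup M] [Module R M] (d : ℕ) : Prop :=
  ∀ i < d, Subsingleton (Abelian.Ext (ModuleCat.of R (R ⧸ maximalIdeal R)) (ModuleCat.of R M) i)

lemma ExtVan.quot {M : Type} [AddCommGroup M] [Module R M] {d : ℕ}
    (h : ExtVan (R := R) M (d + 1)) {x : R} (hx : IsSMulRegular M x) :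
    ExtVan (R := R) (QuotSMulTop x M) d := by
  intro i hi
  have hx' : IsSMulRegular (ModuleCat.of R M) x := hx
  have zero1 := AddCommGrpCat.isZero_of_iff_subsingleton.mpr (h i (by omega))
  have zero2 := AddCommGrpCat.isZero_of_iff_subsingleton.mpr (h (i + 1) (by omega))
  exact AddCommGrpCat.subsingleton_of_isZero <| ShortComplex.Exact.isZero_of_both_zeros
    ((Ext.covariant_sequence_exact₃' (ModuleCat.of R (R ⧸ maximalIdeal R))
      hx'.smulShortComplex_shortExact) i (i + 1) rfl)
    (zero1.eq_zero_of_src _) (zero2.eq_zero_of_tgt _)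

lemma ExtVan.exists_regular [IsNoetherianRing R] {M : Type} [AddCommGroup M] [Module R M]
    [Module.Finite R M] {d : ℕ}
    (h : ExtVan (R := R) M (d + 1)) : ∃ x ∈ maximalIdeal R, IsSMulRegular M x := by
  have : Subsingleton (ModuleCat.of R (R ⧸ maximalIdeal R) ⟶ ModuleCat.of R M) :=
    Ext.addEquiv₀.subsingleton_congr.mp (h 0 d.zero_lt_succ)
  have : Subsingleton ((R ⧸ maximalIdeal R) →ₗ[R] M) :=
    (ModuleCat.homAddEquiv (M := ModuleCat.of R (R ⧸ maximalIdeal R))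
      (N := ModuleCat.of R M)).symm.subsingleton
  obtain ⟨x, hx, h2⟩ := IsSMulRegular.subsingleton_linearMap_iff.mp this
  rw [Ideal.annihilator_quotient] at hx
  exact ⟨x, hx, h2⟩

lemma ExtVan.mono {M : Type} [AddCommGroup M] [Module R M] {d d' : ℕ} (hd : d' ≤ d)
    (h : ExtVan (R := R) M d) : ExtVan (R := R) M d' := fun i hi => h i (by omega)

lemma torsion_zero [IsNoetherianRing R] (r : ℕ) : ∀ (M : Type) [AddCommGroup M] [Module R M]
    [Module.Finite R M] (p : PrimeSpectrum R), ExtVan (R := R) M (r + 1) →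
    Order.coheight p ≤ r → ∀ y : M, (∀ a ∈ p.asIdeal, a • y = 0) → y = 0 := by
  induction r with
  | zero =>
    intro M _ _ _ p h hp y hy
    obtain ⟨x, hx, hreg⟩ := h.exists_regular
    have hmax : IsMax p := by
      rw [← Order.coheight_eq_zero]
      simpa using hp
    have hpm : maximalIdeal R ≤ p.asIdeal :=
      hmax (b := ⟨maximalIdeal R, inferInstance⟩) (IsLocalRing.le_maximalIdeal p.2.ne_top)
    exact hreg (by simpa using hy x (hpm hx))
  | succ r ih =>
    intro M _ _ _ p h hp
    obtain ⟨x, hx, hreg⟩ := h.exists_regular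
    by_cases hxp : x ∈ p.asIdeal
    · intro y hy
      exact hreg (by simpa using hy x hxp)
    let N : Submodule R M :=
      { carrier := {y | ∀ a ∈ p.asIdeal, a • y = 0}
        add_mem' := fun {u v} hu hv a ha => by rw [smul_add, hu a ha, hv a ha, add_zero]
        zero_mem' := fun a _ => smul_zero a
        smul_mem' := fun c u hu a ha => by rw [smul_comm, hu a ha, smul_zero] }
    have hN : N = ⊥ := by
      refine Submodule.eq_bot_of_le_smul_of_le_jacobson_bot (maximalIdeal R) N
        (IsNoetherian.noetherian N) ?_ (IsLocalRing.maximalIdeal_le_jacobson _)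
      intro y hy
      have h0 : (Submodule.Quotient.mk y : QuotSMulTop x M) = 0 := by
        by_contra hne
        obtain ⟨q, hq, hle⟩ := exists_le_isAssociatedPrime_of_isNoetherianRing R _ hne
        have hpq : p.asIdeal ≤ q := by
          intro a ha
          apply hle
          rw [Submodule.mem_colon_singleton, ← Submodule.Quotient.mk_smul, hy a ha]
          exact Submodule.zero_mem _
        have hxq : x ∈ q := by
          apply hle
          rw [Submodule.mem_colon_singleton, ← Submodule.Quotient.mk_smul, Submodule.mem_bot,
            Submodule.Quotient.mk_eq_zero]
          exact Submodule.smul_mem_pointwise_smul _ _ _ trivial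
        have hlt : p < (⟨q, hq.isPrime⟩ : PrimeSpectrum R) :=
          lt_of_le_of_ne hpq (fun hh => hxp (by rw [hh]; exact hxq))
        have hco : Order.coheight (⟨q, hq.isPrime⟩ : PrimeSpectrum R) ≤ r := by
          have h1 := (Order.coheight_add_one_le hlt).trans hp
          push_cast at h1
          exact (ENat.add_le_add_iff_right (by simp)).1 h1
        obtain ⟨hqp, u, hu⟩ := isAssociatedPrime_iff.1 hq
        have := ih (QuotSMulTop x M) ⟨q, hq.isPrime⟩ (h.quot hreg) hco u (by
          intro a ha
          have ha' : a ∈ q := ha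
          rw [hu, Submodule.mem_colon_singleton] at ha'
          exact ha')
        apply hqp.ne_top
        rw [hu, this, Ideal.eq_top_iff_one, Submodule.mem_colon_singleton]
        simp
      rw [Submodule.Quotient.mk_eq_zero] at h0
      obtain ⟨z, -, rfl⟩ := (Submodule.mem_smul_pointwise_iff_exists _ _ _).1 h0
      refine Submodule.smul_mem_smul hx ?_
      intro a ha
      apply hreg
      simp only [smul_zero]
      rw [smul_comm]
      exact hy a ha
    intro y hy
    have : y ∈ N := hy
    rwa [hN, Submodule.mem_bot] at this

lemma exists_regular_mem [IsNoetherianRing R] (r : ℕ) (M : Type) [AddCommGroup M] [Module R M]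
    [Module.Finite R M] (p : PrimeSpectrum R) (h : ExtVan (R := R) M (r + 1))
    (hp : Order.coheight p ≤ r) : ∃ x ∈ p.asIdeal, IsSMulRegular M x := by
  have : Subsingleton ((R ⧸ p.asIdeal) →ₗ[R] M) := by
    refine subsingleton_of_forall_eq 0 (fun f => ?_)
    have h1 : f (Submodule.Quotient.mk 1) = 0 := by
      refine torsion_zero r M p h hp _ (fun a ha => ?_)
      rw [← map_smul, ← Submodule.Quotient.mk_smul]
      rw [(Submodule.Quotient.mk_eq_zero _).2 (by simpa using ha), map_zero]
    ext
    exact h1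
  obtain ⟨x, hx, h2⟩ := IsSMulRegular.subsingleton_linearMap_iff.mp this
  rw [Ideal.annihilator_quotient] at hx
  exact ⟨x, hx, h2⟩

end DepthAux

namespace TorLike

open scoped Pointwise
open DepthAux

variable {R : Type} [CommRing R] [IsLocalRing R] [IsNoetherianRing R] (t : TorLike R)

lemma final_aux (r : ℕ) (p : PrimeSpectrum R) (hp : Order.coheight p ≤ r) (h : ℕ)
    (hh : Order.height p = h) (e : ℕ) :
    ∀ (i : ℕ) (M : Type) [AddCommGroup M] [Module R M] [Module.Finite R M],
    p.asIdeal ∈ associatedPrimes R (t.obj i M) → (∀ j, i < j → Subsingleton (t.obj j M)) →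
    ExtVan (R := R) M (e + r) → i + e ≤ h := by
  induction e with
  | zero =>
    intro i M _ _ _ hass _ _
    by_contra hlt
    have := t.height_bound p h hh M i (by omega)
    apply this
    have := t.finite i M
    rw [Module.mem_support_iff_of_finite]
    rw [← Submodule.annihilator_top]
    exact hass.annihilator_le
  | succ e ih =>
    intro i M _ _ _ hass hvan hD
    obtain ⟨x, hxp, hx⟩ := exists_regular_mem r M p (hD.mono (by omega)) hp
    have hinj : Function.Injective (LinearMap.lsmul R M x) := hx
    have hex : Function.Exact (LinearMap.lsmul R M x) (x • (⊤ : Submodule R M)).mkQ := by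
      intro y
      rw [Submodule.mkQ_apply, Submodule.Quotient.mk_eq_zero,
        Submodule.mem_smul_pointwise_iff_exists]
      simp
    have hles := fun j => t.lesδ hinj (x • (⊤ : Submodule R M)).mkQ_surjective hex j
    have := ih (i + 1) (QuotSMulTop x M) ?_ ?_ (ExtVan.quot (hD.mono (by omega)) hx)
    · omega
    · obtain ⟨δ, h1, h2⟩ := hles i
      have hδ : Function.Injective δ := by
        rw [injective_iff_map_eq_zero]
        intro a ha
        obtain ⟨b, rfl⟩ := (h1 a).1 ha
        have := hvan (i + 1) (by omega)
        rw [Subsingleton.elim b 0, map_zero]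
      obtain ⟨hpp, u, hu⟩ := isAssociatedPrime_iff.1 hass
      have hxu : t.map i (LinearMap.lsmul R M x) u = 0 := by
        rw [t.map_lsmul]
        rw [hu, Submodule.mem_colon_singleton] at hxp
        exact hxp
      obtain ⟨v, rfl⟩ := (h2 u).1 hxu
      refine isAssociatedPrime_iff.2 ⟨hpp, v, ?_⟩
      rw [hu]
      ext a
      rw [Submodule.mem_colon_singleton, Submodule.mem_colon_singleton, Submodule.mem_bot,
        Submodule.mem_bot, ← map_smul, map_eq_zero_iff _ hδ]
    · intro j hj
      obtain ⟨j, rfl⟩ : ∃ j', j = j' + 1 := ⟨j - 1, by omega⟩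
      obtain ⟨δ, h1, -⟩ := hles j
      have i1 := hvan (j + 1) (by omega)
      have i2 := hvan j (by omega)
      refine subsingleton_of_forall_eq 0 (fun a => ?_)
      obtain ⟨b, rfl⟩ := (h1 a).1 (Subsingleton.elim _ _)
      rw [Subsingleton.elim b 0, map_zero]

theorem vanishing (d : ℕ) (hd : ringKrullDim R = d) (M : Type) [AddCommGroup M] [Module R M]
    [Module.Finite R M] (hD : ExtVan (R := R) M d) (i : ℕ) (hi : 1 ≤ i) :
    Subsingleton (t.obj i M) := by
  obtain ⟨n, hn⟩ := t.big
  have key : ∀ s i, 1 ≤ i → n < i + s → Subsingleton (t.obj i M) := by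
    intro s
    induction s with
    | zero => exact fun i _ h => hn i h _
    | succ s ih =>
      intro i hi his
      by_contra hns
      rw [not_subsingleton_iff_nontrivial] at hns
      obtain ⟨q, hq⟩ := associatedPrimes.nonempty R (t.obj i M)
      let p : PrimeSpectrum R := ⟨q, hq.isPrime⟩
      have hsum : Order.height p + Order.coheight p ≤ d := by
        have h1 : Order.krullDim (PrimeSpectrum R) = d := hd
        rw [Order.krullDim_eq_iSup_height_add_coheight_of_nonempty] at h1
        have h2 : (⨆ a : PrimeSpectrum R, Order.height a + Order.coheight a) = (d : ℕ∞) := by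
          exact_mod_cast h1
        rw [← h2]
        exact le_iSup (fun a : PrimeSpectrum R => Order.height a + Order.coheight a) p
      obtain ⟨h, hh⟩ := ENat.ne_top_iff_exists.1
        (ne_top_of_le_ne_top (ENat.natCast_ne_top d) (le_self_add.trans hsum))
      obtain ⟨r, hr⟩ := ENat.ne_top_iff_exists.1
        (ne_top_of_le_ne_top (ENat.natCast_ne_top d) (le_add_self.trans hsum))
      rw [← hh, ← hr] at hsum
      have hsum' : h + r ≤ d := by exact_mod_cast hsum
      have := t.final_aux r p hr.ge h hh.symm (d - r) i M hq
        (fun j hj => ih j (by omega) (by omega)) (hD.mono (by omega))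
      omega
  exact key (n + 1) i hi (by omega)

end TorLike

namespace DepthAux

open scoped Pointwise

variable {R : Type} [CommRing R] [IsLocalRing R]

lemma extVan_of_moduleDepth [IsNoetherianRing R] (M : Type) [AddCommGroup M] [Module R M]
    [Module.Finite R M] (d : ℕ) (h : moduleDepth R M = (d : WithBot (WithTop ℕ))) :
    ExtVan (R := R) M d := by
  have key : ∃ rs : List R, (∀ r ∈ rs, r ∈ maximalIdeal R) ∧
      RingTheory.Sequence.IsRegular M rs ∧ d ≤ rs.length := by
    by_contra! hcon
    have hlt : moduleDepth R M < d := by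
      rcases Nat.eq_zero_or_pos d with rfl | hd
      · have : moduleDepth R M ≤ ⊥ := by
          refine sSup_le ?_
          rintro n ⟨rs, h1, h2, -⟩
          exact absurd (hcon rs h1 h2) (by omega)
        exact lt_of_le_of_lt this (WithBot.bot_lt_coe _)
      · have : moduleDepth R M ≤ ((d - 1 : ℕ) : WithBot (WithTop ℕ)) := by
          refine sSup_le ?_
          rintro n ⟨rs, h1, h2, rfl⟩
          have := hcon rs h1 h2
          exact_mod_cast (by omega : rs.length ≤ d - 1)
        refine lt_of_le_of_lt this ?_
        exact_mod_cast (by omega : d - 1 < d)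
    exact absurd h hlt.ne
  obtain ⟨rs, h1, h2, h3⟩ := key
  have : Nontrivial M := h2.nontrivial
  intro i hi
  refine ModuleCat.subsingleton_ext_of_exists_isRegular (maximalIdeal R)
    (ModuleCat.of R (R ⧸ maximalIdeal R)) ?_ (ModuleCat.of R M) ?_ rs h1 h2 i (by omega)
  · change Module.support R (R ⧸ maximalIdeal R) ⊆ _
    rw [Module.support_eq_zeroLocus, Ideal.annihilator_quotient]
  · refine Ne.lt_top (fun hh => ?_)
    have := Submodule.eq_bot_of_le_smul_of_le_jacobson_bot (maximalIdeal R) (⊤ : Submodule R M)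
      Module.Finite.fg_top hh.ge (IsLocalRing.maximalIdeal_le_jacobson _)
    exact top_ne_bot this

end DepthAux

namespace TorCons

open MonoidalCategory

variable {R : Type} [CommRing R]

/-- The functor `N ↦ F ⊗ N` to complexes. -/
noncomputable def G (F : ChainComplex (ModuleCat.{0} R) ℕ) :
    ModuleCat.{0} R ⥤ ChainComplex (ModuleCat.{0} R) ℕ where
  obj N := (((tensoringRight (ModuleCat.{0} R)).obj N).mapHomologicalComplex _).obj F
  map f := (NatTrans.mapHomologicalComplex ((tensoringRight (ModuleCat.{0} R)).map f) _).app F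

noncomputable abbrev T (F : ChainComplex (ModuleCat.{0} R) ℕ) (j : ℕ) :
    ModuleCat.{0} R ⥤ ModuleCat.{0} R :=
  G F ⋙ HomologicalComplex.homologyFunctor _ _ j

variable (F : ChainComplex (ModuleCat.{0} R) ℕ)

lemma G_d (N : ModuleCat.{0} R) (i j : ℕ) :
    (((G F).obj N).d i j).hom = (F.d i j).hom.rTensor N := rfl

lemma G_map {N N' : ModuleCat.{0} R} (f : N ⟶ N') (i : ℕ) :
    (((G F).map f).f i).hom = f.hom.lTensor (F.X i) := rfl

instance : (G F).Additive where
  map_add {N N' f g} := by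
    ext i : 2
    rw [HomologicalComplex.add_f_apply, ModuleCat.hom_add]
    simp only [G_map, ModuleCat.hom_add, LinearMap.lTensor_add]
    rfl

lemma G_map_smul {N N' : ModuleCat.{0} R} (f : N ⟶ N') (x : R) :
    (G F).map (x • f) = x • (G F).map f := by
  ext i : 2
  rw [HomologicalComplex.smul_f_apply, ModuleCat.hom_smul]
  simp only [G_map, ModuleCat.hom_smul, LinearMap.lTensor_smul]
  rfl

lemma T_map_smul {N N' : ModuleCat.{0} R} (f : N ⟶ N') (x : R) (j : ℕ) :
    (T F j).map (x • f) = x • (T F j).map f := by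
  change HomologicalComplex.homologyMap ((G F).map (x • f)) j = _
  rw [G_map_smul]
  exact ShortComplex.homologyMap_smul ((HomologicalComplex.shortComplexFunctor _ _ j).map ((G F).map f)) x

lemma map_smul_id (j : ℕ) (N : ModuleCat.{0} R) (x : R) (t : (T F j).obj N) :
    ((T F j).map (x • 𝟙 N)).hom t = x • t := by
  rw [T_map_smul, CategoryTheory.Functor.map_id]
  rfl

lemma shortExact_G (hF : ∀ i, Module.Flat R (F.X i)) (S : ShortComplex (ModuleCat.{0} R))
    (hS : S.ShortExact) : (S.map (G F)).ShortExact := by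
  apply HomologicalComplex.shortExact_of_degreewise_shortExact
  intro i
  have := hF i
  have := hS.mono_f
  have := hS.epi_g
  refine ShortComplex.ShortExact.mk' ?_ ?_ ?_
  · rw [ShortComplex.ShortExact.moduleCat_exact_iff_function_exact]
    exact Module.Flat.lTensor_exact (F.X i)
      ((ShortComplex.ShortExact.moduleCat_exact_iff_function_exact _).1 hS.exact)
  · exact (ModuleCat.mono_iff_injective _).2 (Module.Flat.lTensor_preserves_injective_linearMap _
      ((ModuleCat.mono_iff_injective _).1 hS.mono_f))
  · exact (ModuleCat.epi_iff_surjective _).2 (LinearMap.lTensor_surjective _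
      ((ModuleCat.epi_iff_surjective _).1 hS.epi_g))

lemma exact₂ (hF : ∀ i, Module.Flat R (F.X i)) (j : ℕ) (S : ShortComplex (ModuleCat.{0} R))
    (hS : S.ShortExact) : Function.Exact ((T F j).map S.f).hom ((T F j).map S.g).hom :=
  (ShortComplex.ShortExact.moduleCat_exact_iff_function_exact _).1
    ((shortExact_G F hF S hS).homology_exact₂ j)

lemma exact_δ (hF : ∀ i, Module.Flat R (F.X i)) (j : ℕ) (S : ShortComplex (ModuleCat.{0} R))
    (hS : S.ShortExact) :
    ∃ δ : (T F (j + 1)).obj S.X₃ →ₗ[R] (T F j).obj S.X₁,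
      Function.Exact ((T F (j + 1)).map S.g).hom δ ∧ Function.Exact δ ((T F j).map S.f).hom := by
  have h := shortExact_G F hF S hS
  refine ⟨(h.δ (j + 1) j rfl).hom, ?_, ?_⟩
  · exact (ShortComplex.ShortExact.moduleCat_exact_iff_function_exact _).1
      (h.homology_exact₃ (j + 1) j rfl)
  · exact (ShortComplex.ShortExact.moduleCat_exact_iff_function_exact _).1
      (h.homology_exact₁ (j + 1) j rfl)

/-- Exactness of a chain complex of modules in positive degree, elementwise. -/
lemma exact_iff (K : ChainComplex (ModuleCat.{0} R) ℕ) (j : ℕ) :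
    Subsingleton (K.homology (j + 1)) ↔
      Function.Exact (K.d (j + 2) (j + 1)).hom (K.d (j + 1) j).hom := by
  rw [← ModuleCat.isZero_iff_subsingleton]
  rw [← HomologicalComplex.exactAt_iff_isZero_homology,
    HomologicalComplex.exactAt_iff' K (j + 2) (j + 1) j (by simp) (by simp),
    ShortComplex.ShortExact.moduleCat_exact_iff_function_exact]
  rfl

lemma T_subsingleton_iff (j : ℕ) (N : ModuleCat.{0} R) :
    Subsingleton ((T F (j + 1)).obj N) ↔
      Function.Exact ((F.d (j + 2) (j + 1)).hom.rTensor N) ((F.d (j + 1) j).hom.rTensor N) :=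
  exact_iff ((G F).obj N) j

lemma proj (hF : ∀ j, Function.Exact (F.d (j + 2) (j + 1)).hom (F.d (j + 1) j).hom) (j : ℕ)
    (N : ModuleCat.{0} R) (hN : Module.Projective R N) : Subsingleton ((T F (j + 1)).obj N) := by
  rw [T_subsingleton_iff]
  exact Module.Flat.rTensor_exact N (hF j)

/-- The canonical map `K_0 → H_0(K)`. -/
noncomputable def q (K : ChainComplex (ModuleCat.{0} R) ℕ) : K.X 0 ⟶ K.homology 0 :=
  haveI := ChainComplex.isIso_homologyι₀ K
  K.pOpcycles 0 ≫ inv (K.homologyι 0)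

lemma q_naturality {K K' : ChainComplex (ModuleCat.{0} R) ℕ} (φ : K ⟶ K') :
    q K ≫ HomologicalComplex.homologyMap φ 0 = φ.f 0 ≫ q K' := by
  have := ChainComplex.isIso_homologyι₀ K
  have := ChainComplex.isIso_homologyι₀ K'
  simp only [q, Category.assoc]
  rw [← cancel_mono (K'.homologyι 0)]
  simp [HomologicalComplex.homologyι_naturality]

lemma q_surjective (K : ChainComplex (ModuleCat.{0} R) ℕ) : Function.Surjective (q K).hom := by
  have := ChainComplex.isIso_homologyι₀ K
  rw [← ModuleCat.epi_iff_surjective]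
  unfold q
  infer_instance

lemma q_exact (K : ChainComplex (ModuleCat.{0} R) ℕ) :
    Function.Exact (K.d 1 0).hom (q K).hom := by
  have := ChainComplex.isIso_homologyι₀ K
  have h := ShortComplex.exact_of_g_is_cokernel
    (ShortComplex.mk (K.d 1 0) (K.pOpcycles 0) (by simp))
    (K.opcyclesIsCokernel 1 0 (by simp))
  rw [ShortComplex.ShortExact.moduleCat_exact_iff_function_exact] at h
  intro x
  refine Iff.trans ?_ (h x)
  have hi : Function.Injective (inv (K.homologyι 0)).hom :=
    (ModuleCat.mono_iff_injective _).1 inferInstance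
  change (inv (K.homologyι 0)).hom ((K.pOpcycles 0).hom x) = 0 ↔ _
  rw [map_eq_zero_iff _ hi]

lemma fin0 (L : Type) [AddCommGroup L] [Module R L] [Module.Finite R L] (ε : F.X 0 →ₗ[R] L)
    (hε : Function.Surjective ε) (hex : Function.Exact (F.d 1 0).hom ε)
    (N : ModuleCat.{0} R) (hN : Module.Finite R N) : Module.Finite R ((T F 0).obj N) := by
  have h1 := rTensor_exact N hex hε
  have h2 := LinearMap.rTensor_surjective N hε
  have h3 := q_exact ((G F).obj N)
  have h4 := q_surjective ((G F).obj N)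
  rw [G_d] at h3
  exact Module.Finite.equiv
    ((h1.linearEquivOfSurjective h2).symm.trans (h3.linearEquivOfSurjective h4))

lemma lTensor_injective (hF : ∀ i, Module.Flat R (F.X i))
    (L : Type) [AddCommGroup L] [Module R L] (ε : F.X 0 →ₗ[R] L)
    (hε : Function.Surjective ε) (hex : Function.Exact (F.d 1 0).hom ε)
    (S : ShortComplex (ModuleCat.{0} R)) (hS : S.ShortExact)
    (h1 : Subsingleton ((T F 1).obj S.X₃)) : Function.Injective (S.f.hom.lTensor L) := by
  rw [injective_iff_map_eq_zero]
  intro z hz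
  obtain ⟨z', rfl⟩ := LinearMap.rTensor_surjective S.X₁ hε z
  have e1 : (ε.rTensor S.X₂) (S.f.hom.lTensor (F.X 0) z') = 0 := by
    rw [← hz, ← LinearMap.comp_apply, ← LinearMap.comp_apply,
      LinearMap.rTensor_comp_lTensor, LinearMap.lTensor_comp_rTensor]
  have e2 := (rTensor_exact S.X₂ hex hε _).1 e1
  have e3 : (q ((G F).obj S.X₂)).hom (S.f.hom.lTensor (F.X 0) z') = 0 :=
    (q_exact ((G F).obj S.X₂) _).2 e2
  have e4 : ((T F 0).map S.f).hom ((q ((G F).obj S.X₁)).hom z') = 0 :=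
    (congrArg (fun k => k.hom z') (q_naturality ((G F).map S.f))).trans e3
  obtain ⟨δ, -, h2⟩ := exact_δ F hF 0 S hS
  obtain ⟨w, hw⟩ := (h2 _).1 e4
  have e5 : (q ((G F).obj S.X₁)).hom z' = 0 :=
    hw.symm.trans ((congrArg δ (Subsingleton.elim w 0)).trans (map_zero δ))
  exact (rTensor_exact S.X₁ hex hε _).2 ((q_exact ((G F).obj S.X₁) _).1 e5)

/-- Vanishing of `Ext^{j+1}` into the image gives vanishing of `T (j+1)`. -/
lemma big_aux (j : ℕ)
    (h : ∀ (Y : ModuleCat.{0} R) (f : F.X (j + 1) ⟶ Y), F.d (j + 2) (j + 1) ≫ f = 0 →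
      ∃ g : F.X j ⟶ Y, F.d (j + 1) j ≫ g = f) (N : ModuleCat.{0} R) :
    Subsingleton ((T F (j + 1)).obj N) := by
  rw [T_subsingleton_iff]
  set D := (F.d (j + 2) (j + 1)).hom with hD
  obtain ⟨g, hg⟩ := h (ModuleCat.of R (F.X (j + 1) ⧸ LinearMap.range D))
    (ModuleCat.ofHom (LinearMap.range D).mkQ) (by
      ext x
      exact (Submodule.Quotient.mk_eq_zero _).2 ⟨x, rfl⟩)
  have hg' : g.hom ∘ₗ (F.d (j + 1) j).hom = (LinearMap.range D).mkQ := by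
    have := congrArg ModuleCat.Hom.hom hg
    exact this
  have hr := rTensor_exact N (LinearMap.exact_map_mkQ_range D) (Submodule.mkQ_surjective _)
  intro z
  constructor
  · intro hz
    refine (hr z).1 ?_
    rw [← hg', LinearMap.rTensor_comp, LinearMap.comp_apply, hz, map_zero]
  · rintro ⟨w, rfl⟩
    rw [← LinearMap.comp_apply, ← LinearMap.rTensor_comp]
    have : (F.d (j + 1) j).hom ∘ₗ D = 0 := by
      have := congrArg ModuleCat.Hom.hom (F.d_comp_d (j + 2) (j + 1) j)
      exact this
    rw [this, LinearMap.rTensor_zero, LinearMap.zero_apply]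

section
variable {L : Type} [AddCommGroup L] [Module R L] (P : ProjectiveResolution (ModuleCat.of R L))

lemma ext_aux (j : ℕ) (Y : ModuleCat.{0} R)
    (h : Subsingleton (((_root_.Ext R (ModuleCat.{0} R) (j + 1)).obj
      (Opposite.op (ModuleCat.of R L))).obj Y)) (f : P.complex.X (j + 1) ⟶ Y)
    (hf : P.complex.d (j + 2) (j + 1) ≫ f = 0) :
      ∃ g : P.complex.X j ⟶ Y, P.complex.d (j + 1) j ≫ g = f := by
  have hz := (ModuleCat.isZero_iff_subsingleton.2 h).of_iso (P.isoExt (j + 1) Y).symm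
  rw [← HomologicalComplex.exactAt_iff_isZero_homology,
    HomologicalComplex.exactAt_iff' _ j (j + 1) (j + 2) (by simp) (by simp),
    ShortComplex.ShortExact.moduleCat_exact_iff_function_exact] at hz
  exact (hz f).1 hf

lemma flat_X (i : ℕ) : Module.Flat R (P.complex.X i) := by
  have : Module.Projective R (P.complex.X i) :=
    (IsProjective.iff_projective (R := R) (P.complex.X i)).2 (P.projective i)
  infer_instance

/-- The augmentation. -/
noncomputable def aug : P.complex.X 0 →ₗ[R] L := (P.π.f 0).hom

lemma aug_surjective : Function.Surjective (aug P) :=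
  (ModuleCat.epi_iff_surjective _).1 (inferInstanceAs (Epi (P.π.f 0)))

lemma aug_exact : Function.Exact (P.complex.d 1 0).hom (aug P) :=
  (ShortComplex.ShortExact.moduleCat_exact_iff_function_exact _).1 P.exact₀

lemma res_exact (j : ℕ) :
    Function.Exact (P.complex.d (j + 2) (j + 1)).hom (P.complex.d (j + 1) j).hom :=
  (ShortComplex.ShortExact.moduleCat_exact_iff_function_exact _).1 (P.exact_succ j)

/-- The `TorLike` structure attached to a module of finite projective dimension. -/
noncomputable def torLike [Module.Finite R L] (hL : HasFinitePD R L) : TorLike R where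
  T := T P.complex
  map_smul_id := map_smul_id _
  exact₂ := exact₂ _ (flat_X P)
  exact_δ := exact_δ _ (flat_X P)
  proj := proj _ (res_exact P)
  fin0 := fin0 _ L (aug P) (aug_surjective P) (aug_exact P)
  big := by
    obtain ⟨n, hn⟩ := hL
    refine ⟨n, fun j hj N => ?_⟩
    obtain ⟨i, rfl⟩ : ∃ i, j = i + 1 := ⟨j - 1, by omega⟩
    exact big_aux _ i (fun Y f hf => ext_aux P i Y (hn Y (i + 1) hj) f hf) N

end

end TorCons

namespace TorCons

open MonoidalCategory

variable {R : Type} [CommRing R]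
  {L : Type} [AddCommGroup L] [Module R L] (P : ProjectiveResolution (ModuleCat.of R L))
  {M : Type} [AddCommGroup M] [Module R M] (Q : ProjectiveResolution (ModuleCat.of R M))

lemma syzygy_van (t : TorLike R) (hM : ∀ j, 1 ≤ j → Subsingleton (t.obj j M)) (i : ℕ) :
    ∀ j, 1 ≤ j → Subsingleton (t.obj j
      (Q.complex.X i ⧸ LinearMap.range (Q.complex.d (i + 1) i).hom)) := by
  induction i with
  | zero =>
    intro j hj
    obtain ⟨e⟩ := t.equiv j ((aug_exact Q).linearEquivOfSurjective (aug_surjective Q))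
    have := hM j hj
    exact e.toEquiv.subsingleton
  | succ i ih =>
    intro j hj
    have hex : Function.Exact (Q.complex.d (i + 2) (i + 1)).hom
        (Q.complex.d (i + 1) i).hom.rangeRestrict := by
      intro x
      refine Iff.trans ?_ (res_exact Q i x)
      exact Subtype.ext_iff
    obtain ⟨e⟩ := t.equiv j (hex.linearEquivOfSurjective (LinearMap.surjective_rangeRestrict _))
    have : Subsingleton (t.obj j (LinearMap.range (Q.complex.d (i + 1) i).hom)) := by
      set B := LinearMap.range (Q.complex.d (i + 1) i).hom
      obtain ⟨δ, -, h2⟩ := t.lesδ B.injective_subtype B.mkQ_surjective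
        (LinearMap.exact_subtype_mkQ B) j
      have i1 := ih (j + 1) (by omega)
      obtain ⟨j, rfl⟩ : ∃ j', j = j' + 1 := ⟨j - 1, by omega⟩
      have i2 := t.proj j (ModuleCat.of R (Q.complex.X i))
        ((IsProjective.iff_projective (R := R) (Q.complex.X i)).2 (Q.projective i))
      refine subsingleton_of_forall_eq 0 (fun a => ?_)
      obtain ⟨b, rfl⟩ := (h2 a).1 (Subsingleton.elim _ _)
      rw [Subsingleton.elim b 0, map_zero]
    exact e.toEquiv.subsingleton

lemma torLike_T [Module.Finite R L] (hL : HasFinitePD R L) :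
    (torLike P hL).T = T P.complex := rfl

lemma lTensor_subtype_injective [Module.Finite R L] (hL : HasFinitePD R L) (X : Type)
    [AddCommGroup X] [Module R X] (B : Submodule R X)
    (h : Subsingleton ((torLike P hL).obj 1 (X ⧸ B))) :
    Function.Injective (B.subtype.lTensor L) := by
  have hS := TorLike.shortExact_of B.injective_subtype B.mkQ_surjective
    (LinearMap.exact_subtype_mkQ B)
  unfold TorLike.obj at h
  rw [torLike_T] at h
  have key := lTensor_injective P.complex (flat_X P) L (aug P) (aug_surjective P) (aug_exact P)
    _ hS h
  exact key

lemma lTensor_exact_of {X Y Z : Type} [AddCommGroup X] [Module R X] [AddCommGroup Y] [Module R Y]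
    [AddCommGroup Z] [Module R Z] (f : X →ₗ[R] Y) (g : Y →ₗ[R] Z) (hfg : Function.Exact f g)
    (h3 : Function.Injective ((LinearMap.range g).subtype.lTensor L)) :
    Function.Exact (f.lTensor L) (g.lTensor L) := by
  have hex : Function.Exact f g.rangeRestrict := by
    intro x
    refine Iff.trans ?_ (hfg x)
    exact Subtype.ext_iff
  have h1 := lTensor_exact L hex (LinearMap.surjective_rangeRestrict _)
  intro z
  rw [← h1 z, ← map_eq_zero_iff _ h3, ← LinearMap.comp_apply, ← LinearMap.lTensor_comp]
  rfl

lemma tor_exact [Module.Finite R L] (hL : HasFinitePD R L)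
    (hM : ∀ j, 1 ≤ j → Subsingleton ((torLike P hL).obj j M)) (i : ℕ) :
    Function.Exact ((Q.complex.d (i + 2) (i + 1)).hom.lTensor L)
      ((Q.complex.d (i + 1) i).hom.lTensor L) :=
  lTensor_exact_of _ _ (res_exact Q i)
    (lTensor_subtype_injective P hL _ _ (syzygy_van Q (torLike P hL) hM i 1 le_rfl))

end TorCons

/-- over a commutative Noetherian local ring `R` (of finite Krull
dimension), if `M` is maximal Cohen-Macaulay (`depth M = dim R`) and `L` has finite
projective dimension, then `Tor_i(L, M) = 0` for all `i ≥ 1`. -/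
theorem stmt_2 (R : Type) [CommRing R] [IsNoetherianRing R] [IsLocalRing R]
    (hdim : ringKrullDim R < ⊤)
    (L M : Type) [AddCommGroup L] [Module R L] [Module.Finite R L]
    [AddCommGroup M] [Module R M] [Module.Finite R M]
    (hMCM : moduleDepth R M = ringKrullDim R)
    (hL : HasFinitePD R L) :
    ∀ i : ℕ, 1 ≤ i →
      Subsingleton (((Tor (ModuleCat.{0} R) i).obj (ModuleCat.of R L)).obj
        (ModuleCat.of R M)) := by
  obtain ⟨d, hd⟩ : ∃ d : ℕ, ringKrullDim R = d := by
    have h0 : ringKrullDim R ≠ ⊥ := ringKrullDim_ne_bot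
    obtain ⟨e, he⟩ := WithBot.ne_bot_iff_exists.1 h0
    rw [← he] at hdim ⊢
    have he' : e ≠ ⊤ := by
      rintro rfl
      exact lt_irrefl _ hdim
    obtain ⟨d, rfl⟩ := ENat.ne_top_iff_exists.1 he'
    exact ⟨d, rfl⟩
  have hD := DepthAux.extVan_of_moduleDepth M d (hMCM.trans hd)
  let P := projectiveResolution (ModuleCat.of R L)
  let Q := projectiveResolution (ModuleCat.of R M)
  have hM : ∀ j, 1 ≤ j → Subsingleton ((TorCons.torLike P hL).obj j M) :=
    fun j hj => (TorCons.torLike P hL).vanishing d hd M hD j hj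
  intro i hi
  obtain ⟨i, rfl⟩ : ∃ i', i = i' + 1 := ⟨i - 1, by omega⟩
  have e := Q.isoLeftDerivedObj
    ((MonoidalCategory.tensoringLeft (ModuleCat.{0} R)).obj (ModuleCat.of R L)) (i + 1)
  have hs := (TorCons.exact_iff ((((MonoidalCategory.tensoringLeft (ModuleCat.{0} R)).obj
    (ModuleCat.of R L)).mapHomologicalComplex _).obj Q.complex) i).2
      (TorCons.tor_exact P Q hL hM i)
  exact @Equiv.subsingleton _ _ e.toLinearEquiv.toEquiv hs
end

section
/- Let S be a commutative Noetherian local ring, f \in S a non zero-divisor, R = S/(f), and M, N finitely generated R-modules. Then there is an exact sequence Tor_2^S(M,N) \to Tor_2^R(M,N) \to M \otimes_R N \to Tor_1^S(M,N) \to Tor_1^R(M,N) \to 0. -/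
open CategoryTheory

open scoped TensorProduct

universe u

/-- linear algebra: homology from a factorization -/
noncomputable def auxHomEquiv {A : Type u} [CommRing A] {X Y Z C : Type u} [AddCommGroup X]
    [AddCommGroup Y] [AddCommGroup Z] [AddCommGroup C] [Module A X] [Module A Y] [Module A Z]
    [Module A C] (d₂ : X →ₗ[A] Y) (d₁ : Y →ₗ[A] Z) (h : ∀ x, d₂ x ∈ LinearMap.ker d₁)
    (e : Y →ₗ[A] C) (i : C →ₗ[A] Z)
    (he : Function.Surjective e) (hex : Function.Exact d₂ e) (hi : i ∘ₗ e = d₁) :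
    (LinearMap.ker d₁ ⧸ LinearMap.range (d₂.codRestrict (LinearMap.ker d₁) h)) ≃ₗ[A]
      LinearMap.ker i := by
  have hmem : ∀ y : LinearMap.ker d₁, e y ∈ LinearMap.ker i := fun y => by
    have := LinearMap.mem_ker.1 y.2
    rw [LinearMap.mem_ker, ← LinearMap.comp_apply, hi, this]
  let φ : LinearMap.ker d₁ →ₗ[A] LinearMap.ker i :=
    (e ∘ₗ (LinearMap.ker d₁).subtype).codRestrict _ hmem
  refine (Submodule.quotEquivOfEq _ (LinearMap.ker φ) ?_).trans
    (φ.quotKerEquivOfSurjective ?_)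
  · ext ⟨y, hy⟩
    constructor
    · rintro ⟨x, hx⟩
      have : d₂ x = y := congrArg Subtype.val hx
      apply Subtype.ext
      exact (hex y).2 ⟨x, this⟩
    · intro hz
      obtain ⟨x, hx⟩ := (hex y).1 (congrArg Subtype.val hz)
      exact ⟨x, Subtype.ext hx⟩
  · rintro ⟨c, hc⟩
    obtain ⟨y, rfl⟩ := he c
    exact ⟨⟨y, by rw [← hi]; exact hc⟩, rfl⟩

/-- compute `Tor` from a projective resolution. -/
noncomputable def auxTorEquiv {A : Type u} [CommRing A] (M N : ModuleCat.{u} A)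
    (Q : ProjectiveResolution N) (n : ℕ) (C : Type u) [AddCommGroup C] [Module A C]
    (e : Q.complex.X (n+1) →ₗ[A] C) (i : C →ₗ[A] Q.complex.X n)
    (he : Function.Surjective e) (hex : Function.Exact (Q.complex.d (n+2) (n+1)).hom e)
    (hi : i ∘ₗ e = (Q.complex.d (n+1) n).hom) :
    (((Tor (ModuleCat.{u} A) (n+1)).obj M).obj N) ≃ₗ[A] LinearMap.ker (i.lTensor M) := by
  let I := (Q.isoLeftDerivedObj ((MonoidalCategory.tensoringLeft _).obj M) (n+1) ≪≫
    HomologicalComplex.homologyIsoSc' _ (n+2) (n+1) n (by simp only [ChainComplex.prev]; rfl)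
      (by simp only [ChainComplex.next_nat_succ]) ≪≫
    ShortComplex.moduleCatHomologyIso _)
  let J := auxHomEquiv ((Q.complex.d (n+2) (n+1)).hom.lTensor M)
    ((Q.complex.d (n+1) n).hom.lTensor M) (fun x => by
      rw [LinearMap.mem_ker, ← LinearMap.comp_apply, ← LinearMap.lTensor_comp,
        ← ModuleCat.hom_comp, Q.complex.d_comp_d]; simp) (e.lTensor M) (i.lTensor M)
    (LinearMap.lTensor_surjective _ he) (lTensor_exact _ hex he)
    (by rw [← LinearMap.lTensor_comp, hi])
  exact LinearEquiv.trans (σ₁₂ := RingHom.id A) (σ₂₁ := RingHom.id A) (σ₂₃ := RingHom.id A) (σ₃₂ := RingHom.id A) I.toLinearEquiv J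

/-- A chain complex resolving `K`, in elementary terms. -/
structure AuxRes {A : Type u} [CommRing A] (C : ChainComplex (ModuleCat.{u} A) ℕ)
    (K : ModuleCat.{u} A) (q : C.X 0 ⟶ K) : Prop where
  proj : ∀ n, Projective (C.X n)
  ex : ∀ n, Function.Exact (C.d (n+2) (n+1)).hom (C.d (n+1) n).hom
  ex0 : Function.Exact (C.d 1 0).hom q.hom
  surj : Function.Surjective q.hom

lemma AuxRes.exists {A : Type u} [CommRing A] (K : ModuleCat.{u} A) :
    ∃ (C : ChainComplex (ModuleCat.{u} A) ℕ) (q : C.X 0 ⟶ K), AuxRes C K q := by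
  let P := ProjectiveResolution.of K
  refine ⟨P.complex, P.π.f 0, P.projective, fun n => ?_, ?_, ?_⟩
  · exact (ShortComplex.ShortExact.moduleCat_exact_iff_function_exact _).1 (P.exact_succ n)
  · exact (ShortComplex.ShortExact.moduleCat_exact_iff_function_exact _).1 (P.exact₀)
  · exact (ModuleCat.epi_iff_surjective _).1 (inferInstance : Epi (P.π.f 0))

lemma AuxRes.w {A : Type u} [CommRing A] {C : ChainComplex (ModuleCat.{u} A) ℕ}
    {K : ModuleCat.{u} A} {q : C.X 0 ⟶ K} (h : AuxRes C K q) : C.d 1 0 ≫ q = 0 := by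
  ext x
  exact h.ex0.apply_apply_eq_zero x

/-- the projective resolution -/
noncomputable def AuxRes.toPR {A : Type u} [CommRing A] {C : ChainComplex (ModuleCat.{u} A) ℕ}
    {K : ModuleCat.{u} A} {q : C.X 0 ⟶ K} (h : AuxRes C K q) : ProjectiveResolution K where
  complex := C
  projective := h.proj
  π := (ChainComplex.toSingle₀Equiv _ _).symm ⟨q, h.w⟩
  quasiIso := ⟨fun n => by
    match n with
    | 0 =>
      rw [ChainComplex.quasiIsoAt₀_iff, ShortComplex.quasiIso_iff_of_zeros']
      · refine (ShortComplex.exact_and_epi_g_iff_of_iso (S₂ := ShortComplex.mk _ _ h.w) ?_).2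
          ⟨(ShortComplex.ShortExact.moduleCat_exact_iff_function_exact _).2 h.ex0,
            (ModuleCat.epi_iff_surjective _).2 h.surj⟩
        refine ShortComplex.isoMk (Iso.refl _) (Iso.refl _) (Iso.refl _) ?_ ?_
        · exact (Category.id_comp _).trans (Category.comp_id _).symm
        · refine (Category.id_comp _).trans ?_
          refine Eq.trans ?_ (Category.comp_id _).symm
          exact (ChainComplex.toSingle₀Equiv_symm_apply_f_zero _ _).symm
      · exact C.shape _ _ (by simp)
      all_goals rfl
    | n+1 =>
      rw [quasiIsoAt_iff_exactAt']
      · rw [HomologicalComplex.exactAt_iff' _ (n+2) (n+1) n (by simp only [ChainComplex.prev]; rfl)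
          (by simp only [ChainComplex.next_nat_succ])]
        exact (ShortComplex.ShortExact.moduleCat_exact_iff_function_exact _).2 (h.ex n)
      · apply ChainComplex.exactAt_succ_single_obj⟩

lemma AuxRes.splice {A : Type u} [CommRing A] {C : ChainComplex (ModuleCat.{u} A) ℕ}
    {K F N : ModuleCat.{u} A} {q : C.X 0 ⟶ K} (h : AuxRes C K q) (hF : Projective F)
    (i : K ⟶ F) (p : F ⟶ N) (hi : Function.Injective i.hom) (hp : Function.Surjective p.hom)
    (hip : Function.Exact i.hom p.hom) :
    AuxRes (C.augment (q ≫ i) (by rw [← Category.assoc, h.w, Limits.zero_comp])) N p where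
  proj
    | 0 => hF
    | n+1 => h.proj n
  ex
    | 0 => by
      intro y
      refine Iff.trans ?_ (h.ex0 y)
      change i.hom (q.hom y) = 0 ↔ _
      exact map_eq_zero_iff _ hi
    | n+1 => h.ex n
  ex0 := by
    intro y
    refine (hip y).trans ⟨?_, ?_⟩
    · rintro ⟨x, rfl⟩
      obtain ⟨z, rfl⟩ := h.surj x
      exact ⟨z, rfl⟩
    · rintro ⟨x, rfl⟩
      exact ⟨q.hom x, rfl⟩
  surj := hp

lemma auxTor1 {A : Type u} [CommRing A] (M N K F : Type u) [AddCommGroup M] [AddCommGroup N]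
    [AddCommGroup K] [AddCommGroup F] [Module A M] [Module A N] [Module A K] [Module A F]
    [Module.Projective A F] (i : K →ₗ[A] F) (p : F →ₗ[A] N) (hi : Function.Injective i)
    (hp : Function.Surjective p) (hip : Function.Exact i p) :
    Nonempty ((((Tor (ModuleCat.{u} A) 1).obj (ModuleCat.of A M)).obj (ModuleCat.of A N)) ≃ₗ[A]
      LinearMap.ker (i.lTensor M)) := by
  obtain ⟨C, q, h⟩ := AuxRes.exists (ModuleCat.of A K)
  have hF : Projective (ModuleCat.of A F) := (IsProjective.iff_projective _).1 inferInstance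
  have h1 := h.splice hF (ModuleCat.ofHom i) (ModuleCat.ofHom p) hi hp hip
  exact ⟨auxTorEquiv (ModuleCat.of A M) _ h1.toPR 0 K q.hom i h.surj h.ex0 rfl⟩

lemma auxTor2 {A : Type u} [CommRing A] (M N K F L G : Type u) [AddCommGroup M] [AddCommGroup N]
    [AddCommGroup K] [AddCommGroup F] [Module A M] [Module A N] [Module A K] [Module A F]
    [AddCommGroup L] [AddCommGroup G] [Module A L] [Module A G]
    [Module.Projective A F] [Module.Projective A G]
    (i : K →ₗ[A] F) (p : F →ₗ[A] N) (hi : Function.Injective i)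
    (hp : Function.Surjective p) (hip : Function.Exact i p)
    (j : L →ₗ[A] G) (r : G →ₗ[A] K) (hj : Function.Injective j)
    (hr : Function.Surjective r) (hjr : Function.Exact j r) :
    Nonempty ((((Tor (ModuleCat.{u} A) 2).obj (ModuleCat.of A M)).obj (ModuleCat.of A N)) ≃ₗ[A]
      LinearMap.ker (j.lTensor M)) := by
  obtain ⟨C, q, h⟩ := AuxRes.exists (ModuleCat.of A L)
  have hF : Projective (ModuleCat.of A F) := (IsProjective.iff_projective _).1 inferInstance
  have hG : Projective (ModuleCat.of A G) := (IsProjective.iff_projective _).1 inferInstance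
  have h1 := h.splice hG (ModuleCat.ofHom j) (ModuleCat.ofHom r) hj hr hjr
  have h2 := h1.splice hF (ModuleCat.ofHom i) (ModuleCat.ofHom p) hi hp hip
  exact ⟨auxTorEquiv (ModuleCat.of A M) _ h2.toPR 1 L q.hom j h.surj h.ex0 rfl⟩

lemma auxDesc {A X Y Z : Type*} [CommRing A] [AddCommGroup X] [AddCommGroup Y] [AddCommGroup Z]
    [Module A X] [Module A Y] [Module A Z] (p : X →ₗ[A] Y) (u : X →ₗ[A] Z)
    (hp : Function.Surjective p) (h : ∀ x, p x = 0 → u x = 0) :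
    ∃ c : Y →ₗ[A] Z, ∀ x, c (p x) = u x := by
  refine ⟨(LinearMap.ker p).liftQ u (fun x hx => h x hx) ∘ₗ
    (p.quotKerEquivOfSurjective hp).symm.toLinearMap, fun x => ?_⟩
  have : (p.quotKerEquivOfSurjective hp).symm (p x) = (LinearMap.ker p).mkQ x := by
    rw [LinearEquiv.symm_apply_eq]; rfl
  rw [LinearMap.comp_apply, LinearEquiv.coe_coe, this]
  exact Submodule.liftQ_apply _ _ _

lemma auxCore {A N F K N₁ F' G L L' N₂ G' : Type*} [CommRing A]
    [AddCommGroup N] [AddCommGroup F] [AddCommGroup K] [AddCommGroup N₁] [AddCommGroup F']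
    [AddCommGroup G] [AddCommGroup L] [AddCommGroup L'] [AddCommGroup N₂] [AddCommGroup G']
    [Module A N] [Module A F] [Module A K] [Module A N₁] [Module A F']
    [Module A G] [Module A L] [Module A L'] [Module A N₂] [Module A G']
    (p : F →ₗ[A] N) (i : K →ₗ[A] F) (r : G →ₗ[A] K) (j : L →ₗ[A] G)
    (u : F →ₗ[A] K) (a : K →ₗ[A] N₁) (i₁ : N₁ →ₗ[A] F') (v : F →ₗ[A] F')
    (j' : L' →ₗ[A] G) (t : L' →ₗ[A] F) (s : L →ₗ[A] L') (b : L' →ₗ[A] N₂) (u₂ : G →ₗ[A] L')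
    (j₂ : N₂ →ₗ[A] G') (w : G →ₗ[A] G')
    (hp : Function.Surjective p) (hip : Function.Exact i p)
    (hr : Function.Surjective r) (hjr : Function.Exact j r)
    (hiu : ∀ x, i (u x) = 0) (hui : ∀ x, u (i x) = 0)
    (ha : Function.Surjective a) (hua : Function.Exact u a)
    (hia : ∀ x, i₁ (a x) = v (i x)) (hv : Function.Injective v)
    (hrj : ∀ x, r (j' x) = u (t x)) (ht : Function.Surjective t)
    (hjs : ∀ x, j' (s x) = j x) (hst : Function.Exact s t)
    (hb : Function.Surjective b) (hub : Function.Exact u₂ b)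
    (hju : ∀ x, j' (u₂ x) = 0) (htu : ∀ x, t (u₂ x) = i (r x))
    (hjb : ∀ x, j₂ (b x) = w (j' x)) (hw : Function.Injective w) :
    ∃ (g₁ : LinearMap.ker j →+ LinearMap.ker j₂) (g₂ : LinearMap.ker j₂ →+ N)
      (g₃ : N →+ LinearMap.ker i) (g₄ : LinearMap.ker i →+ LinearMap.ker i₁),
      Function.Exact g₁ g₂ ∧ Function.Exact g₂ g₃ ∧ Function.Exact g₃ g₄ ∧
      Function.Surjective g₄ := by
  obtain ⟨c₃, hc₃⟩ := auxDesc p u hp (fun x hx => by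
    obtain ⟨k, rfl⟩ := (hip x).1 hx
    exact hui k)
  obtain ⟨c₂, hc₂⟩ := auxDesc b (p ∘ₗ t) hb (fun x hx => by
    obtain ⟨g, rfl⟩ := (hub x).1 hx
    simp only [LinearMap.comp_apply, htu]
    exact hip.apply_apply_eq_zero _)
  let G₁ : LinearMap.ker j →ₗ[A] LinearMap.ker j₂ :=
    ((b ∘ₗ s) ∘ₗ (LinearMap.ker j).subtype).codRestrict _ (fun x => by
      have := LinearMap.mem_ker.1 x.2
      simp [LinearMap.mem_ker, hjb, hjs])
  let G₂ : LinearMap.ker j₂ →ₗ[A] N := c₂ ∘ₗ (LinearMap.ker j₂).subtype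
  let G₃ : N →ₗ[A] LinearMap.ker i := c₃.codRestrict _ (fun x => by
    obtain ⟨y, rfl⟩ := hp x
    rw [LinearMap.mem_ker, hc₃, hiu])
  let G₄ : LinearMap.ker i →ₗ[A] LinearMap.ker i₁ :=
    (a ∘ₗ (LinearMap.ker i).subtype).codRestrict _ (fun x => by
      simp [LinearMap.mem_ker, hia])
  refine ⟨G₁.toAddMonoidHom, G₂.toAddMonoidHom, G₃.toAddMonoidHom, G₄.toAddMonoidHom,
    ?_, ?_, ?_, ?_⟩
  · rintro ⟨z, hz⟩
    constructor
    · intro h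
      obtain ⟨y, rfl⟩ := hb z
      have h : c₂ (b y) = 0 := h
      rw [hc₂] at h
      have hy : j' y = 0 := by
        apply hw
        rw [← hjb, map_zero]; exact hz
      obtain ⟨k, hk⟩ := (hip _).1 h
      obtain ⟨g, rfl⟩ := hr k
      rw [← htu] at hk
      obtain ⟨l, hl⟩ := (hst (y - u₂ g)).1 (by rw [map_sub, hk, sub_self])
      refine ⟨⟨l, ?_⟩, ?_⟩
      · rw [LinearMap.mem_ker, ← hjs, hl, map_sub, hju, hy, sub_self]
      · apply Subtype.ext
        change b (s l) = b y
        rw [hl, map_sub, hub.apply_apply_eq_zero, sub_zero]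
    · rintro ⟨⟨l, hl⟩, h⟩
      have h : b (s l) = z := congrArg Subtype.val h
      change c₂ z = 0
      rw [← h, hc₂, LinearMap.comp_apply, hst.apply_apply_eq_zero, map_zero]
  · intro n
    constructor
    · intro h
      obtain ⟨x, rfl⟩ := hp n
      have h : c₃ (p x) = 0 := congrArg Subtype.val h
      rw [hc₃] at h
      obtain ⟨y, rfl⟩ := ht x
      rw [← hrj] at h
      obtain ⟨l, hl⟩ := (hjr _).1 h
      have h0 : j' (y - s l) = 0 := by rw [map_sub, hjs, hl, sub_self]
      refine ⟨⟨b (y - s l), ?_⟩, ?_⟩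
      · rw [LinearMap.mem_ker, hjb, h0, map_zero]
      · change c₂ (b (y - s l)) = _
        rw [hc₂, LinearMap.comp_apply, map_sub, hst.apply_apply_eq_zero, sub_zero]
    · rintro ⟨⟨z, hz⟩, h⟩
      have h : c₂ z = n := h
      obtain ⟨y, rfl⟩ := hb z
      have hy : j' y = 0 := by
        apply hw
        rw [← hjb, map_zero]; exact hz
      apply Subtype.ext
      change c₃ n = 0
      rw [← h, hc₂, LinearMap.comp_apply, hc₃, ← hrj, hy, map_zero]
  · rintro ⟨x, hx⟩
    constructor
    · intro h
      have h : a x = 0 := congrArg Subtype.val h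
      obtain ⟨y, rfl⟩ := (hua x).1 h
      exact ⟨p y, Subtype.ext (hc₃ y)⟩
    · rintro ⟨n, h⟩
      have h : c₃ n = x := congrArg Subtype.val h
      obtain ⟨y, rfl⟩ := hp n
      apply Subtype.ext
      change a x = 0
      rw [← h, hc₃, hua.apply_apply_eq_zero]
  · rintro ⟨y, hy⟩
    obtain ⟨x, rfl⟩ := ha y
    refine ⟨⟨x, ?_⟩, rfl⟩
    rw [LinearMap.mem_ker]
    apply hv
    rw [← hia, map_zero]; exact hy

/-- tensor products do not depend on the base ring along a surjection. -/
lemma auxTens {S R M X : Type*} [CommRing S] [CommRing R] [Algebra S R]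
    (hπ : Function.Surjective (algebraMap S R))
    [AddCommGroup M] [AddCommGroup X] [Module R M] [Module R X]
    [Module S M] [Module S X] [IsScalarTower S R M] [IsScalarTower S R X] :
    ∃ e : M ⊗[R] X ≃+ M ⊗[S] X, ∀ m x, e (m ⊗ₜ x) = m ⊗ₜ x := by
  have inst : TensorProduct.CompatibleSMul S R M X := by
    refine ⟨fun r m n => ?_⟩
    obtain ⟨s, rfl⟩ := hπ r
    rw [algebraMap_smul, algebraMap_smul, TensorProduct.smul_tmul]
  exact ⟨(TensorProduct.equivOfCompatibleSMul S R S M X).toAddEquiv, fun _ _ => rfl⟩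

/-- kernels of `M ⊗ g` do not depend on the base ring along a surjection. -/
lemma auxKer {S R M X Y : Type*} [CommRing S] [CommRing R] [Algebra S R]
    (hπ : Function.Surjective (algebraMap S R))
    [AddCommGroup M] [AddCommGroup X] [AddCommGroup Y] [Module R M] [Module R X] [Module R Y]
    [Module S M] [Module S X] [Module S Y] [IsScalarTower S R M] [IsScalarTower S R X]
    [IsScalarTower S R Y] (g : X →ₗ[R] Y) :
    Nonempty (LinearMap.ker (g.lTensor M) ≃+
      LinearMap.ker ((g.restrictScalars S).lTensor M)) := by
  obtain ⟨e, he⟩ := auxTens (M := M) (X := X) hπ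
  obtain ⟨e', he'⟩ := auxTens (M := M) (X := Y) hπ
  have key : ∀ z, e' (g.lTensor M z) = (g.restrictScalars S).lTensor M (e z) := by
    intro z
    induction z with
    | zero => simp
    | add x y hx hy => simp only [map_add, hx, hy]
    | tmul m x => simp [he, he']
  refine ⟨AddEquiv.mk ⟨fun z => ⟨e z, ?_⟩, fun z => ⟨e.symm z, ?_⟩, ?_, ?_⟩ ?_⟩
  · rw [LinearMap.mem_ker, ← key, LinearMap.mem_ker.1 z.2, map_zero]
  · rw [LinearMap.mem_ker, ← map_eq_zero_iff _ e'.injective, key, e.apply_symm_apply]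
    exact z.2
  · intro z; simp
  · intro z; simp
  · intro x y; ext; simp

lemma auxBase {S R F : Type*} [CommRing S] [CommRing R] [Algebra S R] (f : S)
    (hπ : Function.Surjective (algebraMap S R))
    (hker : RingHom.ker (algebraMap S R) = Ideal.span {f}) [AddCommGroup F] [Module S F] :
    Function.Surjective (TensorProduct.mk S R F 1) ∧
      Function.Exact (LinearMap.lsmul S F f) (TensorProduct.mk S R F 1) := by
  have hs : Function.Surjective (Algebra.linearMap S R) := hπ
  have hx : Function.Exact (LinearMap.lsmul S S f) (Algebra.linearMap S R) := by
    intro x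
    have : x ∈ RingHom.ker (algebraMap S R) ↔ x ∈ Ideal.span {f} := by rw [hker]
    rw [RingHom.mem_ker, Ideal.mem_span_singleton'] at this
    refine Iff.trans this ⟨?_, ?_⟩
    · rintro ⟨a, rfl⟩; exact ⟨a, by simp [mul_comm]⟩
    · rintro ⟨a, rfl⟩; exact ⟨a, by simp [mul_comm]⟩
  have h1 := rTensor_exact F hx hs
  have h2 := LinearMap.rTensor_surjective F hs
  have e : ∀ x : F, TensorProduct.mk S R F 1 x =
      (Algebra.linearMap S R).rTensor F ((TensorProduct.lid S F).symm x) := by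
    intro x; simp
  refine ⟨fun y => ?_, fun y => ?_⟩
  · obtain ⟨z, rfl⟩ := h2 y
    exact ⟨TensorProduct.lid S F z, by rw [e]; simp⟩
  · rw [e, h1]
    constructor
    · rintro ⟨z, hz⟩
      refine ⟨TensorProduct.lid S F z, ?_⟩
      obtain ⟨x, rfl⟩ := (TensorProduct.lid S F).symm.surjective z
      apply (TensorProduct.lid S F).symm.injective
      rw [← hz]
      simp [TensorProduct.smul_tmul']
    · rintro ⟨z, hz⟩
      refine ⟨(TensorProduct.lid S F).symm z, ?_⟩
      rw [← hz]
      simp [TensorProduct.smul_tmul']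

lemma auxZero {S M X Y : Type*} [CommRing S] (f : S) [AddCommGroup M] [AddCommGroup X]
    [AddCommGroup Y] [Module S M] [Module S X] [Module S Y] (hM : ∀ m : M, f • m = 0)
    (g h : X →ₗ[S] Y) (hg : ∀ x, g x = f • h x) (z : M ⊗[S] X) : g.lTensor M z = 0 := by
  induction z with
  | zero => simp
  | add a b ha hb => rw [map_add, ha, hb, add_zero]
  | tmul m z =>
    rw [LinearMap.lTensor_tmul, hg, ← TensorProduct.smul_tmul, hM, TensorProduct.zero_tmul]

lemma auxInj {S M F F' : Type*} [CommRing S] (f : S) [AddCommGroup M] [AddCommGroup F]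
    [AddCommGroup F'] [Module S M] [Module S F] [Module S F'] (hM : ∀ m : M, f • m = 0)
    (v : F →ₗ[S] F') (hv : Function.Surjective v)
    (hex : Function.Exact (LinearMap.lsmul S F f) v) : Function.Injective (v.lTensor M) := by
  rw [injective_iff_map_eq_zero]
  intro x hx
  obtain ⟨y, rfl⟩ := (lTensor_exact M hex hv x).1 hx
  exact auxZero f hM _ LinearMap.id (fun x => by simp) y

section step

variable {S R F X : Type*} [CommRing S] [CommRing R] [Algebra S R] [AddCommGroup F] [Module S F]
  [AddCommGroup X] [Module S X] [Module R X] [IsScalarTower S R X]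

/-- the `R`-syzygy -/
noncomputable abbrev auxN (R : Type*) [CommRing R] [Algebra S R] [Module R X] [IsScalarTower S R X]
    (q : F →ₗ[S] X) : Submodule R (R ⊗[S] F) :=
  LinearMap.ker (q.liftBaseChange R)

/-- the map from the `S`-syzygy to the `R`-syzygy -/
noncomputable def auxA (R : Type*) [CommRing R] [Algebra S R] [Module R X] [IsScalarTower S R X]
    (q : F →ₗ[S] X) : LinearMap.ker q →ₗ[S] auxN R q where
  toFun x := ⟨TensorProduct.mk S R F 1 x, by
    have := LinearMap.mem_ker.1 x.2
    simp [LinearMap.mem_ker]⟩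
  map_add' x y := by ext; simp [TensorProduct.tmul_add]
  map_smul' c x := by ext; simp

/-- multiplication by `f` into the syzygy -/
def auxU (q : F →ₗ[S] X) (f : S) (hX : ∀ x : X, f • x = 0) : F →ₗ[S] LinearMap.ker q :=
  (LinearMap.lsmul S F f).codRestrict _ (fun x => by simp [LinearMap.mem_ker, hX])

lemma auxA_surj (f : S) (hπ : Function.Surjective (algebraMap S R))
    (hker : RingHom.ker (algebraMap S R) = Ideal.span {f}) (q : F →ₗ[S] X) :
    Function.Surjective (auxA R q) := by
  rintro ⟨y, hy⟩
  obtain ⟨x, rfl⟩ := (auxBase f hπ hker).1 y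
  refine ⟨⟨x, ?_⟩, rfl⟩
  rw [LinearMap.mem_ker] at hy ⊢
  simpa using hy

lemma auxA_exact (f : S) (hπ : Function.Surjective (algebraMap S R))
    (hker : RingHom.ker (algebraMap S R) = Ideal.span {f}) (q : F →ₗ[S] X)
    (hX : ∀ x : X, f • x = 0) : Function.Exact (auxU q f hX) (auxA R q) := by
  rintro ⟨x, hx⟩
  have h := (auxBase f hπ hker (F := F)).2 x
  constructor
  · intro h1
    obtain ⟨y, hy⟩ := h.1 (congrArg Subtype.val h1)
    exact ⟨y, Subtype.ext hy⟩
  · rintro ⟨y, hy⟩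
    exact Subtype.ext (h.2 ⟨y, congrArg Subtype.val hy⟩)

end step

lemma auxTransport {A B C D E A' B' C' D' E' : Type} [AddCommGroup A] [AddCommGroup B]
    [AddCommGroup C] [AddCommGroup D] [AddCommGroup E] [AddCommGroup A'] [AddCommGroup B']
    [AddCommGroup C'] [AddCommGroup D'] [AddCommGroup E']
    (g₁ : A →+ B) (g₂ : B →+ C) (g₃ : C →+ D) (g₄ : D →+ E)
    (h₁ : Function.Exact g₁ g₂) (h₂ : Function.Exact g₂ g₃) (h₃ : Function.Exact g₃ g₄)
    (h₄ : Function.Surjective g₄) (a : A' ≃+ A) (b : B' ≃+ B) (c : C' ≃+ C) (d : D' ≃+ D)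
    (e : E' ≃+ E) :
    ∃ (g₁ : A' →+ B') (g₂ : B' →+ C') (g₃ : C' →+ D') (g₄ : D' →+ E'),
      Function.Exact g₁ g₂ ∧ Function.Exact g₂ g₃ ∧ Function.Exact g₃ g₄ ∧
      Function.Surjective g₄ := by
  have key : ∀ {X Y Z X' Y' Z' : Type} [AddCommGroup X] [AddCommGroup Y] [AddCommGroup Z]
      [AddCommGroup X'] [AddCommGroup Y'] [AddCommGroup Z'] (g : X →+ Y) (h : Y →+ Z)
      (x : X' ≃+ X) (y : Y' ≃+ Y) (z : Z' ≃+ Z), Function.Exact g h →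
      Function.Exact (fun t => y.symm (g (x t))) (fun t => z.symm (h (y t))) := by
    intro X Y Z X' Y' Z' _ _ _ _ _ _ g h x y z H t
    change z.symm _ = 0 ↔ _
    rw [map_eq_zero_iff _ z.symm.injective, H]
    constructor
    · rintro ⟨k, hk⟩
      exact ⟨x.symm k, by simp [hk]⟩
    · rintro ⟨k, hk⟩
      exact ⟨x k, by rw [← hk]; simp⟩
  refine ⟨b.symm.toAddMonoidHom.comp (g₁.comp a.toAddMonoidHom),
    c.symm.toAddMonoidHom.comp (g₂.comp b.toAddMonoidHom),
    d.symm.toAddMonoidHom.comp (g₃.comp c.toAddMonoidHom),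
    e.symm.toAddMonoidHom.comp (g₄.comp d.toAddMonoidHom),
    key g₁ g₂ a b c h₁, key g₂ g₃ b c d h₂, key g₃ g₄ c d e h₃, ?_⟩
  exact e.symm.surjective.comp (h₄.comp d.surjective)

lemma auxFree (S : Type) [CommRing S] (f : S) (hf : f ∈ nonZeroDivisors S)
    (N : Type) [AddCommGroup N] [Module S N] :
    ∃ (F : Type) (_ : AddCommGroup F) (_ : Module S F) (_ : Module.Projective S F)
      (p : F →ₗ[S] N), Function.Surjective p ∧ ∀ x y : F, f • x = f • y → x = y := by
  refine ⟨N →₀ S, inferInstance, inferInstance, inferInstance, Finsupp.linearCombination S id,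
    Finsupp.linearCombination_id_surjective S N, fun x y h1 => ?_⟩
  ext n
  have h2 := DFunLike.congr_fun h1 n
  simp only [Finsupp.smul_apply, smul_eq_mul] at h2
  exact (mul_cancel_left_mem_nonZeroDivisors hf).1 h2

lemma auxLift {S X Y Z : Type} [CommRing S] [AddCommGroup X] [AddCommGroup Y] [AddCommGroup Z]
    [Module S X] [Module S Y] [Module S Z] (u : Y →ₗ[S] Z) (hu : Function.Injective u)
    (h : X →ₗ[S] Z) (hh : ∀ x, h x ∈ Set.range u) : ∃ t : X →ₗ[S] Y, ∀ x, u (t x) = h x := by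
  refine ⟨(LinearEquiv.ofInjective u hu).symm.toLinearMap ∘ₗ
    h.codRestrict (LinearMap.range u) hh, fun x => ?_⟩
  exact congrArg Subtype.val ((LinearEquiv.ofInjective u hu).apply_symm_apply _)

lemma auxStep {S R F X : Type} [CommRing S] [CommRing R] [Algebra S R] [AddCommGroup F]
    [Module S F] [Module.Projective S F]
    [AddCommGroup X] [Module S X] [Module R X] [IsScalarTower S R X]
    (f : S) (hπ : Function.Surjective (algebraMap S R))
    (hker : RingHom.ker (algebraMap S R) = Ideal.span {f}) (q : F →ₗ[S] X)
    (hq : Function.Surjective q) (hX : ∀ x : X, f • x = 0) :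
    ∃ (F' : Type) (_ : AddCommGroup F') (_ : Module S F') (_ : Module R F')
      (_ : IsScalarTower S R F') (_ : Module.Projective R F')
      (N₁ : Type) (_ : AddCommGroup N₁) (_ : Module S N₁) (_ : Module R N₁)
      (_ : IsScalarTower S R N₁)
      (K : Type) (_ : AddCommGroup K) (_ : Module S K)
      (i : K →ₗ[S] F) (i₁ : N₁ →ₗ[R] F') (q' : F' →ₗ[R] X) (v : F →ₗ[S] F') (a : K →ₗ[S] N₁)
      (u : F →ₗ[S] K),
      Function.Injective i ∧ Function.Exact i q ∧ Function.Injective i₁ ∧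
      Function.Surjective q' ∧ Function.Exact i₁ q' ∧ Function.Surjective v ∧
      Function.Exact (LinearMap.lsmul S F f) v ∧ Function.Surjective a ∧ Function.Exact u a ∧
      (i₁.restrictScalars S) ∘ₗ a = v ∘ₗ i ∧ ∀ x, i (u x) = f • x := by
  refine ⟨R ⊗[S] F, inferInstance, inferInstance, inferInstance, inferInstance, inferInstance,
    auxN R q, inferInstance, inferInstance, inferInstance, inferInstance,
    LinearMap.ker q, inferInstance, inferInstance, (LinearMap.ker q).subtype,
    (auxN R q).subtype, q.liftBaseChange R, TensorProduct.mk S R F 1, auxA R q, auxU q f hX,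
    Subtype.val_injective, LinearMap.exact_subtype_ker_map q, Subtype.val_injective, ?_,
    LinearMap.exact_subtype_ker_map _, (auxBase f hπ hker).1, (auxBase f hπ hker).2,
    auxA_surj f hπ hker q, auxA_exact f hπ hker q hX, rfl, fun _ => rfl⟩
  intro n
  obtain ⟨x, rfl⟩ := hq n
  exact ⟨1 ⊗ₜ x, by simp⟩

lemma auxMain (S : Type) [CommRing S]
    (f : S) (hf : f ∈ nonZeroDivisors S)
    (R : Type) [CommRing R] [Algebra S R] (hπ : Function.Surjective (algebraMap S R))
    (hker : RingHom.ker (algebraMap S R) = Ideal.span {f})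
    (M N : Type) [AddCommGroup M] [Module R M]
    [AddCommGroup N] [Module R N] [Module S M] [Module S N] [IsScalarTower S R M]
    [IsScalarTower S R N] :
    ∃ (g₁ : (((Tor (ModuleCat.{0} S) 2).obj (ModuleCat.of S M)).obj (ModuleCat.of S N)) →+
            (((Tor (ModuleCat.{0} R) 2).obj (ModuleCat.of R M)).obj (ModuleCat.of R N)))
      (g₂ : (((Tor (ModuleCat.{0} R) 2).obj (ModuleCat.of R M)).obj (ModuleCat.of R N)) →+
            (M ⊗[R] N))
      (g₃ : (M ⊗[R] N) →+
            (((Tor (ModuleCat.{0} S) 1).obj (ModuleCat.of S M)).obj (ModuleCat.of S N)))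
      (g₄ : (((Tor (ModuleCat.{0} S) 1).obj (ModuleCat.of S M)).obj (ModuleCat.of S N)) →+
            (((Tor (ModuleCat.{0} R) 1).obj (ModuleCat.of R M)).obj (ModuleCat.of R N))),
      Function.Exact g₁ g₂ ∧ Function.Exact g₂ g₃ ∧ Function.Exact g₃ g₄ ∧
      Function.Surjective g₄ := by
  have hf0 : algebraMap S R f = 0 := by
    rw [← RingHom.mem_ker, hker]; exact Ideal.mem_span_singleton_self f
  have hX : ∀ (X : Type) [AddCommGroup X] [Module S X] [Module R X] [IsScalarTower S R X] (x : X),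
      f • x = 0 := by
    intro X _ _ _ _ x
    rw [← algebraMap_smul R f x, hf0, zero_smul]
  have hM := hX M
  have hN := hX N
  -- first step over `S` and `R`
  obtain ⟨F, _, _, _, p, hp, hF⟩ := auxFree S f hf N
  obtain ⟨F', _, _, _, _, _, N₁, _, _, _, _, K, _, _, i, i₁, p', v, a, u, hi, hip, hi₁, hp', hip',
    hv, hfv, ha, hua, hia, hiu⟩ := auxStep f hπ hker p hp hN
  have hu : Function.Injective u := by
    intro x y hxy
    apply hF x y
    rw [← hiu, ← hiu, hxy]
  have hui : ∀ x, u (i x) = f • x := fun x => by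
    apply hi
    rw [hiu, map_smul]
  have hN₁ := hX N₁
  -- second step
  obtain ⟨G, _, _, _, r, hr, -⟩ := auxFree S f hf K
  obtain ⟨L, _, _, j, hj, hjr⟩ : ∃ (L : Type) (_ : AddCommGroup L) (_ : Module S L)
      (j : L →ₗ[S] G), Function.Injective j ∧ Function.Exact j r :=
    ⟨LinearMap.ker r, inferInstance, inferInstance, (LinearMap.ker r).subtype,
      Subtype.val_injective, LinearMap.exact_subtype_ker_map r⟩
  have hq : Function.Surjective (a ∘ₗ r) := ha.comp hr
  obtain ⟨G', _, _, _, _, _, N₂, _, _, _, _, L', _, _, j', j₂, q', w, b, u₂, hj', hjq, hj₂, hq',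
    hjq', hw, hfw, hb, hub, hjb, hju⟩ := auxStep f hπ hker (a ∘ₗ r) hq hN₁
  obtain ⟨t, ht⟩ : ∃ t : L' →ₗ[S] F, ∀ x, u (t x) = (r ∘ₗ j') x :=
    auxLift u hu (r ∘ₗ j') (fun x => (hua _).1 (hjq.apply_apply_eq_zero x))
  have hts : Function.Surjective t := by
    intro x
    obtain ⟨g, hg⟩ := hr (u x)
    obtain ⟨y, hy⟩ := (hjq g).1 (by
      rw [LinearMap.comp_apply, hg, hua.apply_apply_eq_zero])
    refine ⟨y, ?_⟩
    apply hu
    rw [ht, LinearMap.comp_apply, hy, hg]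
  obtain ⟨s, hs⟩ : ∃ s : L →ₗ[S] L', ∀ x, j' (s x) = j x :=
    auxLift j' hj' j (fun x => (hjq _).1 (by
      rw [LinearMap.comp_apply, hjr.apply_apply_eq_zero, map_zero]))
  have hst : Function.Exact s t := by
    intro x
    rw [← map_eq_zero_iff u hu, ht, LinearMap.comp_apply]
    constructor
    · intro h
      obtain ⟨l, hl⟩ := (hjr _).1 h
      exact ⟨l, hj' (by rw [hs, hl])⟩
    · rintro ⟨y, rfl⟩
      rw [hs, hjr.apply_apply_eq_zero]
  have htu : t ∘ₗ u₂ = i ∘ₗ r := by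
    ext1 x
    apply hu
    rw [LinearMap.comp_apply, ht, LinearMap.comp_apply, hju, map_smul, LinearMap.comp_apply, hui]
  have comp : ∀ {X Y Z : Type} [AddCommGroup X] [AddCommGroup Y] [AddCommGroup Z]
      [Module S X] [Module S Y] [Module S Z] (g : Y →ₗ[S] Z) (h : X →ₗ[S] Y) (x : M ⊗[S] X),
      g.lTensor M (h.lTensor M x) = (g ∘ₗ h).lTensor M x := by
    intros; rw [LinearMap.lTensor_comp]; rfl
  have hrj : r ∘ₗ j' = u ∘ₗ t := by
    ext1 x
    exact (ht x).symm
  have hjs : j' ∘ₗ s = j := by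
    ext1 x
    exact hs x
  obtain ⟨g₁, g₂, g₃, g₄, h₁, h₂, h₃, h₄⟩ := auxCore (p.lTensor M) (i.lTensor M) (r.lTensor M)
    (j.lTensor M) (u.lTensor M) (a.lTensor M) ((i₁.restrictScalars S).lTensor M) (v.lTensor M)
    (j'.lTensor M) (t.lTensor M) (s.lTensor M) (b.lTensor M) (u₂.lTensor M)
    ((j₂.restrictScalars S).lTensor M) (w.lTensor M)
    (LinearMap.lTensor_surjective _ hp) (lTensor_exact _ hip hp)
    (LinearMap.lTensor_surjective _ hr) (lTensor_exact _ hjr hr)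
    (fun x => by rw [comp]; exact auxZero f hM _ LinearMap.id hiu x)
    (fun x => by rw [comp]; exact auxZero f hM _ LinearMap.id hui x)
    (LinearMap.lTensor_surjective _ ha) (lTensor_exact _ hua ha)
    (fun x => by rw [comp, comp, hia])
    (auxInj f hM v hv hfv)
    (fun x => by rw [comp, comp, hrj])
    (LinearMap.lTensor_surjective _ hts)
    (fun x => by rw [comp, hjs])
    (lTensor_exact _ hst hts)
    (LinearMap.lTensor_surjective _ hb) (lTensor_exact _ hub hb)
    (fun x => by rw [comp]; exact auxZero f hM _ LinearMap.id hju x)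
    (fun x => by rw [comp, comp, htu])
    (fun x => by rw [comp, comp, hjb])
    (auxInj f hM w hw hfw)
  obtain ⟨e₁⟩ := auxTor2 M N K F L G i p hi hp hip j r hj hr hjr
  obtain ⟨e₂⟩ := auxTor2 M N N₁ F' N₂ G' i₁ p' hi₁ hp' hip' j₂ q' hj₂ hq' hjq'
  obtain ⟨ekerA⟩ := auxKer (M := M) hπ j₂
  obtain ⟨e₃, -⟩ := auxTens (M := M) (X := N) hπ
  obtain ⟨e₄⟩ := auxTor1 M N K F i p hi hp hip
  obtain ⟨e₅⟩ := auxTor1 M N N₁ F' i₁ p' hi₁ hp' hip'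
  obtain ⟨ekerB⟩ := auxKer (M := M) hπ i₁
  exact auxTransport g₁ g₂ g₃ g₄ h₁ h₂ h₃ h₄ e₁.toAddEquiv (e₂.toAddEquiv.trans ekerA)
    e₃ e₄.toAddEquiv (e₅.toAddEquiv.trans ekerB)

/-- Let `S` be a commutative Noetherian local ring, `f ∈ S` a non
zero-divisor, `R = S/(f)` (presented by a surjection `π : S → R` with kernel `(f)`),
and `M`, `N` finitely generated `R`-modules.  Then there is an exact sequence
`Tor₂^S(M,N) → Tor₂^R(M,N) → M ⊗_R N → Tor₁^S(M,N) → Tor₁^R(M,N) → 0`. -/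
theorem stmt_3 (S : Type) [CommRing S] [IsNoetherianRing S] [IsLocalRing S]
    (f : S) (hf : f ∈ nonZeroDivisors S)
    (R : Type) [CommRing R] (π : S →+* R) (hπ : Function.Surjective π)
    (hker : RingHom.ker π = Ideal.span {f})
    (M N : Type) [AddCommGroup M] [Module R M] [Module.Finite R M]
    [AddCommGroup N] [Module R N] [Module.Finite R N] :
    letI : Module S M := Module.compHom M π
    letI : Module S N := Module.compHom N π
    ∃ (g₁ : (((Tor (ModuleCat.{0} S) 2).obj (ModuleCat.of S M)).obj (ModuleCat.of S N)) →+
            (((Tor (ModuleCat.{0} R) 2).obj (ModuleCat.of R M)).obj (ModuleCat.of R N)))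
      (g₂ : (((Tor (ModuleCat.{0} R) 2).obj (ModuleCat.of R M)).obj (ModuleCat.of R N)) →+
            (M ⊗[R] N))
      (g₃ : (M ⊗[R] N) →+
            (((Tor (ModuleCat.{0} S) 1).obj (ModuleCat.of S M)).obj (ModuleCat.of S N)))
      (g₄ : (((Tor (ModuleCat.{0} S) 1).obj (ModuleCat.of S M)).obj (ModuleCat.of S N)) →+
            (((Tor (ModuleCat.{0} R) 1).obj (ModuleCat.of R M)).obj (ModuleCat.of R N))),
      Function.Exact g₁ g₂ ∧ Function.Exact g₂ g₃ ∧ Function.Exact g₃ g₄ ∧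
      Function.Surjective g₄ := by
  letI : Module S M := Module.compHom M π
  letI : Module S N := Module.compHom N π
  letI : Algebra S R := π.toAlgebra
  haveI : IsScalarTower S R M := ⟨fun s r m => by
    change (π s * r) • m = π s • r • m
    rw [mul_smul]⟩
  haveI : IsScalarTower S R N := ⟨fun s r m => by
    change (π s * r) • m = π s • r • m
    rw [mul_smul]⟩
  exact auxMain S f hf R hπ hker M N
end

section
/- Let R = C[[x,y]]/(xy(x-y)) and M = R/(x). Then Tor_1^R(M, M) \cong C[[y]]/(y^2) and Tor_2^R(M, M) = 0. -/
open CategoryTheory MvPowerSeries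

noncomputable section

/-- The ring `R = ℂ[[x,y]]/(xy(x-y))`. -/
abbrev R8 : Type :=
  MvPowerSeries (Fin 2) ℂ ⧸
    Ideal.span {(X 0 : MvPowerSeries (Fin 2) ℂ) * X 1 * (X 0 - X 1)}

def x8 : R8 := Ideal.Quotient.mk _ (X 0)
def y8 : R8 := Ideal.Quotient.mk _ (X 1)

/-- `M = R/(x)` -/
abbrev M8 : Type := R8 ⧸ Ideal.span {x8}

section General
open CategoryTheory.MonoidalCategory

universe u
variable {A : Type u} [CommRing A]

/-- multiplication by `a` as a morphism in `ModuleCat`. -/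
abbrev mulHom (a : A) (N : ModuleCat.{u} A) : N ⟶ N := ModuleCat.ofHom (LinearMap.lsmul A N a)

lemma mulHom_comp {a b : A} (h : a * b = 0) (N : ModuleCat.{u} A) :
    mulHom a N ≫ mulHom b N = 0 := by
  ext x
  simp [smul_smul, h]

/-- The periodic complex. -/
abbrev perCx {a b : A} (h : b * a = 0) : ChainComplex (ModuleCat.{u} A) ℕ :=
  HomologicalComplex.alternatingConst (ModuleCat.of A A) (φ := mulHom b _) (ψ := mulHom a _)
    (mulHom_comp h _) (mulHom_comp (by rw [mul_comm, h]) _)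
    fun _ _ => ComplexShape.down_nat_odd_add

lemma perCx_d_odd {a b : A} (h : b * a = 0) (i : ℕ) (hi : Odd (i + 1)) :
    (perCx h).d (i+1) i = mulHom a _ := by
  simp [perCx, Nat.not_even_iff_odd.2 hi]
  rfl

lemma perCx_d_even {a b : A} (h : b * a = 0) (i : ℕ) (hi : Even (i + 1)) :
    (perCx h).d (i+1) i = mulHom b _ := by
  simp [perCx, hi]
  rfl

/-- augmentation -/
def perπ {a b : A} (h : b * a = 0) :
    perCx h ⟶ (ChainComplex.single₀ _).obj (ModuleCat.of A (A ⧸ Ideal.span {a})) :=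
  ((perCx h).toSingle₀Equiv _).symm ⟨ModuleCat.ofHom (Submodule.mkQ (Ideal.span {a})), by
    rw [perCx_d_odd h 0 (by simp)]
    ext
    change (Ideal.Quotient.mk (Ideal.span {a})) (a * 1) = 0
    rw [Ideal.Quotient.eq_zero_iff_mem, mul_one]
    exact Ideal.subset_span rfl⟩

lemma perπ_f0 {a b : A} (h : b * a = 0) :
    (perπ h).f 0 = ModuleCat.ofHom (Submodule.mkQ (Ideal.span {a})) :=
  ChainComplex.toSingle₀Equiv_symm_apply_f_zero _ _

lemma perπ_quasiIso {a b : A} (h : b * a = 0) (ha : ∀ r, a * r = 0 → ∃ s, b * s = r)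
    (hb : ∀ r, b * r = 0 → ∃ s, a * s = r) : QuasiIso (perπ h) where
  quasiIsoAt m := by
    cases m with
    | zero =>
      rw [ChainComplex.quasiIsoAt₀_iff, ShortComplex.quasiIso_iff_of_zeros' _ rfl rfl rfl]
      constructor
      · rw [ShortComplex.moduleCat_exact_iff]
        intro r hr
        have hr' : (Ideal.Quotient.mk (Ideal.span {a})) r = 0 := by
          have h2 : (perπ h).f 0 r = 0 := hr
          rw [perπ_f0] at h2
          exact h2
        obtain ⟨s, hs⟩ := Ideal.mem_span_singleton'.1 (Ideal.Quotient.eq_zero_iff_mem.1 hr')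
        refine ⟨s, ?_⟩
        change (perCx h).d 1 0 s = r
        rw [perCx_d_odd h 0 (by simp)]
        change a * s = r
        rw [← hs, mul_comm]
      · rw [ModuleCat.epi_iff_surjective]
        intro x
        obtain ⟨y, rfl⟩ := Submodule.mkQ_surjective (Ideal.span {a}) x
        refine ⟨y, ?_⟩
        change (perπ h).f 0 y = _
        rw [perπ_f0]
        rfl
    | succ m =>
      rw [quasiIsoAt_iff_exactAt' (hL := ChainComplex.exactAt_succ_single_obj ..),
          HomologicalComplex.exactAt_iff' _ (m + 2) (m + 1) m (by simp) (by simp),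
          ShortComplex.moduleCat_exact_iff]
      intro r hr
      change (perCx h).d (m+1) m r = 0 at hr
      change ∃ s, (perCx h).d (m+1+1) (m+1) s = r
      by_cases hm : Odd (m + 1)
      · rw [perCx_d_odd h _ hm] at hr
        rw [perCx_d_even h _ (hm.add_odd odd_one)]
        exact ha r hr
      · rw [Nat.not_odd_iff_even] at hm
        rw [perCx_d_even h _ hm] at hr
        rw [perCx_d_odd h _ (hm.add_odd odd_one)]
        exact hb r hr

/-- the resolution -/
def perRes {a b : A} (h : b * a = 0) (ha : ∀ r, a * r = 0 → ∃ s, b * s = r)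
    (hb : ∀ r, b * r = 0 → ∃ s, a * s = r) :
    ProjectiveResolution (ModuleCat.of A (A ⧸ Ideal.span {a})) where
  complex := perCx h
  projective _ := inferInstanceAs <| Projective (ModuleCat.of A A)
  π := perπ h
  quasiIso := perπ_quasiIso h ha hb

lemma whisker_mulHom (a : A) (N : ModuleCat.{u} A) :
    (N ◁ mulHom a (ModuleCat.of A A)) ≫ (ρ_ N).hom = (ρ_ N).hom ≫ mulHom a N := by
  ext : 1
  apply TensorProduct.ext'
  intro n r
  change (a * r) • n = a • r • n
  rw [mul_smul]

lemma torOdd {a b : A} (h : b * a = 0) (ha : ∀ r, a * r = 0 → ∃ s, b * s = r)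
    (hb : ∀ r, b * r = 0 → ∃ s, a * s = r) (N : ModuleCat.{u} A) :
    Nonempty (((Tor (ModuleCat.{u} A) 1).obj N).obj (ModuleCat.of A (A ⧸ Ideal.span {a})) ≅
      (ShortComplex.mk (mulHom b N) (mulHom a N) (mulHom_comp h N)).homology) := by
  refine ⟨(perRes h ha hb).isoLeftDerivedObj ((tensoringLeft _).obj N) 1 ≪≫
    ShortComplex.homologyMapIso (HomologicalComplex.isoSc' _ 2 1 0 (by simp) (by simp) ≪≫
      ShortComplex.isoMk (ρ_ N) (ρ_ N) (ρ_ N) ?_ ?_)⟩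
  · change (ρ_ N).hom ≫ mulHom b N = (N ◁ (perCx h).d 2 1) ≫ (ρ_ N).hom
    rw [perCx_d_even h 1 (by decide)]
    exact (whisker_mulHom _ _).symm
  · change (ρ_ N).hom ≫ mulHom a N = (N ◁ (perCx h).d 1 0) ≫ (ρ_ N).hom
    rw [perCx_d_odd h 0 (by decide)]
    exact (whisker_mulHom _ _).symm

lemma torEven {a b : A} (h : b * a = 0) (ha : ∀ r, a * r = 0 → ∃ s, b * s = r)
    (hb : ∀ r, b * r = 0 → ∃ s, a * s = r) (N : ModuleCat.{u} A) :
    Nonempty (((Tor (ModuleCat.{u} A) 2).obj N).obj (ModuleCat.of A (A ⧸ Ideal.span {a})) ≅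
      (ShortComplex.mk (mulHom a N) (mulHom b N)
        (mulHom_comp (by rw [mul_comm, h]) N)).homology) := by
  refine ⟨(perRes h ha hb).isoLeftDerivedObj ((tensoringLeft _).obj N) 2 ≪≫
    ShortComplex.homologyMapIso (HomologicalComplex.isoSc' _ 3 2 1 (by simp) (by simp) ≪≫
      ShortComplex.isoMk (ρ_ N) (ρ_ N) (ρ_ N) ?_ ?_)⟩
  · change (ρ_ N).hom ≫ mulHom a N = (N ◁ (perCx h).d 3 2) ≫ (ρ_ N).hom
    rw [perCx_d_odd h 2 (by decide)]
    exact (whisker_mulHom _ _).symm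
  · change (ρ_ N).hom ≫ mulHom b N = (N ◁ (perCx h).d 2 1) ≫ (ρ_ N).hom
    rw [perCx_d_even h 1 (by decide)]
    exact (whisker_mulHom _ _).symm

/-- If `a` acts by zero, the homology of `N -b-> N -a-> N` is `N / range b`. -/
lemma homology_of_zero {a b : A} (N : ModuleCat.{u} A) (w : mulHom b N ≫ mulHom a N = 0)
    (h0 : mulHom a N = 0) {Q : ModuleCat.{u} A} (q : N ⟶ Q) (hq : Function.Surjective q)
    (hk : ∀ n, q n = 0 ↔ ∃ m : N, b • m = n) :
    Nonempty ((ShortComplex.mk (mulHom b N) (mulHom a N) w).homology ≅ Q) := by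
  have w' : mulHom b N ≫ q = 0 := by
    ext n
    exact (hk _).2 ⟨n, rfl⟩
  have hex : (ShortComplex.mk (mulHom b N) q w').Exact := by
    rw [ShortComplex.moduleCat_exact_iff]
    intro n hn
    exact (hk n).1 hn
  have : Epi q := (ModuleCat.epi_iff_surjective _).2 hq
  have : Epi (ShortComplex.mk (mulHom b N) q w').g := this
  exact ⟨(ShortComplex.HomologyData.ofIsColimitCokernelCofork
    (ShortComplex.mk (mulHom b N) (mulHom a N) w) h0 _ hex.gIsCokernel).left.homologyIso⟩

lemma tor1_generic {a b : A} (h : b * a = 0) (ha : ∀ r, a * r = 0 → ∃ s, b * s = r)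
    (hb : ∀ r, b * r = 0 → ∃ s, a * s = r) (N Q : Type u) [AddCommGroup N] [Module A N]
    [AddCommGroup Q] [Module A Q] (h0 : ∀ n : N, a • n = 0) (q : N →ₗ[A] Q)
    (hq : Function.Surjective q) (hk : ∀ n, q n = 0 ↔ ∃ m : N, b • m = n) :
    Nonempty (((Tor (ModuleCat.{u} A) 1).obj (ModuleCat.of A N)).obj
      (ModuleCat.of A (A ⧸ Ideal.span {a})) ≅ ModuleCat.of A Q) := by
  obtain ⟨e⟩ := torOdd h ha hb (ModuleCat.of A N)
  obtain ⟨f⟩ := homology_of_zero (a := a) (b := b) (ModuleCat.of A N)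
    (mulHom_comp h _) (by ext n; exact h0 n) (ModuleCat.ofHom q) hq hk
  exact ⟨e ≪≫ f⟩

lemma tor2_generic {a b : A} (h : b * a = 0) (ha : ∀ r, a * r = 0 → ∃ s, b * s = r)
    (hb : ∀ r, b * r = 0 → ∃ s, a * s = r) (N : Type u) [AddCommGroup N] [Module A N]
    (hi : ∀ n : N, b • n = 0 → n = 0) :
    Subsingleton (((Tor (ModuleCat.{u} A) 2).obj (ModuleCat.of A N)).obj
      (ModuleCat.of A (A ⧸ Ideal.span {a}))) := by
  obtain ⟨e⟩ := torEven h ha hb (ModuleCat.of A N)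
  have hex : (ShortComplex.mk (mulHom a (ModuleCat.of A N)) (mulHom b (ModuleCat.of A N))
      (mulHom_comp (by rw [mul_comm, h]) _)).Exact := by
    rw [ShortComplex.moduleCat_exact_iff]
    intro n hn
    exact ⟨0, (map_zero _).trans (hi n hn).symm⟩
  rw [ShortComplex.exact_iff_isZero_homology] at hex
  exact ModuleCat.subsingleton_of_isZero (hex.of_iso e)

end General

section RingFacts

lemma X_ne8 (i : Fin 2) : (X i : MvPowerSeries (Fin 2) ℂ) ≠ 0 := by
  intro h
  have := congrArg (coeff (Finsupp.single i 1)) h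
  simp [coeff_X] at this

lemma X_dvd_of8 {r : MvPowerSeries (Fin 2) ℂ} (h : (X 0 : MvPowerSeries (Fin 2) ℂ) ∣ X 1 * r) :
    (X 0 : MvPowerSeries (Fin 2) ℂ) ∣ r := by
  rw [X_dvd_iff] at h ⊢
  intro m hm
  have := h (Finsupp.single 1 1 + m) (by simp [hm])
  rw [X, coeff_add_monomial_mul] at this
  simpa using this

lemma X_sub_ne8 : (X 0 - X 1 : MvPowerSeries (Fin 2) ℂ) ≠ 0 := by
  intro h
  have := congrArg (coeff (Finsupp.single 0 1)) h
  simp [coeff_X, Finsupp.single_left_inj] at this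

lemma mul_zero8 : (y8 * (x8 - y8)) * x8 = 0 := by
  change Ideal.Quotient.mk _ ((X 1 * (X 0 - X 1)) * X 0) = 0
  rw [Ideal.Quotient.eq_zero_iff_mem, Ideal.mem_span_singleton]
  exact ⟨1, by ring⟩

lemma ker_x8 (r : R8) (h : x8 * r = 0) : ∃ s, (y8 * (x8 - y8)) * s = r := by
  obtain ⟨r, rfl⟩ := Ideal.Quotient.mk_surjective r
  change Ideal.Quotient.mk _ (X 0 * r) = 0 at h
  rw [Ideal.Quotient.eq_zero_iff_mem, Ideal.mem_span_singleton] at h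
  obtain ⟨s, hs⟩ := h
  refine ⟨Ideal.Quotient.mk _ s, ?_⟩
  have : r = X 1 * (X 0 - X 1) * s := mul_left_cancel₀ (X_ne8 0) (by rw [hs]; ring)
  rw [this]
  rfl

lemma ker_y8 (r : R8) (h : (y8 * (x8 - y8)) * r = 0) : ∃ s, x8 * s = r := by
  obtain ⟨r, rfl⟩ := Ideal.Quotient.mk_surjective r
  change Ideal.Quotient.mk _ (X 1 * (X 0 - X 1) * r) = 0 at h
  rw [Ideal.Quotient.eq_zero_iff_mem, Ideal.mem_span_singleton] at h
  obtain ⟨s, hs⟩ := h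
  refine ⟨Ideal.Quotient.mk _ s, ?_⟩
  have : r = X 0 * s :=
    mul_left_cancel₀ (mul_ne_zero (X_ne8 1) X_sub_ne8) (by rw [hs]; ring)
  rw [this]
  rfl

lemma inj8 (n : M8) (h : (y8 * (x8 - y8)) • n = 0) : n = 0 := by
  obtain ⟨r, rfl⟩ := Ideal.Quotient.mk_surjective n
  obtain ⟨r, rfl⟩ := Ideal.Quotient.mk_surjective r
  change Ideal.Quotient.mk _ (Ideal.Quotient.mk _ (X 1 * (X 0 - X 1) * r)) = 0 at h
  rw [Ideal.Quotient.eq_zero_iff_mem, Ideal.mem_span_singleton] at h ⊢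
  obtain ⟨s, hs⟩ := h
  obtain ⟨s, rfl⟩ := Ideal.Quotient.mk_surjective s
  change Ideal.Quotient.mk _ (X 1 * (X 0 - X 1) * r) = Ideal.Quotient.mk _ (X 0 * s) at hs
  rw [Ideal.Quotient.eq, Ideal.mem_span_singleton] at hs
  obtain ⟨t, ht⟩ := hs
  have hd : (X 0 : MvPowerSeries (Fin 2) ℂ) ∣ X 1 * (X 1 * r) :=
    ⟨X 1 * r - s - X 1 * (X 0 - X 1) * t, by linear_combination (-1) * ht⟩
  obtain ⟨v, hv⟩ := X_dvd_of8 (X_dvd_of8 hd)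
  exact ⟨Ideal.Quotient.mk _ v, by rw [hv]; rfl⟩

lemma x_smul8 (n : M8) : x8 • n = 0 := by
  obtain ⟨r, rfl⟩ := Ideal.Quotient.mk_surjective n
  change Ideal.Quotient.mk _ (x8 * r) = 0
  rw [Ideal.Quotient.eq_zero_iff_mem, Ideal.mem_span_singleton]
  exact ⟨r, rfl⟩

/-- The projection `R/(x) → R/(x, y²)`. -/
def q8 : M8 →ₗ[R8] (R8 ⧸ Ideal.span {x8, y8 ^ 2}) :=
  Submodule.mapQ (Ideal.span {x8}) (Ideal.span {x8, y8 ^ 2}) LinearMap.id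
    (by
      rw [Submodule.comap_id]
      exact Ideal.span_mono (by simp))

lemma q8_surj : Function.Surjective q8 := by
  intro z
  obtain ⟨r, rfl⟩ := Ideal.Quotient.mk_surjective z
  exact ⟨Ideal.Quotient.mk _ r, rfl⟩

lemma q8_ker (n : M8) : q8 n = 0 ↔ ∃ m : M8, (y8 * (x8 - y8)) • m = n := by
  obtain ⟨r, rfl⟩ := Ideal.Quotient.mk_surjective n
  constructor
  · intro h
    change Ideal.Quotient.mk _ r = 0 at h
    rw [Ideal.Quotient.eq_zero_iff_mem, Ideal.mem_span_pair] at h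
    obtain ⟨s, t, h⟩ := h
    refine ⟨Ideal.Quotient.mk _ (-t), ?_⟩
    change Ideal.Quotient.mk _ ((y8 * (x8 - y8)) * (-t)) = _
    rw [Ideal.Quotient.eq, Ideal.mem_span_singleton]
    exact ⟨-t * y8 - s, by rw [← h]; ring⟩
  · rintro ⟨m, hm⟩
    obtain ⟨m, rfl⟩ := Ideal.Quotient.mk_surjective m
    change Ideal.Quotient.mk _ ((y8 * (x8 - y8)) * m) = _ at hm
    rw [Ideal.Quotient.eq, Ideal.mem_span_singleton] at hm
    obtain ⟨s, hs⟩ := hm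
    change Ideal.Quotient.mk _ r = 0
    rw [Ideal.Quotient.eq_zero_iff_mem, Ideal.mem_span_pair]
    exact ⟨y8 * m - s, -m, by linear_combination hs⟩

end RingFacts

/-- For `R = ℂ[[x,y]]/(xy(x-y))` and `M = R/(x)` one has
`Tor₁^R(M,M) ≅ ℂ[[y]]/(y²)` (as an `R`-module, `ℂ[[y]]/(y²) = R/(x,y²)`) and
`Tor₂^R(M,M) = 0`. -/
theorem stmt_8 :
    Nonempty ((((Tor (ModuleCat.{0} R8) 1).obj (ModuleCat.of R8 M8)).obj
        (ModuleCat.of R8 M8)) ≅ ModuleCat.of R8 (R8 ⧸ Ideal.span {x8, y8 ^ 2})) ∧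
    Subsingleton (((Tor (ModuleCat.{0} R8) 2).obj (ModuleCat.of R8 M8)).obj
        (ModuleCat.of R8 M8)) := by
  constructor
  · exact tor1_generic mul_zero8 ker_x8 ker_y8 M8 (R8 ⧸ Ideal.span {x8, y8 ^ 2}) x_smul8
      q8 q8_surj q8_ker
  · exact tor2_generic mul_zero8 ker_x8 ker_y8 M8 inj8
end
end

section
/- Let R = C[[x,y]]/(xy(x-y)), M = R/(x), and N = R/(y). Then Tor_2^R(M, N) \cong C (the residue field) and Tor_1^R(M, N) = 0. -/
open CategoryTheory MvPowerSeries

noncomputable section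

/-- The ring `R = ℂ[[x,y]]/(xy(x-y))`. -/
abbrev R9 : Type :=
  MvPowerSeries (Fin 2) ℂ ⧸
    Ideal.span {(X 0 : MvPowerSeries (Fin 2) ℂ) * X 1 * (X 0 - X 1)}

def x9 : R9 := Ideal.Quotient.mk _ (X 0)
def y9 : R9 := Ideal.Quotient.mk _ (X 1)

/-- `M = R/(x)` -/
abbrev M9 : Type := R9 ⧸ Ideal.span {x9}
/-- `N = R/(y)` -/
abbrev N9 : Type := R9 ⧸ Ideal.span {y9}

section General

open Limits MonoidalCategory

variable {A : Type} [CommRing A]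

/-- Multiplication by `a` as an endomorphism in the category of modules. -/
noncomputable def mulEnd9 (M : ModuleCat.{0} A) (a : A) : M ⟶ M :=
  ModuleCat.ofHom (LinearMap.lsmul A M a)

lemma mulEnd9_apply (M : ModuleCat.{0} A) (a : A) (m : M) : (mulEnd9 M a).hom m = a • m := rfl

lemma mulEnd9_comp (M : ModuleCat.{0} A) (a b : A) (h : a * b = 0) :
    mulEnd9 M a ≫ mulEnd9 M b = 0 := by
  ext m
  change b • a • m = 0
  rw [smul_smul, mul_comm, h, zero_smul]

/-- The periodic complex `... → A --b--> A --a--> A`. -/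
noncomputable def cplx9 (a b : A) (h : a * b = 0) : ChainComplex (ModuleCat.{0} A) ℕ :=
  HomologicalComplex.alternatingConst (ModuleCat.of A A)
    (φ := mulEnd9 (ModuleCat.of A A) b) (ψ := mulEnd9 (ModuleCat.of A A) a)
    (mulEnd9_comp _ _ _ (by rw [mul_comm, h])) (mulEnd9_comp _ _ _ h)
    fun _ _ => ComplexShape.down_nat_odd_add

lemma cplx9_d_odd (a b : A) (h : a * b = 0) (n : ℕ) (hn : Even n) :
    (cplx9 a b h).d (n + 1) n = mulEnd9 (ModuleCat.of A A) a := by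
  have : ¬ Even (n + 1) := by rw [Nat.even_add_one]; simpa using hn
  simp [cplx9, HomologicalComplex.alternatingConst, this]

lemma cplx9_d_even (a b : A) (h : a * b = 0) (n : ℕ) (hn : ¬ Even n) :
    (cplx9 a b h).d (n + 1) n = mulEnd9 (ModuleCat.of A A) b := by
  have : Even (n + 1) := by rw [Nat.even_add_one]; simpa using hn
  simp [cplx9, HomologicalComplex.alternatingConst, this]

/-- The augmentation. -/
noncomputable def aug9 (a : A) : ModuleCat.of A A ⟶ ModuleCat.of A (A ⧸ Ideal.span {a}) :=
  ModuleCat.ofHom (Submodule.mkQ (Ideal.span {a}))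

lemma mulEnd9_aug9 (a : A) : mulEnd9 (ModuleCat.of A A) a ≫ aug9 a = 0 := by
  ext
  change Submodule.mkQ (Ideal.span {a}) (a • 1) = 0
  rw [Submodule.mkQ_apply, Submodule.Quotient.mk_eq_zero]
  exact Ideal.mul_mem_right _ _ (Ideal.mem_span_singleton_self a)

noncomputable def pi9 (a b : A) (h : a * b = 0) :
    cplx9 a b h ⟶ (ChainComplex.single₀ (ModuleCat.{0} A)).obj
      (ModuleCat.of A (A ⧸ Ideal.span {a})) :=
  ((cplx9 a b h).toSingle₀Equiv _).symm
    ⟨aug9 a, by rw [cplx9_d_odd a b h 0 (by simp)]; exact mulEnd9_aug9 a⟩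

lemma pi9_f_zero (a b : A) (h : a * b = 0) : (pi9 a b h).f 0 = aug9 a := by
  exact ChainComplex.toSingle₀Equiv_symm_apply_f_zero _ _

lemma exact9 (a b : A) (h : a * b = 0) (hab : ∀ r, a * r = 0 → b ∣ r) :
    (ShortComplex.mk (mulEnd9 (ModuleCat.of A A) b) (mulEnd9 (ModuleCat.of A A) a)
      (mulEnd9_comp _ _ _ (by rw [mul_comm, h]))).Exact := by
  rw [ShortComplex.moduleCat_exact_iff]
  intro r hr
  obtain ⟨s, hs⟩ := hab r hr
  exact ⟨s, hs.symm⟩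

lemma exactAug9 (a : A) :
    (ShortComplex.mk (mulEnd9 (ModuleCat.of A A) a) (aug9 a) (mulEnd9_aug9 a)).Exact := by
  rw [ShortComplex.moduleCat_exact_iff]
  intro r hr
  have : r ∈ Ideal.span {a} := (Submodule.Quotient.mk_eq_zero _).1 hr
  obtain ⟨s, hs⟩ := Ideal.mem_span_singleton.1 this
  exact ⟨s, hs.symm⟩

lemma quasiIso9 (a b : A) (h : a * b = 0) (hab : ∀ r, a * r = 0 → b ∣ r)
    (hba : ∀ r, b * r = 0 → a ∣ r) : QuasiIso (pi9 a b h) where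
  quasiIsoAt m := by
    cases m with
    | zero =>
      rw [ChainComplex.quasiIsoAt₀_iff, ShortComplex.quasiIso_iff_of_zeros' _ rfl rfl rfl]
      constructor
      · refine ShortComplex.exact_of_iso ?_ (exactAug9 a)
        refine ShortComplex.isoMk (Iso.refl _) (Iso.refl _) (Iso.refl _) ?_ ?_
        · change 𝟙 _ ≫ (cplx9 a b h).d 1 0 = mulEnd9 (ModuleCat.of A A) a ≫ 𝟙 _
          rw [cplx9_d_odd a b h 0 (by simp)]
          exact (Category.id_comp _).trans (Category.comp_id _).symm
        · change 𝟙 _ ≫ (pi9 a b h).f 0 = aug9 a ≫ 𝟙 _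
          rw [pi9_f_zero]
          exact (Category.id_comp _).trans (Category.comp_id _).symm
      · change Epi ((pi9 a b h).f 0)
        rw [pi9_f_zero]
        exact (ModuleCat.epi_iff_surjective _).2 (Submodule.mkQ_surjective _)
    | succ m =>
      rw [quasiIsoAt_iff_exactAt' (hL := ChainComplex.exactAt_succ_single_obj ..),
          HomologicalComplex.exactAt_iff' _ (m + 2) (m + 1) m (by simp) (by simp)]
      by_cases hm : Even m
      · refine ShortComplex.exact_of_iso ?_ (exact9 a b h hab)
        refine ShortComplex.isoMk (Iso.refl _) (Iso.refl _) (Iso.refl _) ?_ ?_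
        · change 𝟙 _ ≫ (cplx9 a b h).d (m+1+1) (m+1) = mulEnd9 (ModuleCat.of A A) b ≫ 𝟙 _
          rw [cplx9_d_even a b h _ (by rw [Nat.even_add_one]; simpa using hm)]
          exact (Category.id_comp _).trans (Category.comp_id _).symm
        · change 𝟙 _ ≫ (cplx9 a b h).d (m+1) m = mulEnd9 (ModuleCat.of A A) a ≫ 𝟙 _
          rw [cplx9_d_odd a b h _ hm]
          exact (Category.id_comp _).trans (Category.comp_id _).symm
      · refine ShortComplex.exact_of_iso ?_ (exact9 b a (by rw [mul_comm, h]) hba)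
        refine ShortComplex.isoMk (Iso.refl _) (Iso.refl _) (Iso.refl _) ?_ ?_
        · change 𝟙 _ ≫ (cplx9 a b h).d (m+1+1) (m+1) = mulEnd9 (ModuleCat.of A A) a ≫ 𝟙 _
          rw [cplx9_d_odd a b h _ (by rw [Nat.even_add_one]; simpa using hm)]
          exact (Category.id_comp _).trans (Category.comp_id _).symm
        · change 𝟙 _ ≫ (cplx9 a b h).d (m+1) m = mulEnd9 (ModuleCat.of A A) b ≫ 𝟙 _
          rw [cplx9_d_even a b h _ hm]
          exact (Category.id_comp _).trans (Category.comp_id _).symm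

noncomputable def res9 (a b : A) (h : a * b = 0) (hab : ∀ r, a * r = 0 → b ∣ r)
    (hba : ∀ r, b * r = 0 → a ∣ r) :
    ProjectiveResolution (ModuleCat.of A (A ⧸ Ideal.span {a})) where
  complex := cplx9 a b h
  projective _ := inferInstanceAs <| Projective (ModuleCat.of A A)
  π := pi9 a b h
  quasiIso := quasiIso9 a b h hab hba

lemma whisker9 (M : ModuleCat.{0} A) (a : A) :
    (ρ_ M).hom ≫ mulEnd9 M a = (M ◁ mulEnd9 (ModuleCat.of A A) a) ≫ (ρ_ M).hom := by
  apply ModuleCat.hom_ext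
  apply TensorProduct.ext'
  intro m r
  change a • (r • m) = (a • r) • m
  rw [smul_assoc]

noncomputable def torIso9 (a b : A) (h : a * b = 0) (hab : ∀ r, a * r = 0 → b ∣ r)
    (hba : ∀ r, b * r = 0 → a ∣ r) (M : ModuleCat.{0} A) (c d : A) (hcd : c * d = 0) (n : ℕ)
    (hc : (cplx9 a b h).d (n+2) (n+1) = mulEnd9 (ModuleCat.of A A) c)
    (hd : (cplx9 a b h).d (n+1) n = mulEnd9 (ModuleCat.of A A) d) :
    ((Tor (ModuleCat.{0} A) (n+1)).obj M).obj (ModuleCat.of A (A ⧸ Ideal.span {a})) ≅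
      (ShortComplex.mk (mulEnd9 M c) (mulEnd9 M d) (mulEnd9_comp _ _ _ hcd)).homology :=
  (res9 a b h hab hba).isoLeftDerivedObj ((tensoringLeft _).obj M) (n+1) ≪≫
    ShortComplex.homologyMapIso
      (HomologicalComplex.isoSc' _ (n+2) (n+1) n (by simp) (by simp) ≪≫
        ShortComplex.isoMk (ρ_ M) (ρ_ M) (ρ_ M)
          (by
            change (ρ_ M).hom ≫ mulEnd9 M c = (M ◁ (cplx9 a b h).d (n+2) (n+1)) ≫ (ρ_ M).hom
            rw [hc]; exact whisker9 M c)
          (by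
            change (ρ_ M).hom ≫ mulEnd9 M d = (M ◁ (cplx9 a b h).d (n+1) n) ≫ (ρ_ M).hom
            rw [hd]; exact whisker9 M d))

lemma tor1_9 (a b : A) (h : a * b = 0) (hab : ∀ r, a * r = 0 → b ∣ r)
    (hba : ∀ r, b * r = 0 → a ∣ r) (M : ModuleCat.{0} A) (hM : ∀ m : M, a • m = 0 → m = 0) :
    Subsingleton (((Tor (ModuleCat.{0} A) 1).obj M).obj
      (ModuleCat.of A (A ⧸ Ideal.span {a}))) := by
  have e := torIso9 a b h hab hba M b a (by rw [mul_comm, h]) 0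
    (cplx9_d_even a b h 1 (by simp)) (cplx9_d_odd a b h 0 (by simp))
  rw [← ModuleCat.isZero_iff_subsingleton]
  refine IsZero.of_iso ?_ e
  rw [← ShortComplex.exact_iff_isZero_homology, ShortComplex.moduleCat_exact_iff]
  intro m hm
  exact ⟨0, by rw [hM m hm]; simp⟩

lemma tor2_9 (a b : A) (h : a * b = 0) (hab : ∀ r, a * r = 0 → b ∣ r)
    (hba : ∀ r, b * r = 0 → a ∣ r) (M : ModuleCat.{0} A) (hM : ∀ m : M, b • m = 0)
    (Q : ModuleCat.{0} A) (q : M →ₗ[A] Q) (hq : Function.Surjective q)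
    (hk : ∀ m, q m = 0 ↔ ∃ m', a • m' = m) :
    Nonempty ((((Tor (ModuleCat.{0} A) 2).obj M).obj
      (ModuleCat.of A (A ⧸ Ideal.span {a}))) ≅ Q) := by
  have e := torIso9 a b h hab hba M a b h 1
    (cplx9_d_odd a b h 2 (by simp)) (cplx9_d_even a b h 1 (by simp))
  set S := ShortComplex.mk (mulEnd9 M a) (mulEnd9 M b) (mulEnd9_comp _ _ _ h) with hS
  let f : LinearMap.ker S.g.hom →ₗ[A] Q := q ∘ₗ (LinearMap.ker S.g.hom).subtype
  have hf : Function.Surjective f := fun z => by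
    obtain ⟨m, rfl⟩ := hq z
    exact ⟨⟨m, hM m⟩, rfl⟩
  have hker : LinearMap.range S.moduleCatToCycles = LinearMap.ker f := by
    ext ⟨m, hm⟩
    constructor
    · rintro ⟨m', hm'⟩
      exact (hk m).2 ⟨m', congrArg Subtype.val hm'⟩
    · intro h0
      obtain ⟨m', hm'⟩ := (hk m).1 h0
      exact ⟨m', Subtype.ext hm'⟩
  exact ⟨e ≪≫ S.moduleCatHomologyIso ≪≫
    ((Submodule.quotEquivOfEq _ _ hker).trans (f.quotKerEquivOfSurjective hf)).toModuleIso⟩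

end General

/-- The power series ring. -/
abbrev P9 : Type := MvPowerSeries (Fin 2) ℂ

lemma X0_dvd_9 (r : P9) (h : (X 0 : P9) ∣ X 1 * r) : (X 0 : P9) ∣ r := by
  rw [X_dvd_iff] at h ⊢
  intro m hm
  have := h (m + Finsupp.single 1 1) (by simp [hm])
  rwa [add_comm, X_def, coeff_add_monomial_mul, one_mul] at this

lemma Xne_9 (i : Fin 2) : (X i : P9) ≠ 0 :=
  nonZeroDivisors.ne_zero X_mem_nonzeroDivisors

lemma Xsub_9 : (X 0 - X 1 : P9) ≠ 0 := by
  intro h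
  have := congrArg (coeff (Finsupp.single 0 1)) h
  rw [map_sub, coeff_X, coeff_X] at this
  simp [Finsupp.single_left_inj] at this

lemma mk9_eq_zero (r : P9) : (Ideal.Quotient.mk _ r : R9) = 0 ↔
    (X 0 : P9) * X 1 * (X 0 - X 1) ∣ r := by
  rw [Ideal.Quotient.eq_zero_iff_mem, Ideal.mem_span_singleton]

lemma rel9 : y9 * (x9 * (x9 - y9)) = 0 := by
  have : y9 * (x9 * (x9 - y9)) = Ideal.Quotient.mk _ (X 1 * (X 0 * (X 0 - X 1))) := by
    simp [x9, y9]
  rw [this, mk9_eq_zero]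
  exact ⟨1, by ring⟩

lemma ann_y9 (r : R9) (h : y9 * r = 0) : x9 * (x9 - y9) ∣ r := by
  obtain ⟨r, rfl⟩ := Ideal.Quotient.mk_surjective r
  have h' : (Ideal.Quotient.mk _ (X 1 * r) : R9) = 0 := by rw [map_mul]; exact h
  rw [mk9_eq_zero] at h'
  obtain ⟨s, hs⟩ := h'
  have : r = X 0 * (X 0 - X 1) * s := mul_left_cancel₀ (Xne_9 1) (by rw [hs]; ring)
  exact ⟨Ideal.Quotient.mk _ s, by rw [this]; simp [x9, y9]⟩

lemma ann_b9 (r : R9) (h : x9 * (x9 - y9) * r = 0) : y9 ∣ r := by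
  obtain ⟨r, rfl⟩ := Ideal.Quotient.mk_surjective r
  have h' : (Ideal.Quotient.mk _ (X 0 * (X 0 - X 1) * r) : R9) = 0 := by
    rw [map_mul, map_mul, map_sub]; exact h
  rw [mk9_eq_zero] at h'
  obtain ⟨s, hs⟩ := h'
  have : r = X 1 * s :=
    mul_left_cancel₀ (mul_ne_zero (Xne_9 0) Xsub_9) (by rw [hs]; ring)
  exact ⟨Ideal.Quotient.mk _ s, by rw [this]; simp [y9]⟩

lemma y_reg9 (m : M9) (h : y9 • m = 0) : m = 0 := by
  obtain ⟨r, rfl⟩ := Submodule.Quotient.mk_surjective _ m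
  rw [← Submodule.Quotient.mk_smul, Submodule.Quotient.mk_eq_zero] at h
  rw [Submodule.Quotient.mk_eq_zero]
  obtain ⟨s, hs⟩ := Ideal.mem_span_singleton.1 h
  rw [Ideal.mem_span_singleton]
  obtain ⟨r, rfl⟩ := Ideal.Quotient.mk_surjective r
  obtain ⟨s, rfl⟩ := Ideal.Quotient.mk_surjective s
  have h' : (Ideal.Quotient.mk _ (X 1 * r - X 0 * s) : R9) = 0 := by
    rw [map_sub, map_mul, map_mul, sub_eq_zero]; exact hs
  rw [mk9_eq_zero] at h'
  obtain ⟨t, ht⟩ := h'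
  obtain ⟨u, hu⟩ := X0_dvd_9 r ⟨s + X 1 * (X 0 - X 1) * t, by linear_combination ht⟩
  exact ⟨Ideal.Quotient.mk _ u, by rw [hu, map_mul]; rfl⟩

lemma b_zero9 (m : M9) : (x9 * (x9 - y9)) • m = 0 := by
  obtain ⟨r, rfl⟩ := Submodule.Quotient.mk_surjective _ m
  rw [← Submodule.Quotient.mk_smul, Submodule.Quotient.mk_eq_zero, Ideal.mem_span_singleton]
  exact ⟨(x9 - y9) * r, by rw [smul_eq_mul]; ring⟩

lemma le9 : Ideal.span {x9} ≤ Ideal.span {x9, y9} :=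
  Ideal.span_mono (by simp)

/-- For `R = ℂ[[x,y]]/(xy(x-y))`, `M = R/(x)` and `N = R/(y)` one has
`Tor₂^R(M,N) ≅ ℂ` (the residue field, i.e. `R/(x,y)` as an `R`-module) and
`Tor₁^R(M,N) = 0`. -/
theorem stmt_9 :
    Nonempty ((((Tor (ModuleCat.{0} R9) 2).obj (ModuleCat.of R9 M9)).obj
        (ModuleCat.of R9 N9)) ≅ ModuleCat.of R9 (R9 ⧸ Ideal.span {x9, y9})) ∧
    Subsingleton (((Tor (ModuleCat.{0} R9) 1).obj (ModuleCat.of R9 M9)).obj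
        (ModuleCat.of R9 N9)) := by
  refine ⟨?_, tor1_9 y9 (x9 * (x9 - y9)) rel9 ann_y9 ann_b9 _ y_reg9⟩
  refine tor2_9 y9 (x9 * (x9 - y9)) rel9 ann_y9 ann_b9 (ModuleCat.of R9 M9) b_zero9
    (ModuleCat.of R9 (R9 ⧸ Ideal.span {x9, y9})) (Submodule.factor le9)
    (Submodule.factor_surjective le9) ?_
  intro m
  obtain ⟨r, rfl⟩ := Submodule.Quotient.mk_surjective _ m
  constructor
  · intro h
    have h' : r ∈ Ideal.span {x9, y9} := (Submodule.Quotient.mk_eq_zero _).1 h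
    obtain ⟨s, t, hst⟩ := Ideal.mem_span_pair.1 h'
    refine ⟨Submodule.Quotient.mk t, ?_⟩
    refine (Submodule.Quotient.eq (Ideal.span {x9})).2 ?_
    rw [Ideal.mem_span_singleton]
    exact ⟨-s, by
      change y9 * t - r = x9 * -s
      rw [← hst]; ring⟩
  · rintro ⟨m', hm'⟩
    obtain ⟨t, rfl⟩ := Submodule.Quotient.mk_surjective _ m'
    have h1 := (Submodule.Quotient.eq (Ideal.span {x9})).1 hm'
    obtain ⟨s, hs⟩ := Ideal.mem_span_singleton.1 h1
    refine (Submodule.Quotient.mk_eq_zero (Ideal.span {x9, y9})).2 ?_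
    change y9 * t - r = x9 * s at hs
    change r ∈ _
    exact Ideal.mem_span_pair.2 ⟨-s, t, by linear_combination hs⟩
end
end

section
/- Let R be a one-dimensional Cohen-Macaulay local ring with associated primes p_1, ..., p_n, and let M be a finitely generated R-module. Then the class [M] is zero in the reduced rationalized Grothendieck group G(R)/Z[R] \otimes Q if and only if there exists a rational number r such that length_{R_{p_j}}(M_{p_j}) = r \cdot length_{R_{p_j}}(R_{p_j}) for every j. -/
open CategoryTheory IsLocalRing

open scoped TensorProduct

noncomputable section

variable (R : Type) [CommRing R]

/-- Objects: finitely generated `R`-modules (in `Type 0`). -/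
def FGMod : Type 1 := {M : ModuleCat.{0} R // Module.Finite R M}

/-- The subgroup of relations coming from short exact sequences. -/
def grothRels : AddSubgroup (FreeAbelianGroup (FGMod R)) :=
  AddSubgroup.closure {x | ∃ (A B C : FGMod R) (f : A.1 →ₗ[R] B.1) (g : B.1 →ₗ[R] C.1),
    Function.Injective f ∧ Function.Surjective g ∧ Function.Exact f g ∧
    x = FreeAbelianGroup.of B - FreeAbelianGroup.of A - FreeAbelianGroup.of C}

/-- The Grothendieck group of finitely generated `R`-modules. -/
def GGroup : Type 1 := FreeAbelianGroup (FGMod R) ⧸ grothRels R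

instance : AddCommGroup (GGroup R) :=
  inferInstanceAs (AddCommGroup (FreeAbelianGroup (FGMod R) ⧸ grothRels R))

/-- The class `[M]` of a finitely generated module in the Grothendieck group. -/
def gclass (M : Type) [AddCommGroup M] [Module R M] [hM : Module.Finite R M] :
    GGroup R :=
  QuotientAddGroup.mk (FreeAbelianGroup.of
    ⟨ModuleCat.of R M, by exact hM⟩)

/-- The reduced Grothendieck group `G(R)/ℤ·[R]`. -/
def GBar : Type 1 := GGroup R ⧸ AddSubgroup.zmultiples (gclass R R)

instance : AddCommGroup (GBar R) :=
  inferInstanceAs (AddCommGroup (GGroup R ⧸ AddSubgroup.zmultiples (gclass R R)))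

/-- The class of `M` in the reduced rationalized Grothendieck group
`(G(R)/ℤ[R]) ⊗_ℤ ℚ`. -/
def gbarQClass (M : Type) [AddCommGroup M] [Module R M] [Module.Finite R M] :
    ℚ ⊗[ℤ] GBar R :=
  (1 : ℚ) ⊗ₜ[ℤ] (QuotientAddGroup.mk (gclass R M) : GBar R)

end

/-- The length of a module: the Krull dimension of its lattice of submodules. -/
noncomputable def moduleLength (A : Type) [CommRing A]
    (M : Type) [AddCommGroup M] [Module A M] : WithBot (WithTop ℕ) :=
  Order.krullDim (Submodule A M)


/-! ### Basic relations in the Grothendieck group -/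

section Groth

variable {R : Type} [CommRing R]

lemma gclass_exact (A B C : Type) [AddCommGroup A] [Module R A] [Module.Finite R A]
    [AddCommGroup B] [Module R B] [Module.Finite R B]
    [AddCommGroup C] [Module R C] [Module.Finite R C]
    (f : A →ₗ[R] B) (g : B →ₗ[R] C) (hf : Function.Injective f) (hg : Function.Surjective g)
    (h : Function.Exact f g) : gclass R B = gclass R A + gclass R C := by
  have key : FreeAbelianGroup.of (⟨ModuleCat.of R B, ‹Module.Finite R B›⟩ : FGMod R) -
      FreeAbelianGroup.of (⟨ModuleCat.of R A, ‹Module.Finite R A›⟩ : FGMod R) -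
      FreeAbelianGroup.of (⟨ModuleCat.of R C, ‹Module.Finite R C›⟩ : FGMod R) ∈ grothRels R :=
    AddSubgroup.subset_closure ⟨_, _, _, f, g, hf, hg, h, rfl⟩
  have : (grothRels R).Normal := ⟨fun n hn g => by rwa [add_comm g n, add_neg_cancel_right]⟩
  have := (QuotientAddGroup.eq_zero_iff (N := grothRels R) _).2 key
  have h2 : gclass R B - gclass R A - gclass R C = 0 := this
  rw [sub_sub, sub_eq_zero] at h2
  exact h2

lemma gclass_subsingleton (A : Type) [AddCommGroup A] [Module R A] [Module.Finite R A]
    [Subsingleton A] : gclass R A = 0 := by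
  have := gclass_exact (R := R) A A A 0 0 (fun _ _ _ => Subsingleton.elim _ _)
    (fun x => ⟨0, Subsingleton.elim _ _⟩) (fun x => ⟨fun _ => ⟨0, Subsingleton.elim _ _⟩,
      fun _ => rfl⟩)
  simpa using this

lemma gclass_equiv (A B : Type) [AddCommGroup A] [Module R A] [Module.Finite R A]
    [AddCommGroup B] [Module R B] [Module.Finite R B] (e : A ≃ₗ[R] B) :
    gclass R A = gclass R B := by
  have := gclass_exact (R := R) A B PUnit e.toLinearMap 0 e.injective
    (Function.surjective_to_subsingleton _) ((e.toLinearMap.exact_zero_iff_surjective _).2 e.surjective)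
  rw [this, gclass_subsingleton PUnit, add_zero]

/-- Any additive `ℤ`-valued function on finite modules factors through the Grothendieck group. -/
lemma exists_groth_hom (φ : FGMod R → ℤ)
    (hφ : ∀ (A B C : FGMod R) (f : A.1 →ₗ[R] B.1) (g : B.1 →ₗ[R] C.1),
      Function.Injective f → Function.Surjective g → Function.Exact f g → φ B = φ A + φ C) :
    ∃ Φ : GGroup R →+ ℤ, ∀ (M : Type) [AddCommGroup M] [Module R M] [hM : Module.Finite R M],
      Φ (gclass R M) = φ ⟨ModuleCat.of R M, hM⟩ := by
  have : (grothRels R).Normal := ⟨fun n hn g => by rwa [add_comm g n, add_neg_cancel_right]⟩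
  refine ⟨QuotientAddGroup.lift (grothRels R) (FreeAbelianGroup.lift φ) ?_, ?_⟩
  · unfold grothRels
    rw [AddSubgroup.closure_le]
    rintro x ⟨A, B, C, f, g, hf, hg, h, rfl⟩
    have := hφ A B C f g hf hg h
    simp [this]
  · intro M _ _ hM
    exact FreeAbelianGroup.lift_apply_of _ _

end Groth

lemma one_tmul_eq_zero_iff {A : Type*} [AddCommGroup A] (x : A) :
    (1 : ℚ) ⊗ₜ[ℤ] x = 0 ↔ ∃ n : ℤ, n ≠ 0 ∧ n • x = 0 := by
  have : IsLocalizedModule (nonZeroDivisors ℤ) (TensorProduct.mk ℤ ℚ A 1) :=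
    (isLocalizedModule_iff_isBaseChange (nonZeroDivisors ℤ) ℚ _).2 (TensorProduct.isBaseChange ℤ A ℚ)
  have h := IsLocalizedModule.eq_zero_iff (nonZeroDivisors ℤ) (TensorProduct.mk ℤ ℚ A 1) (m := x)
  rw [TensorProduct.mk_apply] at h
  rw [h]
  constructor
  · rintro ⟨c, hc⟩
    exact ⟨c, nonZeroDivisors.ne_zero c.2, hc⟩
  · rintro ⟨n, hn, h⟩
    exact ⟨⟨n, mem_nonZeroDivisors_of_ne_zero hn⟩, h⟩

lemma gbarQClass_eq_zero_iff (R : Type) [CommRing R] (M : Type) [AddCommGroup M] [Module R M]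
    [Module.Finite R M] :
    gbarQClass R M = 0 ↔ ∃ n m : ℤ, n ≠ 0 ∧ n • gclass R M = m • gclass R R := by
  refine (one_tmul_eq_zero_iff (A := GBar R) _).trans ?_
  constructor
  · rintro ⟨n, hn, h⟩
    have h2 : ((n • gclass R M : GGroup R) : GGroup R ⧸ AddSubgroup.zmultiples (gclass R R)) = 0 := h
    rw [QuotientAddGroup.eq_zero_iff, AddSubgroup.mem_zmultiples_iff] at h2
    obtain ⟨m, hm⟩ := h2
    exact ⟨n, m, hn, hm.symm⟩
  · rintro ⟨n, m, hn, h⟩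
    refine ⟨n, hn, ?_⟩
    have h2 : ((n • gclass R M : GGroup R) : GGroup R ⧸ AddSubgroup.zmultiples (gclass R R)) = 0 := by
      rw [QuotientAddGroup.eq_zero_iff, AddSubgroup.mem_zmultiples_iff]
      exact ⟨m, h.symm⟩
    exact h2

/-! ### Local lengths -/

section Len

variable {R : Type} [CommRing R]

/-- Length of the localization at `p`. -/
noncomputable def lam (p : PrimeSpectrum R) (M : Type) [AddCommGroup M] [Module R M] : ℕ :=
  (Module.length (Localization p.asIdeal.primeCompl)
    (LocalizedModule p.asIdeal.primeCompl M)).toNat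

lemma coe_lam [IsNoetherianRing R] (p : PrimeSpectrum R)
    [IsArtinianRing (Localization p.asIdeal.primeCompl)]
    (M : Type) [AddCommGroup M] [Module R M] [Module.Finite R M] :
    (lam p M : ℕ∞) = Module.length (Localization p.asIdeal.primeCompl)
    (LocalizedModule p.asIdeal.primeCompl M) := by
  apply ENat.natCast_toNat
  have : Module.Finite (Localization p.asIdeal.primeCompl)
    (LocalizedModule p.asIdeal.primeCompl M) := inferInstance
  exact Module.length_ne_top

lemma lam_exact [IsNoetherianRing R] (p : PrimeSpectrum R)
    [IsArtinianRing (Localization p.asIdeal.primeCompl)]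
    (A B C : Type) [AddCommGroup A] [Module R A] [Module.Finite R A]
    [AddCommGroup B] [Module R B] [Module.Finite R B]
    [AddCommGroup C] [Module R C] [Module.Finite R C]
    (f : A →ₗ[R] B) (g : B →ₗ[R] C) (hf : Function.Injective f) (hg : Function.Surjective g)
    (h : Function.Exact f g) : lam p B = lam p A + lam p C := by
  have := Module.length_eq_add_of_exact
    (LocalizedModule.map p.asIdeal.primeCompl f) (LocalizedModule.map p.asIdeal.primeCompl g)
    (LocalizedModule.map_injective _ _ hf) (LocalizedModule.map_surjective _ _ hg)
    (LocalizedModule.map_exact _ _ _ h)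
  rw [← coe_lam, ← coe_lam, ← coe_lam] at this
  exact_mod_cast this

lemma lam_subsingleton (p : PrimeSpectrum R) (M : Type) [AddCommGroup M] [Module R M]
    [Subsingleton M] : lam p M = 0 := by
  have : Subsingleton (LocalizedModule p.asIdeal.primeCompl M) := inferInstance
  simp [lam]

lemma lam_equiv (p : PrimeSpectrum R)
    (A B : Type) [AddCommGroup A] [Module R A]
    [AddCommGroup B] [Module R B] (e : A ≃ₗ[R] B) : lam p A = lam p B := by
  have hinj := LocalizedModule.map_injective p.asIdeal.primeCompl e.toLinearMap e.injective
  have hsur := LocalizedModule.map_surjective p.asIdeal.primeCompl e.toLinearMap e.surjective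
  unfold lam
  rw [(LinearEquiv.ofBijective _ ⟨hinj, hsur⟩).length_eq]

lemma lam_quotient_of_not_le (p q : PrimeSpectrum R) (h : ¬ q.asIdeal ≤ p.asIdeal) :
    lam p (R ⧸ q.asIdeal) = 0 := by
  have : Subsingleton (LocalizedModule p.asIdeal.primeCompl (R ⧸ q.asIdeal)) := by
    rw [LocalizedModule.subsingleton_iff]
    obtain ⟨r, hr, hr'⟩ := SetLike.not_le_iff_exists.1 h
    intro m
    obtain ⟨m, rfl⟩ := Ideal.Quotient.mk_surjective m
    refine ⟨r, hr', ?_⟩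
    change Ideal.Quotient.mk q.asIdeal (r * m) = 0
    exact Ideal.Quotient.eq_zero_iff_mem.2 (Ideal.mul_mem_right _ _ hr)
  simp [lam]

lemma lam_quotient_self (p : PrimeSpectrum R) : lam p (R ⧸ p.asIdeal) = 1 := by
  have key : ∀ (r : R) (s : p.asIdeal.primeCompl),
      LocalizedModule.mk (Ideal.Quotient.mk p.asIdeal r) s = 0 ↔ r ∈ p.asIdeal := by
    intro r s
    rw [← LocalizedModule.zero_mk s, LocalizedModule.mk_eq]
    constructor
    · rintro ⟨c, hc⟩
      have hc0 : c • (Ideal.Quotient.mk p.asIdeal r) = 0 := by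
        have h1 : s • c • (Ideal.Quotient.mk p.asIdeal r) = s • (0 : R ⧸ p.asIdeal) := by
          rw [smul_comm, hc]; simp
        have h2 : Ideal.Quotient.mk p.asIdeal (s.1 * (c.1 * r)) = 0 := by
          rw [smul_zero] at h1; exact h1
        have h3 := (p.isPrime.mem_or_mem (Ideal.Quotient.eq_zero_iff_mem.1 h2)).resolve_left s.2
        exact Ideal.Quotient.eq_zero_iff_mem.2 h3
      have hc : Ideal.Quotient.mk p.asIdeal (c.1 * r) = 0 := hc0
      exact (p.isPrime.mem_or_mem (Ideal.Quotient.eq_zero_iff_mem.1 hc)).resolve_left c.2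
    · intro h
      exact ⟨1, by simp [Ideal.Quotient.eq_zero_iff_mem.2 h]⟩
  have : IsSimpleModule (Localization p.asIdeal.primeCompl)
      (LocalizedModule p.asIdeal.primeCompl (R ⧸ p.asIdeal)) := by
    rw [isSimpleModule_iff_toSpanSingleton_surjective]
    constructor
    · refine ⟨LocalizedModule.mk (Ideal.Quotient.mk p.asIdeal 1) 1, 0, ?_⟩
      rw [Ne, key]
      exact fun h => p.isPrime.ne_top ((Ideal.eq_top_iff_one _).2 h)
    · intro x hx y
      induction x using LocalizedModule.induction_on with | h a s =>
      induction y using LocalizedModule.induction_on with | h b t =>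
      obtain ⟨a, rfl⟩ := Ideal.Quotient.mk_surjective a
      obtain ⟨b, rfl⟩ := Ideal.Quotient.mk_surjective b
      rw [Ne, key] at hx
      refine ⟨Localization.mk (b * s) (t * ⟨a, hx⟩), ?_⟩
      rw [LinearMap.toSpanSingleton_apply, LocalizedModule.mk_smul_mk, LocalizedModule.mk_eq]
      refine ⟨1, ?_⟩
      simp only [one_smul]
      change Ideal.Quotient.mk p.asIdeal (t * ((b * s) * a)) =
        Ideal.Quotient.mk p.asIdeal ((t * a * s) * b)
      congr 1
      ring
  simp [lam, Module.length_eq_one]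

lemma moduleLength_eq [IsNoetherianRing R] (p : PrimeSpectrum R)
    [IsArtinianRing (Localization p.asIdeal.primeCompl)]
    (M : Type) [AddCommGroup M] [Module R M] [Module.Finite R M] :
    moduleLength (Localization p.asIdeal.primeCompl) (LocalizedModule p.asIdeal.primeCompl M)
      = (lam p M : WithBot (WithTop ℕ)) := by
  unfold moduleLength
  have := Module.coe_length (Localization p.asIdeal.primeCompl)
    (LocalizedModule p.asIdeal.primeCompl M)
  rw [← coe_lam] at this
  exact this.symm

lemma moduleLength_self_eq [IsNoetherianRing R] (p : PrimeSpectrum R)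
    [IsArtinianRing (Localization p.asIdeal.primeCompl)] :
    moduleLength (Localization p.asIdeal.primeCompl) (Localization p.asIdeal.primeCompl)
      = (lam p R : WithBot (WithTop ℕ)) := by
  rw [← moduleLength_eq]

end Len

/-! ### Modules of finite length -/

lemma gclass_finiteLength (R : Type) [CommRing R] [IsNoetherianRing R] [IsLocalRing R]
    (N : Type) [AddCommGroup N] [Module R N] (hN : IsFiniteLength R N) (hfin : Module.Finite R N) :
    ∃ c : ℕ, gclass R N = c • gclass R (R ⧸ maximalIdeal R) ∧ (Nontrivial N → 0 < c) := by
  induction hN with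
  | of_subsingleton =>
    refine ⟨0, by simp [gclass_subsingleton], fun h => ?_⟩
    exact (not_subsingleton_iff_nontrivial.2 h ‹_›).elim
  | @of_simple_quotient M _ _ N hs _ ih =>
    obtain ⟨c, hc, -⟩ := ih inferInstance
    refine ⟨c + 1, ?_, fun _ => Nat.succ_pos _⟩
    obtain ⟨I, hI, ⟨e⟩⟩ := isSimpleModule_iff_quot_maximal.1 hs
    obtain rfl := IsLocalRing.eq_maximalIdeal hI
    rw [gclass_exact N M (M ⧸ N) N.subtype N.mkQ N.injective_subtype N.mkQ_surjective
      (LinearMap.exact_subtype_mkQ N), hc, gclass_equiv _ _ e, add_smul, one_smul]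

lemma gclass_residue_torsion (R : Type) [CommRing R] [IsNoetherianRing R] [IsLocalRing R]
    [Ring.KrullDimLE 1 R] (x : R) (hx : x ∈ maximalIdeal R) (hx' : x ∈ nonZeroDivisors R) :
    ∃ c : ℕ, 0 < c ∧ c • gclass R (R ⧸ maximalIdeal R) = 0 := by
  obtain ⟨c, hc, hpos⟩ := gclass_finiteLength R (R ⧸ Ideal.span {x})
    (isFiniteLength_quotient_span_singleton R hx') inferInstance
  refine ⟨c, hpos ?_, ?_⟩
  · apply Ideal.Quotient.nontrivial_iff.2
    intro h
    rw [Ideal.span_singleton_eq_top] at h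
    exact (IsLocalRing.mem_maximalIdeal x).1 hx h
  · rw [← hc]
    have hinj : Function.Injective (LinearMap.mulLeft R x) := by
      intro a b hab
      exact (mul_cancel_left_mem_nonZeroDivisors hx').1 hab
    have := gclass_exact R R (R ⧸ Ideal.span {x}) (LinearMap.mulLeft R x)
      (Submodule.mkQ (Ideal.span {x})) hinj (Submodule.mkQ_surjective _) (by
        intro y
        change Ideal.Quotient.mk (Ideal.span {x}) y = 0 ↔ _
        rw [Ideal.Quotient.eq_zero_iff_mem, Ideal.mem_span_singleton]
        constructor
        · rintro ⟨z, rfl⟩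
          exact ⟨z, rfl⟩
        · rintro ⟨z, rfl⟩
          exact ⟨z, rfl⟩)
    simpa using this

/-! ### Associated primes -/

section Ass

variable {R : Type} [CommRing R] [IsNoetherianRing R] [IsLocalRing R] [Ring.KrullDimLE 1 R]

lemma ass_ne_max (x : R) (hx : x ∈ maximalIdeal R) (hx' : x ∈ nonZeroDivisors R)
    (p : Ideal R) (hp : p ∈ associatedPrimes R R) : p ≠ maximalIdeal R := by
  rintro rfl
  have : x ∈ (nonZeroDivisors R : Set R)ᶜ := by
    rw [← biUnion_associatedPrimes_eq_compl_nonZeroDivisors]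
    exact Set.mem_iUnion₂_of_mem hp hx
  exact this hx'

lemma minimal_of_ne_max (p : Ideal R) [p.IsPrime] (h : p ≠ maximalIdeal R) :
    p ∈ minimalPrimes R := by
  rcases Ring.krullDimLE_one_iff.1 ‹Ring.KrullDimLE 1 R› p ‹_› with h1 | h1
  · exact h1
  · exact (h (IsLocalRing.eq_maximalIdeal h1)).elim

lemma ass_of_ne_max (p : Ideal R) [p.IsPrime] (h : p ≠ maximalIdeal R) :
    p ∈ associatedPrimes R R := by
  apply Module.associatedPrimes.minimalPrimes_annihilator_subset_associatedPrimes R R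
  have : Module.annihilator R R = ⊥ := Module.annihilator_eq_bot.2 inferInstance
  rw [this]
  exact minimal_of_ne_max p h

lemma artinian_of_minimal (p : Ideal R) [p.IsPrime] (h : p ∈ minimalPrimes R) :
    IsArtinianRing (Localization p.primeCompl) := by
  have h0 : p.height = 0 := Ideal.height_eq_zero_iff.2 h
  have h1 := IsLocalization.AtPrime.ringKrullDim_eq_height p (Localization p.primeCompl)
  have : IsNoetherianRing (Localization p.primeCompl) := inferInstance
  rw [isArtinianRing_iff_krullDimLE_zero, Ring.KrullDimLE, Order.krullDimLE_iff, ← ringKrullDim, h1, h0]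
  simp

end Ass

/-- The classes of finite modules, modulo the residue field, are determined by local lengths. -/
lemma gclass_decomp (R : Type) [CommRing R] [IsNoetherianRing R] [IsLocalRing R]
    [Ring.KrullDimLE 1 R] (S : Finset (PrimeSpectrum R))
    (hS : ∀ p, p ∈ S ↔ p.asIdeal ≠ maximalIdeal R)
    (M : Type) [AddCommGroup M] [Module R M] [hM : Module.Finite R M] :
    ∃ c : ℕ, gclass R M = ∑ p ∈ S, lam p M • gclass R (R ⧸ p.asIdeal)
      + c • gclass R (R ⧸ maximalIdeal R) := by
  have hart : ∀ p ∈ S, IsArtinianRing (Localization p.asIdeal.primeCompl) := fun p hp =>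
    artinian_of_minimal _ (minimal_of_ne_max _ ((hS p).1 hp))
  induction hM using IsNoetherianRing.induction_on_isQuotientEquivQuotientPrime R with
  | subsingleton N => exact ⟨0, by simp [gclass_subsingleton, lam_subsingleton]⟩
  | quotient N q e =>
    rw [gclass_equiv _ _ e]
    simp only [lam_equiv _ _ _ e]
    by_cases hq : q.asIdeal = maximalIdeal R
    · refine ⟨1, ?_⟩
      rw [Finset.sum_eq_zero, zero_add, one_smul]
      · have hq2 : q = ⟨maximalIdeal R, inferInstance⟩ := PrimeSpectrum.ext hq
        subst hq2
        rfl
      · intro p hp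
        rw [lam_quotient_of_not_le, zero_smul]
        intro hle
        rw [hq] at hle
        exact (hS p).1 hp ((IsLocalRing.maximalIdeal.isMaximal R).eq_of_le p.isPrime.ne_top hle).symm
    · refine ⟨0, ?_⟩
      rw [zero_smul, add_zero, Finset.sum_eq_single q]
      · rw [lam_quotient_self, one_smul]
      · intro p hp hpq
        rw [lam_quotient_of_not_le, zero_smul]
        intro hle
        have hmin := minimal_of_ne_max p.asIdeal ((hS p).1 hp)
        apply hpq
        apply PrimeSpectrum.ext
        exact le_antisymm (hmin.2 ⟨q.isPrime, bot_le⟩ hle) hle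
      · intro h
        exact (h ((hS q).2 hq)).elim
  | exact A B C f g hf hg h hA hC =>
    obtain ⟨a, ha⟩ := hA
    obtain ⟨c, hc⟩ := hC
    refine ⟨a + c, ?_⟩
    rw [gclass_exact A B C f g hf hg h, ha, hc]
    have : ∑ p ∈ S, lam p B • gclass R (R ⧸ p.asIdeal) =
        ∑ p ∈ S, lam p A • gclass R (R ⧸ p.asIdeal) +
        ∑ p ∈ S, lam p C • gclass R (R ⧸ p.asIdeal) := by
      rw [← Finset.sum_add_distrib]
      refine Finset.sum_congr rfl fun p hp => ?_
      have := hart p hp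
      rw [lam_exact p A B C f g hf hg h, add_smul]
    rw [this, add_smul]
    abel

/-- over a one-dimensional Cohen-Macaulay local ring `R` with associated
primes `p₁, …, pₙ`, a finitely generated module `M` has zero class in the reduced
rationalized Grothendieck group iff there is a rational number `r` with
`length(M_p) = r · length(R_p)` for every associated prime `p`. -/
theorem stmt_11 (R : Type) [CommRing R] [IsNoetherianRing R] [IsLocalRing R]
    (hdim : ringKrullDim R = 1)
    -- Cohen-Macaulayness: the maximal ideal contains a non zero-divisor
    (hCM : ∃ x ∈ maximalIdeal R, x ∈ nonZeroDivisors R)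
    (M : Type) [AddCommGroup M] [Module R M] [Module.Finite R M] :
    gbarQClass R M = 0 ↔
    ∃ r : ℚ, ∀ (p : Ideal R) (hp : p ∈ associatedPrimes R R),
      haveI : p.IsPrime := hp.1
      ∃ a b : ℕ,
        moduleLength (Localization p.primeCompl) (LocalizedModule p.primeCompl M) =
          (a : WithBot (WithTop ℕ)) ∧
        moduleLength (Localization p.primeCompl) (Localization p.primeCompl) =
          (b : WithBot (WithTop ℕ)) ∧
        (a : ℚ) = r * (b : ℚ) := by
  have hK : Ring.KrullDimLE 1 R := by
    rw [Ring.KrullDimLE, Order.krullDimLE_iff, ← ringKrullDim, hdim]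
    simp
  obtain ⟨x, hx, hx'⟩ := hCM
  have hart : ∀ p : PrimeSpectrum R, p.asIdeal ∈ associatedPrimes R R →
      IsArtinianRing (Localization p.asIdeal.primeCompl) := fun p hp =>
    artinian_of_minimal _ (minimal_of_ne_max _ (ass_ne_max x hx hx' _ hp))
  rw [gbarQClass_eq_zero_iff]
  constructor
  · rintro ⟨n, m, hn, h⟩
    refine ⟨(m : ℚ) / n, fun p hp => ?_⟩
    have hpp : p.IsPrime := hp.1
    let P : PrimeSpectrum R := ⟨p, hpp⟩
    have := hart P hp
    refine ⟨lam P M, lam P R, moduleLength_eq P M, moduleLength_self_eq P, ?_⟩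
    obtain ⟨Φ, hΦ⟩ := exists_groth_hom (R := R) (fun A => (lam P A.1 : ℤ)) (by
      intro A B C f g hf hg h
      have := A.2
      have := B.2
      have := C.2
      exact_mod_cast lam_exact P A.1 B.1 C.1 f g hf hg h)
    have h2 := congrArg Φ h
    rw [map_zsmul, map_zsmul, hΦ, hΦ] at h2
    have h3 : n * (lam P M : ℤ) = m * (lam P R : ℤ) := by simpa using h2
    have h4 : (n : ℚ) * lam P M = m * lam P R := by exact_mod_cast h3
    have hn' : (n : ℚ) ≠ 0 := by exact_mod_cast hn
    field_simp
    linarith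
  · rintro ⟨r, hr⟩
    have hfin : {p : PrimeSpectrum R | p.asIdeal ∈ associatedPrimes R R}.Finite :=
      Set.Finite.preimage (fun a _ b _ h => PrimeSpectrum.ext h) (associatedPrimes.finite R R)
    let S := hfin.toFinset
    have hS : ∀ p, p ∈ S ↔ p.asIdeal ≠ maximalIdeal R := by
      intro p
      simp only [S, Set.Finite.mem_toFinset, Set.mem_ofPred_eq]
      exact ⟨ass_ne_max x hx hx' _, ass_of_ne_max _⟩
    have hlam : ∀ p ∈ S, (r.den : ℤ) * lam p M = r.num * lam p R := by
      intro p hp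
      have hp' : p.asIdeal ∈ associatedPrimes R R := by simpa [S] using hp
      have := hart p hp'
      obtain ⟨a, b, ha, hb, hab⟩ := hr p.asIdeal hp'
      have ha' := (moduleLength_eq p M).symm.trans ha
      have hb' := (moduleLength_self_eq p).symm.trans hb
      have ha2 : lam p M = a := by exact_mod_cast ha'
      have hb2 : lam p R = b := by exact_mod_cast hb'
      rw [ha2, hb2]
      have hd : (r.den : ℚ) ≠ 0 := by exact_mod_cast r.den_nz
      have : (r.den : ℚ) * a = r.num * b := by
        rw [hab, ← mul_assoc, mul_comm (r.den : ℚ) r, Rat.mul_den_eq_num]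
      exact_mod_cast this
    obtain ⟨k, hk, hk0⟩ := gclass_residue_torsion R x hx hx'
    obtain ⟨c, hc⟩ := gclass_decomp R S hS M
    obtain ⟨d, hd⟩ := gclass_decomp R S hS R
    refine ⟨k * r.den, k * r.num, ?_, ?_⟩
    · have := r.den_nz
      positivity
    · have hk0' : (k : ℤ) • gclass R (R ⧸ maximalIdeal R) = 0 := by
        rw [natCast_zsmul]; exact hk0
      have hkill : ∀ (u : ℤ) (v : ℕ), ((k : ℤ) * u) • (v • gclass R (R ⧸ maximalIdeal R)) = 0 := by
        intro u v
        have : (k : ℤ) * u * v = (u * v) * k := by ring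
        rw [← natCast_zsmul _ v, smul_smul, this, mul_smul, hk0', smul_zero]
      rw [hc, hd, smul_add, smul_add, hkill, hkill, add_zero, add_zero, Finset.smul_sum,
        Finset.smul_sum]
      refine Finset.sum_congr rfl fun p hp => ?_
      rw [← natCast_zsmul, ← natCast_zsmul, smul_smul, smul_smul, mul_assoc, mul_assoc, hlam p hp]
end

section
/- Let R be a one-dimensional reduced Cohen-Macaulay local ring and M a finitely generated R-module. Then M has a rank (i.e., there exists an integer r with M_p \cong R_p^r for all associated primes p of R) if and only if [M] = 0 in the reduced rationalized Grothendieck group (G(R)/Z[R]) \otimes_Z Q. -/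
open CategoryTheory IsLocalRing

open scoped TensorProduct

section Helpers

/-- Rank of the localization of `N` at a prime `p`. -/
noncomputable def locRank {R : Type} [CommRing R] (p : Ideal R) [p.IsPrime]
    (N : Type) [AddCommGroup N] [Module R N] : ℕ :=
  Module.finrank (Localization p.primeCompl) (LocalizedModule p.primeCompl N)

theorem finrank_add_of_isField {K : Type*} [CommRing K] (hK : IsField K)
    {A B C : Type*} [AddCommGroup A] [AddCommGroup B] [AddCommGroup C]
    [Module K A] [Module K B] [Module K C] [Module.Finite K B]
    (f : A →ₗ[K] B) (g : B →ₗ[K] C) (hf : Function.Injective f) (hg : Function.Surjective g)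
    (h : Function.Exact f g) :
    Module.finrank K B = Module.finrank K A + Module.finrank K C := by
  letI := hK.toField
  have h1 := g.finrank_range_add_finrank_ker
  rw [h.linearMap_ker_eq, LinearMap.finrank_range_of_inj hf, LinearMap.range_eq_top.2 hg,
    finrank_top] at h1
  omega

variable {R : Type} [CommRing R]

theorem locRank_add (p : Ideal R) [p.IsPrime] (hK : IsField (Localization p.primeCompl))
    {A B C : Type} [AddCommGroup A] [AddCommGroup B] [AddCommGroup C]
    [Module R A] [Module R B] [Module R C] [Module.Finite R B]
    (f : A →ₗ[R] B) (g : B →ₗ[R] C) (hf : Function.Injective f) (hg : Function.Surjective g)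
    (h : Function.Exact f g) :
    locRank p B = locRank p A + locRank p C := by
  have h1 := IsLocalizedModule.map_injective p.primeCompl
    (LocalizedModule.mkLinearMap p.primeCompl A) (LocalizedModule.mkLinearMap p.primeCompl B) f hf
  have h2 := IsLocalizedModule.map_surjective p.primeCompl
    (LocalizedModule.mkLinearMap p.primeCompl B) (LocalizedModule.mkLinearMap p.primeCompl C) g hg
  have h3 := LocalizedModule.map_exact p.primeCompl f g h
  exact finrank_add_of_isField hK
    (LinearMap.extendScalarsOfIsLocalization p.primeCompl (Localization p.primeCompl)
      (IsLocalizedModule.map p.primeCompl (LocalizedModule.mkLinearMap p.primeCompl A)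
        (LocalizedModule.mkLinearMap p.primeCompl B) f))
    (LinearMap.extendScalarsOfIsLocalization p.primeCompl (Localization p.primeCompl)
      (IsLocalizedModule.map p.primeCompl (LocalizedModule.mkLinearMap p.primeCompl B)
        (LocalizedModule.mkLinearMap p.primeCompl C) g))
    h1 h2 h3

theorem locRank_zero (p : Ideal R) [p.IsPrime]
    {A : Type} [AddCommGroup A] [Module R A] (h : ∀ a : A, ∃ r ∉ p, r • a = 0) :
    locRank p A = 0 := by
  have : Subsingleton (LocalizedModule p.primeCompl A) :=
    LocalizedModule.subsingleton_iff.2 h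
  exact Module.finrank_zero_of_subsingleton

theorem locRank_congr (p : Ideal R) [p.IsPrime] (hK : IsField (Localization p.primeCompl))
    {A B : Type} [AddCommGroup A] [AddCommGroup B]
    [Module R A] [Module R B] [Module.Finite R B] (e : A ≃ₗ[R] B) : locRank p A = locRank p B := by
  have h := locRank_add p hK e.toLinearMap (0 : B →ₗ[R] PUnit.{1}) e.injective
    (Function.surjective_to_subsingleton _) ((e.exact_zero_iff_surjective _).2 e.surjective)
  rw [h, locRank_zero p (A := PUnit.{1})
    (fun a => ⟨1, (Ideal.ne_top_iff_one p).1 (Ideal.IsPrime.ne_top ‹_›), rfl⟩), add_zero]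

theorem locRank_self (p : Ideal R) [p.IsPrime] : locRank p R = 1 := by
  have e := LinearEquiv.extendScalarsOfIsLocalization p.primeCompl (Localization p.primeCompl)
    (IsLocalizedModule.iso p.primeCompl (Algebra.linearMap R (Localization p.primeCompl)))
  exact e.finrank_eq.trans (Module.finrank_self _)

theorem locRank_quot_self (p : Ideal R) [p.IsPrime] [IsNoetherianRing R]
    (hK : IsField (Localization p.primeCompl)) :
    locRank p (R ⧸ p) = 1 := by
  have h := locRank_add p hK p.subtype p.mkQ p.injective_subtype p.mkQ_surjective
    (LinearMap.exact_subtype_mkQ p)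
  rw [locRank_self, locRank_zero p (A := p)] at h
  · omega
  · rintro ⟨a, ha⟩
    have h0 : algebraMap R (Localization p.primeCompl) a = 0 := by
      by_contra h0
      obtain ⟨b, hb⟩ := hK.mul_inv_cancel h0
      have := (IsLocalization.AtPrime.isUnit_to_map_iff (Localization p.primeCompl) p a).1
        (IsUnit.of_mul_eq_one _ hb)
      exact this ha
    obtain ⟨c, hc⟩ := (IsLocalization.map_eq_zero_iff p.primeCompl _ _).1 h0
    exact ⟨c, c.2, Subtype.ext hc⟩

theorem locRank_quot_of_not_le (p q : Ideal R) [p.IsPrime] (h : ¬ q ≤ p) :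
    locRank p (R ⧸ q) = 0 := by
  obtain ⟨x, hx, hxp⟩ := SetLike.not_le_iff_exists.1 h
  refine locRank_zero p fun a => ⟨x, hxp, ?_⟩
  obtain ⟨a, rfl⟩ := Ideal.Quotient.mk_surjective a
  exact Ideal.Quotient.eq_zero_iff_mem.2 (Ideal.mul_mem_right _ _ hx)

theorem gclass_add {A B C : Type} [AddCommGroup A] [AddCommGroup B] [AddCommGroup C]
    [Module R A] [Module R B] [Module R C]
    [Module.Finite R A] [Module.Finite R B] [Module.Finite R C]
    (f : A →ₗ[R] B) (g : B →ₗ[R] C) (hf : Function.Injective f) (hg : Function.Surjective g)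
    (h : Function.Exact f g) :
    gclass R B = gclass R A + gclass R C := by
  have : gclass R B - gclass R A - gclass R C = 0 := by
    refine (QuotientAddGroup.eq_zero_iff (N := grothRels R)
      (FreeAbelianGroup.of (⟨ModuleCat.of R B, ‹_›⟩ : FGMod R) -
        FreeAbelianGroup.of (⟨ModuleCat.of R A, ‹_›⟩ : FGMod R) -
        FreeAbelianGroup.of (⟨ModuleCat.of R C, ‹_›⟩ : FGMod R))).2 ?_
    exact AddSubgroup.subset_closure ⟨_, _, _, f, g, hf, hg, h, rfl⟩
  rw [sub_sub, sub_eq_zero] at this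
  exact this

/-- The quotient map to the reduced Grothendieck group. -/
noncomputable def gbarMk (R : Type) [CommRing R] : GGroup R →+ GBar R :=
  QuotientAddGroup.mk' (AddSubgroup.zmultiples (gclass R R))

theorem gbarQ_def (M : Type) [AddCommGroup M] [Module R M] [Module.Finite R M] :
    gbarQClass R M = (1 : ℚ) ⊗ₜ[ℤ] gbarMk R (gclass R M) := rfl

theorem gbarQ_add {A B C : Type} [AddCommGroup A] [AddCommGroup B] [AddCommGroup C]
    [Module R A] [Module R B] [Module R C]
    [Module.Finite R A] [Module.Finite R B] [Module.Finite R C]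
    (f : A →ₗ[R] B) (g : B →ₗ[R] C) (hf : Function.Injective f) (hg : Function.Surjective g)
    (h : Function.Exact f g) :
    gbarQClass R B = gbarQClass R A + gbarQClass R C := by
  rw [gbarQ_def, gbarQ_def, gbarQ_def, gclass_add f g hf hg h, map_add, TensorProduct.tmul_add]

theorem gbarQ_self : gbarQClass R R = 0 := by
  rw [gbarQ_def]
  have : gbarMk R (gclass R R) = 0 :=
    (QuotientAddGroup.eq_zero_iff _).2 (AddSubgroup.mem_zmultiples _)
  rw [this, TensorProduct.tmul_zero]

theorem gbarQ_subsingleton {A : Type} [AddCommGroup A] [Module R A] [Module.Finite R A]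
    [Subsingleton A] : gbarQClass R A = 0 := by
  have := gbarQ_add (R := R) (0 : A →ₗ[R] A) (0 : A →ₗ[R] A) (Function.injective_of_subsingleton _)
    (Function.surjective_to_subsingleton _)
    (fun x => ⟨fun _ => ⟨0, Subsingleton.elim _ _⟩, fun _ => Subsingleton.elim _ _⟩)
  simpa using this

theorem gbarQ_congr {A B : Type} [AddCommGroup A] [AddCommGroup B]
    [Module R A] [Module R B] [Module.Finite R A] [Module.Finite R B] (e : A ≃ₗ[R] B) :
    gbarQClass R A = gbarQClass R B := by
  have h := gbarQ_add e.toLinearMap (0 : B →ₗ[R] PUnit.{1}) e.injective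
    (Function.surjective_to_subsingleton _) ((e.exact_zero_iff_surjective _).2 e.surjective)
  rw [h, gbarQ_subsingleton (A := PUnit.{1}), add_zero]

/-- The localized rank as a homomorphism on the Grothendieck group. -/
noncomputable def rankHom (p : Ideal R) [p.IsPrime] (hK : IsField (Localization p.primeCompl)) :
    GGroup R →+ ℤ :=
  QuotientAddGroup.lift (grothRels R)
    (FreeAbelianGroup.lift fun A : FGMod R => (locRank p A.1 : ℤ)) (by
      unfold grothRels
      rw [AddSubgroup.closure_le]
      rintro x ⟨A, B, C, f, g, hf, hg, h, rfl⟩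
      have := B.2
      have := locRank_add p hK f g hf hg h
      simp only [SetLike.mem_coe, AddMonoidHom.mem_ker, map_sub, FreeAbelianGroup.lift_apply_of]
      omega)

theorem rankHom_gclass (p : Ideal R) [p.IsPrime] (hK : IsField (Localization p.primeCompl))
    (M : Type) [AddCommGroup M] [Module R M] [Module.Finite R M] :
    rankHom p hK (gclass R M) = locRank p M :=
  FreeAbelianGroup.lift_apply_of _ _

theorem locRank_eq_of_gbarQ (p q : Ideal R) [p.IsPrime] [q.IsPrime]
    (hp : IsField (Localization p.primeCompl)) (hq : IsField (Localization q.primeCompl))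
    (M : Type) [AddCommGroup M] [Module R M] [Module.Finite R M] (h : gbarQClass R M = 0) :
    locRank p M = locRank q M := by
  let φ : GGroup R →+ ℤ := rankHom p hp - rankHom q hq
  have hφ : ∀ (N : Type) [AddCommGroup N] [Module R N] [Module.Finite R N],
      φ (gclass R N) = (locRank p N : ℤ) - locRank q N := fun N _ _ _ => by
    simp [φ, rankHom_gclass]
  let ψ : GBar R →+ ℤ := QuotientAddGroup.lift (AddSubgroup.zmultiples (gclass R R)) φ (by
    rw [AddSubgroup.zmultiples_le, AddMonoidHom.mem_ker, hφ, locRank_self, locRank_self]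
    simp)
  have hψ : ψ (gbarMk R (gclass R M)) = (locRank p M : ℤ) - locRank q M := hφ M
  have h2 := congrArg (TensorProduct.rid ℤ ℚ ∘ (LinearMap.lTensor ℚ ψ.toIntLinearMap)) h
  rw [gbarQ_def] at h2
  simp only [Function.comp_apply, LinearMap.lTensor_tmul, TensorProduct.rid_tmul, map_zero,
    AddMonoidHom.coe_toIntLinearMap, hψ] at h2
  have h3 : ((locRank p M : ℤ) - locRank q M : ℤ) = 0 := by
    have h4 : (locRank p M : ℚ) - locRank q M = 0 := by simpa using h2
    exact_mod_cast h4
  omega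

theorem key [IsNoetherianRing R] (P : Finset (Ideal R)) (m : Ideal R)
    (hP : ∀ p ∈ P, p.IsPrime)
    (hF : ∀ p (hp : p ∈ P), haveI := hP p hp; IsField (Localization p.primeCompl))
    (hmP : ∀ p ∈ P, ¬ m ≤ p) (hinc : ∀ p ∈ P, ∀ q ∈ P, q ≤ p → q = p)
    (hall : ∀ q : Ideal R, q.IsPrime → q ∈ P ∨ q = m)
    (N : Type) [AddCommGroup N] [Module R N] [Module.Finite R N] :
    ∃ n : ℕ, gbarQClass R N = ∑ p : P, (haveI := hP p p.2; locRank p.1 N) • gbarQClass R (R ⧸ p.1)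
      + n • gbarQClass R (R ⧸ m) ∧
      (Nontrivial N → (∀ p : P, (haveI := hP p p.2; locRank p.1 N) = 0) → n ≠ 0) := by
  classical
  have hP' : ∀ p : P, p.1.IsPrime := fun p => hP p p.2
  refine IsNoetherianRing.induction_on_isQuotientEquivQuotientPrime R (M := N) ‹_›
    (motive := fun N _ _ _ => ∃ n : ℕ, gbarQClass R N =
      ∑ p : P, locRank p.1 N • gbarQClass R (R ⧸ p.1) + n • gbarQClass R (R ⧸ m) ∧
      (Nontrivial N → (∀ p : P, locRank p.1 N = 0) → n ≠ 0)) ?_ ?_ ?_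
  · intro N _ _ _ _
    refine ⟨0, ?_, fun h => (not_nontrivial N h).elim⟩
    have : ∀ p : P, locRank p.1 N = 0 := fun p => locRank_zero _ fun a =>
      ⟨1, (Ideal.ne_top_iff_one _).1 (hP' p).ne_top, Subsingleton.elim _ _⟩
    simp [this, gbarQ_subsingleton]
  · intro N _ _ _ q e
    have hr : ∀ p : P, locRank p.1 N = locRank p.1 (R ⧸ q.1) := fun p =>
      locRank_congr p.1 (hF p p.2) e
    simp only [hr]
    rw [gbarQ_congr e]
    by_cases hq : q.1 ∈ P
    · refine ⟨0, ?_, fun _ h => ?_⟩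
      · rw [Finset.sum_eq_single (⟨q.1, hq⟩ : P)]
        · rw [locRank_quot_self _ (hF _ hq)]; simp
        · intro p _ hne
          rw [locRank_quot_of_not_le, zero_smul]
          exact fun hle => hne (Subtype.ext (hinc _ p.2 _ hq hle).symm)
        · simp
      · have := h ⟨q.1, hq⟩
        rw [locRank_quot_self _ (hF _ hq)] at this
        omega
    · have hqm : q.1 = m := (hall q.1 q.2).resolve_left hq
      refine ⟨1, ?_, fun _ _ => one_ne_zero⟩
      rw [hqm, Finset.sum_eq_zero]
      · simp
      · intro p _
        rw [locRank_quot_of_not_le _ _ (hmP p p.2), zero_smul]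
  · intro A _ _ _ B _ _ _ C _ _ _ f g hf hg hfg ⟨a, ha, ha'⟩ ⟨c, hc, hc'⟩
    have hr : ∀ p : P, locRank p.1 B = locRank p.1 A + locRank p.1 C := fun p =>
      locRank_add p.1 (hF p p.2) f g hf hg hfg
    refine ⟨a + c, ?_, fun hB h => ?_⟩
    · rw [gbarQ_add f g hf hg hfg, ha, hc]
      simp only [hr, add_smul, Finset.sum_add_distrib]
      abel
    · have hA0 : ∀ p : P, locRank p.1 A = 0 := fun p => by have := h p; have := hr p; omega
      have hC0 : ∀ p : P, locRank p.1 C = 0 := fun p => by have := h p; have := hr p; omega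
      by_cases hA : Nontrivial A
      · have := ha' hA hA0; omega
      · have : Nontrivial C := by
          by_contra hC
          rw [not_nontrivial_iff_subsingleton] at hA hC
          refine not_subsingleton B ⟨fun x y => ?_⟩
          have : ∀ z : B, z = 0 := fun z => by
            obtain ⟨w, rfl⟩ := (hfg z).1 (Subsingleton.elim _ _)
            rw [Subsingleton.elim w 0, map_zero]
          rw [this x, this y]
        have := hc' this hC0; omega

end Helpers

/-- over a one-dimensional reduced Cohen-Macaulay local ring, a finitely
generated module has a rank iff its class in the reduced rationalized Grothendieck
group vanishes. -/
theorem stmt_12 (R : Type) [CommRing R] [IsNoetherianRing R] [IsLocalRing R]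
    [IsReduced R] (hdim : ringKrullDim R = 1)
    -- Cohen-Macaulayness: the maximal ideal contains a non zero-divisor
    (hCM : ∃ x ∈ maximalIdeal R, x ∈ nonZeroDivisors R)
    (M : Type) [AddCommGroup M] [Module R M] [Module.Finite R M] :
    (∃ r : ℕ, ∀ (p : Ideal R) (hp : p ∈ associatedPrimes R R),
      haveI : p.IsPrime := hp.1
      Nonempty ((LocalizedModule p.primeCompl M) ≃ₗ[Localization p.primeCompl]
        (Fin r → Localization p.primeCompl))) ↔
    gbarQClass R M = 0 := by
  have h1 : ∀ q : Ideal R, q.IsPrime → q ∈ minimalPrimes R ∨ q.IsMaximal :=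
    Ring.krullDimLE_one_iff.1 (Ring.krullDimLE_iff.2 hdim.le)
  obtain ⟨x, hxm, hx⟩ := hCM
  have hxA : ∀ p ∈ associatedPrimes R R, x ∉ p := by
    intro p hp hxp
    have : x ∈ ⋃ p ∈ associatedPrimes R R, (p : Set R) := Set.mem_biUnion hp hxp
    rw [biUnion_associatedPrimes_eq_compl_nonZeroDivisors] at this
    exact this hx
  have hmA : ∀ p ∈ associatedPrimes R R, ¬ maximalIdeal R ≤ p := fun p hp h => hxA p hp (h hxm)
  have hmin : ∀ p ∈ associatedPrimes R R, p ∈ minimalPrimes R := fun p hp =>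
    (h1 p hp.1).resolve_right fun h => hmA p hp (eq_maximalIdeal h).ge
  have hAss : ∀ p ∈ minimalPrimes R, p ∈ associatedPrimes R R := by
    intro p hp
    apply Module.associatedPrimes.minimalPrimes_annihilator_subset_associatedPrimes R R
    have h0 : Module.annihilator R R = ⊥ := Module.annihilator_eq_bot.2 inferInstance
    rw [h0]
    exact hp
  have hF : ∀ p (hp : p ∈ associatedPrimes R R),
      haveI : p.IsPrime := hp.1
      IsField (Localization p.primeCompl) := by
    intro p hp
    haveI : p.IsPrime := hp.1
    haveI := Ring.KrullDimLE.of_isLocalization p (hmin p hp) (Localization p.primeCompl)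
    haveI : IsLocalRing (Localization p.primeCompl) :=
      inferInstanceAs (IsLocalRing (Localization.AtPrime p))
    exact Ring.KrullDimLE.isField_of_isReduced
  constructor
  · rintro ⟨r, hr⟩
    have hfin := associatedPrimes.finite R R
    let P := hfin.toFinset
    have hPm : ∀ p, p ∈ P ↔ p ∈ associatedPrimes R R := fun p => hfin.mem_toFinset
    have K := key P (maximalIdeal R) (fun p hp => ((hPm p).1 hp).1)
      (fun p hp => hF p ((hPm p).1 hp)) (fun p hp => hmA p ((hPm p).1 hp))
      (fun p hp q hq hle => le_antisymm hle
        ((hmin p ((hPm p).1 hp)).2 ⟨((hPm q).1 hq).1, bot_le⟩ hle))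
      (fun q hq => (h1 q hq).imp (fun h => (hPm q).2 (hAss q h)) eq_maximalIdeal)
    have hP' : ∀ p : P, p.1.IsPrime := fun p => ((hPm p).1 p.2).1
    -- the residue field has trivial class
    have hk : gbarQClass R (R ⧸ maximalIdeal R) = 0 := by
      let f : R →ₗ[R] R := LinearMap.mulLeft R x
      have hf : Function.Injective f := fun a b hab =>
        (mul_cancel_left_mem_nonZeroDivisors hx).1 hab
      let I : Ideal R := LinearMap.range f
      have hI : Function.Exact f I.mkQ := LinearMap.exact_iff.2 (Submodule.ker_mkQ I)
      obtain ⟨n, hn, hn'⟩ := K (R ⧸ I)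
      have hrk : ∀ p : P, locRank p.1 (R ⧸ I) = 0 := fun p => by
        have := locRank_add p.1 (hF p ((hPm p).1 p.2)) f I.mkQ hf I.mkQ_surjective hI
        omega
      have hc := gbarQ_add f I.mkQ hf I.mkQ_surjective hI
      rw [gbarQ_self, zero_add] at hc
      have hIm : I ≤ maximalIdeal R := by
        rintro _ ⟨a, rfl⟩
        exact Ideal.mul_mem_right _ _ hxm
      have hnt : Nontrivial (R ⧸ I) := Ideal.Quotient.nontrivial_iff.2 fun h =>
        (maximalIdeal.isMaximal R).ne_top (top_le_iff.1 (h ▸ hIm))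
      have hn0 := hn' hnt hrk
      simp only [hrk, zero_smul, Finset.sum_const_zero, zero_add] at hn
      rw [← hc] at hn
      have h2 : (n : ℚ) • gbarQClass R (R ⧸ maximalIdeal R) = 0 := by
        rw [Nat.cast_smul_eq_nsmul]; exact hn.symm
      exact (smul_eq_zero.1 h2).resolve_left (by exact_mod_cast hn0)
    obtain ⟨n, hn, -⟩ := K R
    obtain ⟨n', hn', -⟩ := K M
    have hM : ∀ p : P, locRank p.1 M = r := fun p => by
      obtain ⟨e⟩ := hr p ((hPm p).1 p.2)
      have : Nontrivial (Localization p.1.primeCompl) := (hF p ((hPm p).1 p.2)).nontrivial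
      exact e.finrank_eq.trans (Module.finrank_fin_fun _)
    simp only [hk, smul_zero, add_zero, locRank_self, one_smul, gbarQ_self] at hn
    simp only [hk, smul_zero, add_zero, hM] at hn'
    rw [hn', ← Finset.smul_sum, ← hn, smul_zero]
  · intro h
    obtain ⟨q, hq⟩ := associatedPrimes.nonempty R R
    haveI : q.IsPrime := hq.1
    refine ⟨locRank q M, fun p hp => ?_⟩
    haveI : p.IsPrime := hp.1
    rw [← locRank_eq_of_gbarQ p q (hF p hp) (hF q hq) M h]
    letI := (hF p hp).toField
    exact ⟨LinearEquiv.ofFinrankEq _ _ (by rw [Module.finrank_fin_fun]; rfl)⟩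
end
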